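/- Let E ⊆ X be a set of finite perimeter. Then the set N of points x ∈ X for which there exist θ ∈ (0,1) and a sequence r_i → 0 with inf{ V(χ_E + φ, B(x,r_i)) : φ ∈ BV_c(B(x,r_i)) } < θ·P(E, B(x,r_i)) for all i, satisfies P(E,N) = 0. Equivalently, for P(E,·)-a.e. x ∈ X, liminf_{r→0} [ inf_{φ ∈ BV_c(B(x,r))} V(χ_E + φ, B(x,r)) ] / P(E,B(x,r)) ≥ 1. -/

import Mathlib

open MeasureTheory Metric Filter Set Topology
open scoped NNReal ENNReal

noncomputable section

universe u

/-- The measure `μ` is doubling with constant `Cd`: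
`0 < μ(B(x,2r)) ≤ Cd·μ(B(x,r)) < ∞` for every `x` and every `r > 0`. -/
def IsDoublingWith {X : Type u} [PseudoMetricSpace X] [MeasurableSpace X]
    (μ : Measure X) (Cd : ℝ≥0) : Prop :=
  ∀ (x : X) (r : ℝ), 0 < r →
    0 < μ (ball x (2 * r)) ∧
      μ (ball x (2 * r)) ≤ (Cd : ℝ≥0∞) * μ (ball x r) ∧
      (Cd : ℝ≥0∞) * μ (ball x r) < ⊤

/-- `X` is a geodesic space: any two points are joined by a unit-speed geodesic. -/
def IsGeodesic (X : Type u) [PseudoMetricSpace X] : Prop :=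
  ∀ x y : X, ∃ γ : ℝ → X,
    LipschitzOnWith 1 γ (Icc 0 (dist x y)) ∧ γ 0 = x ∧ γ (dist x y) = y

/-- `g` is an upper gradient of `u`: for every `L ≥ 0` and every `1`-Lipschitz curve
`γ : [0,L] → X`, `|u(γ 0) − u(γ L)| ≤ ∫₀^L g(γ t) dt`. -/
def IsUpperGradientOf {X : Type u} [PseudoMetricSpace X] (g u : X → ℝ) : Prop :=
  ∀ L : ℝ, 0 ≤ L → ∀ γ : ℝ → X, LipschitzOnWith 1 γ (Icc 0 L) →
    |u (γ 0) - u (γ L)| ≤ ∫ t in (0:ℝ)..L, g (γ t)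

/-- The lower pointwise Lipschitz constant
`lip u (x) = liminf_{r→0} r⁻¹ sup_{y ∈ B(x,r)} |u y − u x|`. -/
def lipConst {X : Type u} [PseudoMetricSpace X] (u : X → ℝ) (x : X) : ℝ≥0∞ :=
  Filter.liminf
    (fun r : ℝ => ⨆ y ∈ ball x r, ENNReal.ofReal (|u y - u x| / r)) (𝓝[>] (0:ℝ))

/-- `u` is locally Lipschitz on `W`: Lipschitz on every closed bounded subset of `W`. -/
def LocallyLipschitzOnSet {X : Type u} [PseudoMetricSpace X] (u : X → ℝ) (W : Set X) : Prop :=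
  ∀ K : Set X, IsClosed K → Bornology.IsBounded K → K ⊆ W →
    ∃ L : ℝ≥0, LipschitzOnWith L u K

/-- `u i → f` in `L¹_loc(W)`. -/
def TendstoL1loc {X : Type u} [PseudoMetricSpace X] [MeasurableSpace X]
    (μ : Measure X) (u : ℕ → X → ℝ) (f : X → ℝ) (W : Set X) : Prop :=
  ∀ K : Set X, IsClosed K → Bornology.IsBounded K → K ⊆ W →
    Tendsto (fun i => ∫⁻ x in K, ENNReal.ofReal |u i x - f x| ∂μ) atTop (𝓝 0)

/-- Total variation `V(f,W)` of `f` on an open set `W`: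
the infimum over sequences of locally Lipschitz functions converging to `f` in `L¹_loc(W)`
of the liminf of `∫_W lip u_i dμ`. -/
def totVarOn {X : Type u} [PseudoMetricSpace X] [MeasurableSpace X]
    (μ : Measure X) (f : X → ℝ) (W : Set X) : ℝ≥0∞ :=
  ⨅ (us : ℕ → X → ℝ) (_ : ∀ i, LocallyLipschitzOnSet (us i) W)
    (_ : TendstoL1loc μ us f W),
    Filter.liminf (fun i => ∫⁻ x in W, lipConst (us i) x ∂μ) atTop

/-- Total variation `V(f,A)` of `f` on an arbitrary set `A`:
infimum of `V(f,W)` over open `W ⊇ A`. -/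
def totVarSet {X : Type u} [PseudoMetricSpace X] [MeasurableSpace X]
    (μ : Measure X) (f : X → ℝ) (A : Set X) : ℝ≥0∞ :=
  ⨅ (W : Set X) (_ : IsOpen W) (_ : A ⊆ W), totVarOn μ f W

/-- `f` is of bounded variation: locally integrable and `V(f,X) < ∞`. -/
def IsBV {X : Type u} [MetricSpace X] [MeasurableSpace X]
    (μ : Measure X) (f : X → ℝ) : Prop :=
  LocallyIntegrable f μ ∧ totVarOn μ f Set.univ < ⊤

/-- `(X,d,μ)` supports a `1`-Poincaré inequality with constant `CP`. -/
def SupportsPoincare {X : Type u} [MetricSpace X] [MeasurableSpace X]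
    (μ : Measure X) (CP : ℝ) : Prop :=
  ∀ u : X → ℝ, LocallyLipschitzOnSet u Set.univ →
    ∀ g : X → ℝ, (∀ x, 0 ≤ g x) → Measurable g → IsUpperGradientOf g u →
      ∀ (x : X) (r : ℝ), 0 < r →
        (⨍ y in ball x r, |u y - (⨍ z in ball x r, u z ∂μ)| ∂μ) ≤
          CP * r * (⨍ y in ball x r, g y ∂μ)

/-- Standing assumptions: a complete geodesic metric measure space with at least two
points, whose measure is doubling and supports a 1-Poincaré inequality. -/
def GoodSpace (X : Type u) [MetricSpace X] [MeasurableSpace X]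
    (μ : Measure X) (Cd : ℝ≥0) (CP : ℝ) : Prop :=
  Nontrivial X ∧ CompleteSpace X ∧ IsGeodesic X ∧
    IsDoublingWith μ Cd ∧ SupportsPoincare μ CP

/-- The codimension-1 Hausdorff measure
`𝓗(A) = sup_{δ>0} inf { Σ μ(B_i)/r_i : 0 < r_i ≤ δ, A ⊆ ⋃ B_i }`,
the infimum over countable coverings of `A` by balls (balls of nonpositive radius
are empty and contribute `0`). -/
def codimOneH {X : Type u} [PseudoMetricSpace X] [MeasurableSpace X]
    (μ : Measure X) (A : Set X) : ℝ≥0∞ :=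
  ⨆ (δ : ℝ) (_ : 0 < δ),
    ⨅ (c : ℕ → X) (r : ℕ → ℝ) (_ : ∀ i, r i ≤ δ)
      (_ : A ⊆ ⋃ i, ball (c i) (r i)),
      ∑' i, if 0 < r i then μ (ball (c i) (r i)) / ENNReal.ofReal (r i) else 0

/-- The measure theoretic boundary `∂*E`. -/
def measBdry {X : Type u} [PseudoMetricSpace X] [MeasurableSpace X]
    (μ : Measure X) (E : Set X) : Set X :=
  {x : X |
    0 < Filter.limsup (fun r : ℝ => μ (E ∩ ball x r) / μ (ball x r)) (𝓝[>] (0:ℝ)) ∧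
    0 < Filter.limsup (fun r : ℝ => μ (Eᶜ ∩ ball x r) / μ (ball x r)) (𝓝[>] (0:ℝ))}

/-- `A` has density `0` at `x`. -/
def DensityZeroAt {X : Type u} [PseudoMetricSpace X] [MeasurableSpace X]
    (μ : Measure X) (A : Set X) (x : X) : Prop :=
  Tendsto (fun r : ℝ => μ (A ∩ ball x r) / μ (ball x r)) (𝓝[>] (0:ℝ)) (𝓝 0)

/-- `A` has density `1` at `x`. -/
def DensityOneAt {X : Type u} [PseudoMetricSpace X] [MeasurableSpace X]
    (μ : Measure X) (A : Set X) (x : X) : Prop :=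
  Tendsto (fun r : ℝ => μ (A ∩ ball x r) / μ (ball x r)) (𝓝[>] (0:ℝ)) (𝓝 1)

/-- `x` is a Lebesgue point of `u`. -/
def LebesguePointOf {X : Type u} [MetricSpace X] [MeasurableSpace X]
    (μ : Measure X) (u : X → ℝ) (x : X) : Prop :=
  Tendsto (fun r : ℝ => ⨍ y in ball x r, |u y - u x| ∂μ) (𝓝[>] (0:ℝ)) (𝓝 0)

/-- `u` is a Borel representative whose value at each Lebesgue point equals the limit
of its ball averages. -/
def PreciseRep {X : Type u} [MetricSpace X] [MeasurableSpace X]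
    (μ : Measure X) (u : X → ℝ) : Prop :=
  Measurable u ∧ ∀ (x : X) (c : ℝ),
    Tendsto (fun r : ℝ => ⨍ y in ball x r, u y ∂μ) (𝓝[>] (0:ℝ)) (𝓝 c) → u x = c

/-- The restricted maximal function `M_R ν (x) = sup_{0<r≤R} ν(B(x,r))/μ(B(x,r))`. -/
def restrMaximal {X : Type u} [PseudoMetricSpace X] [MeasurableSpace X]
    (μ ν : Measure X) (R : ℝ) (x : X) : ℝ≥0∞ :=
  ⨆ (r : ℝ) (_ : 0 < r) (_ : r ≤ R), ν (ball x r) / μ (ball x r)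

/-- `F_g(x,y)`: the infimum of `∫_γ g ds` over 1-Lipschitz curves `γ : [0,L] → Z`
joining `x` to `y` (the infimum over the empty set is `∞`). -/
def curveInf {Z : Type u} [PseudoMetricSpace Z] (g : Z → ℝ) (x y : Z) : ℝ≥0∞ :=
  ⨅ (L : ℝ) (_ : 0 ≤ L) (γ : ℝ → Z) (_ : LipschitzOnWith 1 γ (Icc 0 L))
    (_ : γ 0 = x) (_ : γ L = y),
    ∫⁻ t in Icc (0:ℝ) L, ENNReal.ofReal (g (γ t))

/-- Weak-star convergence of measures: test against continuous, compactly
supported functions. -/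
def WeakStar {Z : Type u} [MetricSpace Z] [MeasurableSpace Z]
    (ν : ℕ → Measure Z) (m : Measure Z) : Prop :=
  ∀ φ : Z → ℝ, Continuous φ → HasCompactSupport φ →
    Tendsto (fun n => ∫ x, φ x ∂(ν n)) atTop (𝓝 (∫ x, φ x ∂m))

/-- `φ ∈ BV_c(U)`: a BV function whose support is compact and contained in `U`. -/
def MemBVc {X : Type u} [MetricSpace X] [MeasurableSpace X]
    (μ : Measure X) (φ : X → ℝ) (U : Set X) : Prop :=
  IsBV μ φ ∧ IsCompact (tsupport φ) ∧ tsupport φ ⊆ U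

section LipAt

variable {X : Type u} [PseudoMetricSpace X]

/-- `u` is Lipschitz in a neighbourhood of `x`. -/
def LipAt (u : X → ℝ) (x : X) : Prop :=
  ∃ L : ℝ, 0 ≤ L ∧ ∃ r : ℝ, 0 < r ∧
    ∀ y ∈ ball x r, ∀ z ∈ ball x r, |u y - u z| ≤ L * dist y z

lemma LipAt.of_le {f g h : X → ℝ} {x : X} (hf : LipAt f x) (hg : LipAt g x)
    (H : ∀ y z, |h y - h z| ≤ |f y - f z| + |g y - g z|) : LipAt h x := by
  obtain ⟨L, hL, r, hr, h1⟩ := hf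
  obtain ⟨M, hM, s, hs, h2⟩ := hg
  refine ⟨L + M, by positivity, min r s, lt_min hr hs, fun y hy z hz => ?_⟩
  have a := h1 y (ball_subset_ball (min_le_left _ _) hy) z (ball_subset_ball (min_le_left _ _) hz)
  have b := h2 y (ball_subset_ball (min_le_right _ _) hy) z
    (ball_subset_ball (min_le_right _ _) hz)
  linarith [H y z]

lemma LipAt.congr {f g : X → ℝ} {x : X} (hf : LipAt f x) (h : f =ᶠ[𝓝 x] g) : LipAt g x := by
  obtain ⟨L, hL, r, hr, h1⟩ := hf
  obtain ⟨s, hs, h2⟩ := Metric.eventually_nhds_iff_ball.1 h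
  refine ⟨L, hL, min r s, lt_min hr hs, fun y hy z hz => ?_⟩
  rw [← h2 y (ball_subset_ball (min_le_right _ _) hy),
    ← h2 z (ball_subset_ball (min_le_right _ _) hz)]
  exact h1 y (ball_subset_ball (min_le_left _ _) hy) z (ball_subset_ball (min_le_left _ _) hz)

lemma lipAt_of_lipschitz {f : X → ℝ} {L : ℝ} (hL : 0 ≤ L)
    (h : ∀ y z, |f y - f z| ≤ L * dist y z) (x : X) : LipAt f x :=
  ⟨L, hL, 1, one_pos, fun y _ z _ => h y z⟩

lemma lipAt_const (c : ℝ) (x : X) : LipAt (fun _ => c) x :=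
  lipAt_of_lipschitz le_rfl (by simp) x

lemma LipAt.max {f g : X → ℝ} {x : X} (hf : LipAt f x) (hg : LipAt g x) :
    LipAt (fun y => max (f y) (g y)) x :=
  hf.of_le hg fun _ _ => (abs_max_sub_max_le_max _ _ _ _).trans
    (max_le_add_of_nonneg (abs_nonneg _) (abs_nonneg _))

lemma LipAt.min {f g : X → ℝ} {x : X} (hf : LipAt f x) (hg : LipAt g x) :
    LipAt (fun y => min (f y) (g y)) x :=
  hf.of_le hg fun _ _ => (abs_min_sub_min_le_max _ _ _ _).trans
    (max_le_add_of_nonneg (abs_nonneg _) (abs_nonneg _))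

lemma LipAt.add {f g : X → ℝ} {x : X} (hf : LipAt f x) (hg : LipAt g x) :
    LipAt (fun y => f y + g y) x :=
  hf.of_le hg fun y z => by
    rw [add_sub_add_comm]; exact abs_add_le _ _

lemma LipAt.sub {f g : X → ℝ} {x : X} (hf : LipAt f x) (hg : LipAt g x) :
    LipAt (fun y => f y - g y) x :=
  hf.of_le hg fun y z => by
    rw [sub_sub_sub_comm]; exact abs_sub _ _

lemma LipAt.continuousAt {f : X → ℝ} {x : X} (hf : LipAt f x) : ContinuousAt f x := by
  obtain ⟨L, hL, r, hr, h⟩ := hf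
  have h1 : LipschitzOnWith L.toNNReal f (ball x r) :=
    LipschitzOnWith.of_dist_le_mul fun y hy z hz => by
      rw [Real.coe_toNNReal _ hL]; exact h y hy z hz
  exact h1.continuousOn.continuousAt (ball_mem_nhds x hr)

lemma LocallyLipschitzOnSet.lipAt {u : X → ℝ} {W : Set X} (h : LocallyLipschitzOnSet u W)
    (hW : IsOpen W) {x : X} (hx : x ∈ W) : LipAt u x := by
  obtain ⟨r, hr, hrW⟩ := Metric.nhds_basis_closedBall.mem_iff.1 (hW.mem_nhds hx)
  obtain ⟨L, hL⟩ := h (closedBall x r) isClosed_closedBall isBounded_closedBall hrW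
  exact ⟨L, L.2, r, hr, fun y hy z hz =>
    hL.dist_le_mul y (ball_subset_closedBall hy) z (ball_subset_closedBall hz)⟩

lemma locallyLipschitzOnSet_of_lipAt [ProperSpace X] {u : X → ℝ} {W : Set X}
    (h : ∀ x ∈ W, LipAt u x) : LocallyLipschitzOnSet u W := by
  intro K hK hKb hKW
  have hc : IsCompact K := Metric.isCompact_of_isClosed_isBounded hK hKb
  refine LocallyLipschitzOn.exists_lipschitzOnWith_of_compact hc fun x hx => ?_
  obtain ⟨L, hL, r, hr, h1⟩ := h x (hKW hx)
  exact ⟨L.toNNReal, ball x r, mem_nhdsWithin_of_mem_nhds (ball_mem_nhds x hr),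
    LipschitzOnWith.of_dist_le_mul fun y hy z hz => by
      rw [Real.coe_toNNReal _ hL]; exact h1 y hy z hz⟩

lemma LocallyLipschitzOnSet.mono {u : X → ℝ} {W W' : Set X} (h : LocallyLipschitzOnSet u W)
    (hW : W' ⊆ W) : LocallyLipschitzOnSet u W' :=
  fun K h1 h2 h3 => h K h1 h2 (h3.trans hW)

end LipAt

section LipConst

variable {X : Type u} [PseudoMetricSpace X]

lemma lipConst_le_add {f g : X → ℝ} {x : X} {C : ℝ}
    (h : ∀ᶠ r in 𝓝[>] (0:ℝ), ∀ y ∈ ball x r, |f y - f x| ≤ |g y - g x| + C * r) :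
    lipConst f x ≤ lipConst g x + ENNReal.ofReal C := by
  unfold lipConst
  rw [← liminf_add_const (𝓝[>] (0:ℝ)) _ _ (by isBoundedDefault) (by isBoundedDefault)]
  refine liminf_le_liminf ?_
  filter_upwards [h, self_mem_nhdsWithin] with r hr hr0
  have hr0 : 0 < r := hr0
  refine iSup₂_le fun y hy => ?_
  have h1 : |f y - f x| / r ≤ |g y - g x| / r + C := by
    have h2 := div_le_div_of_nonneg_right (hr y hy) hr0.le
    rwa [add_div, mul_div_cancel_right₀ _ hr0.ne'] at h2
  refine (ENNReal.ofReal_le_ofReal h1).trans (ENNReal.ofReal_add_le.trans ?_)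
  gcongr
  exact le_iSup₂ (f := fun y (_ : y ∈ ball x r) => ENNReal.ofReal (|g y - g x| / r)) y hy

lemma eventually_ball {x : X} {p : X → Prop} (h : ∀ᶠ y in 𝓝 x, p y) :
    ∀ᶠ r in 𝓝[>] (0:ℝ), ∀ y ∈ ball x r, p y := by
  obtain ⟨s, hs, h2⟩ := Metric.eventually_nhds_iff_ball.1 h
  filter_upwards [Ioo_mem_nhdsGT hs] with r hr y hy
  exact h2 y (ball_subset_ball hr.2.le hy)

lemma lipConst_le_of_eventually {f g : X → ℝ} {x : X}
    (h : ∀ᶠ y in 𝓝 x, |f y - f x| ≤ |g y - g x|) : lipConst f x ≤ lipConst g x := by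
  have := lipConst_le_add (f := f) (g := g) (x := x) (C := 0)
    (by filter_upwards [eventually_ball h] with r hr y hy; simpa using hr y hy)
  simpa using this

lemma lipConst_congr {f g : X → ℝ} {x : X} (h : f =ᶠ[𝓝 x] g) : lipConst f x = lipConst g x := by
  have hx := h.self_of_nhds
  refine le_antisymm (lipConst_le_of_eventually ?_) (lipConst_le_of_eventually ?_) <;>
  · filter_upwards [h] with y hy
    rw [hx, hy]

@[simp] lemma lipConst_const (c : ℝ) (x : X) : lipConst (fun _ => c) x = 0 := by
  have : ∀ r : ℝ, (⨆ y ∈ ball x r, ENNReal.ofReal (|c - c| / r)) = 0 := by simp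
  simp only [lipConst, this]
  exact liminf_const _

lemma lipConst_le_add_mul {f g : X → ℝ} {x : X} {C : ℝ} (hC : 0 ≤ C)
    (h : ∀ᶠ y in 𝓝 x, |f y - f x| ≤ |g y - g x| + C * dist y x) :
    lipConst f x ≤ lipConst g x + ENNReal.ofReal C := by
  refine lipConst_le_add ?_
  filter_upwards [eventually_ball h] with r hr y hy
  refine (hr y hy).trans ?_
  gcongr
  exact (mem_ball.1 hy).le

lemma lipConst_le_of_lip {f : X → ℝ} {x : X} {C : ℝ} (hC : 0 ≤ C)
    (h : ∀ᶠ y in 𝓝 x, |f y - f x| ≤ C * dist y x) : lipConst f x ≤ ENNReal.ofReal C := by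
  have := lipConst_le_add_mul (f := f) (g := fun _ => 0) (x := x) hC (by simpa using h)
  simpa using this

lemma LipAt.lipConst_lt_top {f : X → ℝ} {x : X} (h : LipAt f x) : lipConst f x < ⊤ := by
  obtain ⟨L, hL, r, hr, h1⟩ := h
  refine (lipConst_le_of_lip hL ?_).trans_lt ENNReal.ofReal_lt_top
  filter_upwards [ball_mem_nhds x hr] with y hy
  exact h1 y hy x (mem_ball_self hr)

lemma lipConst_eq_rat (f : X → ℝ) (x : X) :
    lipConst f x = ⨆ n : ℕ, ⨅ q : {q : ℚ // 0 < (q:ℝ) ∧ (q:ℝ) < 1 / (n + 1)},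
      ⨆ y ∈ ball x (q : ℝ), ENNReal.ofReal (|f y - f x| / q) := by
  have hb : (𝓝[>] (0:ℝ)).HasBasis (fun _ : ℕ => True) (fun n => Ioo (0:ℝ) (1 / (n + 1))) := by
    refine (nhdsGT_basis (0:ℝ)).to_hasBasis (fun i hi => ?_) fun n _ => ⟨1 / (n+1), by positivity,
      subset_rfl⟩
    obtain ⟨n, hn⟩ := exists_nat_one_div_lt hi
    exact ⟨n, trivial, Ioo_subset_Ioo_right hn.le⟩
  unfold lipConst
  rw [hb.liminf_eq_iSup_iInf]
  simp only [iSup_pos]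
  refine iSup_congr fun n => le_antisymm ?_ ?_
  · refine le_iInf fun q => ?_
    exact iInf₂_le (f := fun (a : ℝ) (_ : a ∈ Ioo (0:ℝ) (1 / (n + 1))) =>
      ⨆ y ∈ ball x a, ENNReal.ofReal (|f y - f x| / a)) (q : ℝ) q.2
  · refine le_iInf₂ fun r hr => ?_
    refine le_of_forall_gt fun c hc => ?_
    obtain ⟨c', hc', hcc⟩ := exists_between hc
    have htop : c' ≠ ⊤ := hcc.ne_top
    set S := ⨆ y ∈ ball x r, ENNReal.ofReal (|f y - f x| / r)
    have hlim : Tendsto (fun q : ℝ => c' * ENNReal.ofReal (r / q)) (𝓝[<] r) (𝓝 c') := by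
      have : Tendsto (fun q : ℝ => r / q) (𝓝[<] r) (𝓝 (r / r)) :=
        (tendsto_const_nhds.div tendsto_id hr.1.ne').mono_left nhdsWithin_le_nhds
      rw [div_self hr.1.ne'] at this
      have h2 := (ENNReal.tendsto_ofReal this)
      have := ENNReal.Tendsto.const_mul (a := c') h2 (Or.inr htop)
      simpa using this
    have hev := (hlim.eventually_lt_const hcc).and (Ioo_mem_nhdsLT hr.1)
    obtain ⟨a, ha, har⟩ := (mem_nhdsLT_iff_exists_Ioo_subset' hr.1).1 hev
    obtain ⟨q, hq1, hq2⟩ := exists_rat_btwn (show a < r from ha)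
    have hq := har ⟨hq1, hq2⟩
    have hq0 : (0:ℝ) < q := hq.2.1
    refine lt_of_le_of_lt (iInf_le _ ⟨q, hq0, hq2.trans hr.2⟩) (lt_of_le_of_lt ?_ hq.1)
    refine iSup₂_le fun y hy => ?_
    have h1 : ENNReal.ofReal (|f y - f x| / r) ≤ c' :=
      (le_iSup₂ (f := fun y (_ : y ∈ ball x r) => ENNReal.ofReal (|f y - f x| / r)) y
        (ball_subset_ball hq2.le hy)).trans hc'.le
    calc ENNReal.ofReal (|f y - f x| / q)
        = ENNReal.ofReal (|f y - f x| / r * (r / q)) := by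
          congr 1; field_simp [hr.1.ne']
      _ = ENNReal.ofReal (|f y - f x| / r) * ENNReal.ofReal (r / q) := by
          have := hr.1; rw [ENNReal.ofReal_mul (by positivity)]
      _ ≤ _ := by gcongr

end LipConst

section Measurability

variable {X : Type u} [PseudoMetricSpace X] [MeasurableSpace X] [BorelSpace X]

lemma measurable_lipConst {f : X → ℝ} (hf : Continuous f) : Measurable (lipConst f) := by
  have : lipConst f = fun x => ⨆ n : ℕ, ⨅ q : {q : ℚ // 0 < (q:ℝ) ∧ (q:ℝ) < 1 / (n + 1)},
      ⨆ y ∈ ball x (q : ℝ), ENNReal.ofReal (|f y - f x| / q) := funext (lipConst_eq_rat f)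
  rw [this]
  refine Measurable.iSup fun n => Measurable.iInf fun q => measurable_of_Ioi fun c => ?_
  refine IsOpen.measurableSet ?_
  have : ((fun x => ⨆ y ∈ ball x (q : ℝ), ENNReal.ofReal (|f y - f x| / q)) ⁻¹' Ioi c)
      = ⋃ y, (ball y (q:ℝ) ∩ {x | c < ENNReal.ofReal (|f y - f x| / q)}) := by
    ext x
    simp only [mem_preimage, mem_Ioi, lt_iSup_iff, mem_iUnion, mem_inter_iff, mem_ofPred_eq,
      exists_prop, mem_ball, dist_comm]
  rw [this]
  refine isOpen_iUnion fun y => isOpen_ball.inter (isOpen_lt continuous_const ?_)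
  exact ENNReal.continuous_ofReal.comp (by fun_prop)

lemma aemeasurable_lipConst {μ : Measure X} {f : X → ℝ} {W : Set X} (hW : IsOpen W)
    (hf : ContinuousOn f W) : AEMeasurable (lipConst f) (μ.restrict W) := by
  set F : ℝ → X → ℝ≥0∞ := fun r x => ⨆ y ∈ ball x r ∩ W, ENNReal.ofReal (|f y - f x| / r)
  have hF : ∀ r, Measurable (W.indicator (F r)) := by
    intro r
    refine measurable_of_Ioi fun c => IsOpen.measurableSet ?_
    have : (W.indicator (F r) ⁻¹' Ioi c)
        = ⋃ y ∈ W, (ball y r ∩ (W ∩ f ⁻¹' {t | c < ENNReal.ofReal (|f y - t| / r)})) := by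
      ext x
      by_cases hx : x ∈ W
      · simp [F, hx, lt_iSup_iff, dist_comm, and_comm]
      · simp [hx]
    rw [this]
    refine isOpen_biUnion fun y _ => isOpen_ball.inter (hf.isOpen_inter_preimage hW
      (isOpen_lt continuous_const ?_))
    exact ENNReal.continuous_ofReal.comp (by fun_prop)
  refine ⟨fun x => ⨆ n : ℕ, ⨅ q : {q : ℚ // 0 < (q:ℝ) ∧ (q:ℝ) < 1 / (n + 1)},
      W.indicator (F q) x, Measurable.iSup fun n => Measurable.iInf fun q => hF q, ?_⟩
  refine (ae_restrict_iff' hW.measurableSet).2 (Eventually.of_forall fun x hx => ?_)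
  rw [lipConst_eq_rat]
  simp only [indicator_of_mem hx]
  refine le_antisymm ?_ ?_
  · refine iSup_le fun n => ?_
    obtain ⟨r, hr, hrW⟩ := Metric.isOpen_iff.1 hW x hx
    obtain ⟨m, hm⟩ := exists_nat_one_div_lt hr
    refine le_iSup_of_le (max n m) (le_iInf fun q => ?_)
    have h1 : (1:ℝ) / ((max n m : ℕ) + 1) ≤ 1 / (n + 1) := by
      gcongr; exact le_max_left _ _
    have h2 : (1:ℝ) / ((max n m : ℕ) + 1) ≤ 1 / (m + 1) := by
      gcongr; exact le_max_right _ _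
    refine iInf_le_of_le ⟨q, q.2.1, q.2.2.trans_le h1⟩ (iSup₂_le fun y hy => ?_)
    refine le_iSup₂_of_le (f := fun y (_ : y ∈ ball x (q:ℝ) ∩ W) =>
      ENNReal.ofReal (|f y - f x| / (q:ℝ))) y ⟨hy, hrW (ball_subset_ball ?_ hy)⟩ le_rfl
    exact (q.2.2.trans_le h2).le.trans hm.le
  · refine iSup_mono fun n => iInf_mono fun q => ?_
    exact iSup₂_le fun y hy => le_iSup₂_of_le (f := fun y (_ : y ∈ ball x (q:ℝ)) =>
      ENNReal.ofReal (|f y - f x| / (q:ℝ))) y hy.1 le_rfl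

end Measurability

section Contact

variable {X : Type u} [PseudoMetricSpace X] [MeasurableSpace X] [BorelSpace X]

lemma ae_lipConst_le_of_eq {μ : Measure X} [SecondCountableTopology X] [IsLocallyFiniteMeasure μ]
    [IsUnifLocDoublingMeasure μ] {f g : X → ℝ} {W : Set X} (hW : IsOpen W)
    (hf : ∀ x ∈ W, LipAt f x) (hg : ∀ x ∈ W, LipAt g x) :
    ∀ᵐ x ∂μ, x ∈ W → f x = g x → lipConst f x ≤ lipConst g x := by
  set S : Set X := {x ∈ W | f x = g x} with hS
  have hSm : MeasurableSet S := by
    have hc : ContinuousOn (fun x => f x - g x) W := fun x hx =>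
      ((hf x hx).sub (hg x hx)).continuousAt.continuousWithinAt
    have := (hc.isOpen_inter_preimage hW (isOpen_compl_singleton (x := (0:ℝ)))).measurableSet
    have h2 : S = W \ (W ∩ (fun x => f x - g x) ⁻¹' {0}ᶜ) := by
      ext x; simp only [hS, mem_ofPred_eq, Set.mem_sdiff, mem_inter_iff, mem_preimage,
        mem_compl_iff,
        mem_singleton_iff, sub_eq_zero]; tauto
    rw [h2]; exact hW.measurableSet.diff this
  have key : ∀ n : ℕ, ∀ᵐ x ∂μ, x ∈ S → ∀ᶠ r in 𝓝[>] (0:ℝ), ∀ y ∈ ball x r,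
      ∃ z ∈ S, z ∈ closedBall y ((1 / ((n:ℝ) + 1)) * r) := by
    intro n
    have h1 := IsUnifLocDoublingMeasure.ae_tendsto_measure_inter_div.{u, 0} μ S ((n:ℝ) + 1)
    rw [ae_restrict_iff' hSm] at h1
    filter_upwards [h1] with x hx hxS
    by_contra hcon
    rw [not_eventually] at hcon
    have hn : (0:ℝ) < n + 1 := by positivity
    classical
    set bad : ℝ → Prop := fun r => ∃ y ∈ ball x r, ∀ z ∈ S, z ∉ closedBall y ((1 / ((n:ℝ) + 1)) * r)
    set w : ℝ → X := fun r => if h : bad r then h.choose else x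
    have ht := hx hxS (l := 𝓝[>] (0:ℝ)) w (fun r => (1 / ((n:ℝ) + 1)) * r) ?_ ?_
    · have h3 := ht.eventually (eventually_ne_nhds (one_ne_zero))
      obtain ⟨r, hr, hr2⟩ := (hcon.and_eventually h3).exists
      have hb : bad r := by
        simp only [bad]; push Not at hr; exact hr
      apply hr2
      have hw : w r = hb.choose := dif_pos hb
      have hemp : S ∩ closedBall (w r) ((1 / ((n:ℝ) + 1)) * r) = ∅ := by
        rw [hw]
        refine eq_empty_of_forall_notMem fun z hz => hb.choose_spec.2 z hz.1 hz.2
      simp only [hemp, measure_empty, ENNReal.zero_div]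
    · refine tendsto_nhdsWithin_iff.2 ⟨?_, ?_⟩
      · have : Tendsto (fun r : ℝ => (1 / ((n:ℝ) + 1)) * r) (𝓝 0) (𝓝 ((1 / ((n:ℝ) + 1)) * 0)) :=
          tendsto_const_nhds.mul tendsto_id
        rw [mul_zero] at this
        exact this.mono_left nhdsWithin_le_nhds
      · filter_upwards [self_mem_nhdsWithin] with r hr
        have : 0 < r := hr
        exact mem_Ioi.2 (by positivity)
    · filter_upwards [self_mem_nhdsWithin] with r hr
      have hr : 0 < r := hr
      have : ((n:ℝ) + 1) * (1 / ((n:ℝ) + 1) * r) = r := by field_simp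
      rw [this]
      by_cases hb : bad r
      · simp only [w, dif_pos hb]
        have := hb.choose_spec.1
        rw [mem_ball, dist_comm] at this
        exact mem_closedBall.2 this.le
      · simp only [w, dif_neg hb]
        exact mem_closedBall_self hr.le
  filter_upwards [ae_all_iff.2 key] with x hx hxW hfg
  have hxS : x ∈ S := ⟨hxW, hfg⟩
  obtain ⟨L, hL, r, hr, h1⟩ := (hf x hxW).sub (hg x hxW)
  have hle : ∀ n : ℕ, lipConst f x ≤ lipConst g x + ENNReal.ofReal (L * (1 / ((n:ℝ) + 1))) := by
    intro n
    refine lipConst_le_add ?_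
    filter_upwards [hx n hxS, Ioo_mem_nhdsGT (half_pos hr)] with s hs hsr y hy
    obtain ⟨z, hzS, hzy⟩ := hs y hy
    have hn : (1:ℝ) / (n + 1) ≤ 1 := by
      rw [div_le_one (by positivity)]; linarith [(Nat.cast_nonneg n : (0:ℝ) ≤ n)]
    have hzy' : dist z y ≤ 1 / ((n:ℝ) + 1) * s := hzy
    have hyx : dist y x < s := hy
    have hzx : dist z x < r := by
      have := dist_triangle z y x
      have := mul_le_mul_of_nonneg_right hn hsr.1.le
      linarith [hsr.2]
    have h3 := h1 y (mem_ball.2 (by linarith [hsr.2])) z hzx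
    rw [dist_comm y z] at h3
    have h4 : f z - g z = 0 := sub_eq_zero.2 hzS.2
    simp only [h4, sub_zero] at h3
    have h5 := mul_le_mul_of_nonneg_left hzy' hL
    have : f y - f x = (g y - g x) + (f y - g y) := by rw [hfg]; ring
    rw [this]
    refine (abs_add_le _ _).trans ?_
    linarith
  have hlim : Tendsto (fun n : ℕ => lipConst g x + ENNReal.ofReal (L * (1 / ((n:ℝ) + 1)))) atTop
      (𝓝 (lipConst g x + ENNReal.ofReal (L * 0))) :=
    tendsto_const_nhds.add (ENNReal.tendsto_ofReal
      (tendsto_const_nhds.mul tendsto_one_div_add_atTop_nhds_zero_nat))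
  simp only [mul_zero, ENNReal.ofReal_zero, add_zero] at hlim
  exact ge_of_tendsto' hlim hle

lemma ae_lipConst_eq_of_eq {μ : Measure X} [SecondCountableTopology X] [IsLocallyFiniteMeasure μ]
    [IsUnifLocDoublingMeasure μ] {f g : X → ℝ} {W : Set X} (hW : IsOpen W)
    (hf : ∀ x ∈ W, LipAt f x) (hg : ∀ x ∈ W, LipAt g x) :
    ∀ᵐ x ∂μ, x ∈ W → f x = g x → lipConst f x = lipConst g x := by
  filter_upwards [ae_lipConst_le_of_eq (μ := μ) hW hf hg, ae_lipConst_le_of_eq (μ := μ) hW hg hf]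
    with x h1 h2 hx he
  exact le_antisymm (h1 hx he) (h2 hx he.symm)

end Contact

lemma add_liminf_le_liminf_add (u v : ℕ → ℝ≥0∞) :
    liminf u atTop + liminf v atTop ≤ liminf (fun i => u i + v i) atTop := by
  rw [liminf_eq_iSup_iInf_of_nat, liminf_eq_iSup_iInf_of_nat, liminf_eq_iSup_iInf_of_nat,
    ENNReal.iSup_add_iSup_of_monotone]
  · exact iSup_mono fun n => le_iInf₂ fun i hi => add_le_add (iInf₂_le i hi) (iInf₂_le i hi)
  · exact fun a b hab => le_iInf₂ fun i hi => iInf₂_le i (hab.trans hi)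
  · exact fun a b hab => le_iInf₂ fun i hi => iInf₂_le i (hab.trans hi)

lemma exists_compact_exhaustion {X : Type u} [MetricSpace X] [ProperSpace X] {W : Set X}
    (hW : IsOpen W) :
    ∃ P : ℕ → Set X, (∀ n, IsCompact (P n)) ∧ (∀ n, P n ⊆ interior (P (n + 1))) ∧
      (∀ n, P n ⊆ W) ∧ ∀ K, IsCompact K → K ⊆ W → ∃ n, K ⊆ P n := by
  have : LocallyCompactSpace W := hW.locallyCompactSpace
  let Q : CompactExhaustion W := CompactExhaustion.choice W
  refine ⟨fun n => Subtype.val '' Q n, fun n => (Q.isCompact n).image continuous_subtype_val,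
    fun n => ?_, fun n => Subtype.coe_image_subset W (Q n), fun K hK hKW => ?_⟩
  · refine (image_mono (Q.subset_interior_succ n)).trans (interior_maximal
      (image_mono interior_subset) (hW.isOpenEmbedding_subtypeVal.isOpenMap _ isOpen_interior))
  · have hc : IsCompact ((Subtype.val : W → X) ⁻¹' K) := by
      rw [Topology.IsEmbedding.subtypeVal.isCompact_iff, Subtype.image_preimage_coe,
        inter_eq_self_of_subset_right hKW]
      exact hK
    obtain ⟨n, hn⟩ := Q.exists_superset_of_isCompact hc
    refine ⟨n, fun x hx => ⟨⟨x, hKW hx⟩, hn hx, rfl⟩⟩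

lemma exhaustion_mono {X : Type u} [TopologicalSpace X] {P : ℕ → Set X}
    (hP : ∀ n, P n ⊆ interior (P (n + 1))) : Monotone P :=
  monotone_nat_of_le_succ fun n => (hP n).trans interior_subset

lemma lintegral_abs_sub_triangle {X : Type u} [MeasurableSpace X] {f g h : X → ℝ} {ν : Measure X}
    (hf : AEMeasurable f ν)
    (hg : AEMeasurable g ν) :
    ∫⁻ x, ENNReal.ofReal |f x - h x| ∂ν ≤
      ∫⁻ x, ENNReal.ofReal |f x - g x| ∂ν + ∫⁻ x, ENNReal.ofReal |g x - h x| ∂ν := by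
  rw [← lintegral_add_left' (by fun_prop)]
  refine lintegral_mono fun x => ?_
  rw [← ENNReal.ofReal_add (abs_nonneg _) (abs_nonneg _)]
  exact ENNReal.ofReal_le_ofReal (abs_sub_le _ _ _)

section TotVar

variable {X : Type u} [MetricSpace X] [MeasurableSpace X] {μ : Measure X}

lemma totVarOn_mono {f : X → ℝ} {W W' : Set X} (h : W' ⊆ W) :
    totVarOn μ f W' ≤ totVarOn μ f W := by
  refine le_iInf fun us => le_iInf₂ fun h1 h2 => ?_
  refine (iInf_le_of_le us (iInf₂_le_of_le (fun i => (h1 i).mono h)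
    (fun K a b c => h2 K a b (c.trans h)) le_rfl)).trans ?_
  exact liminf_le_liminf (Eventually.of_forall fun i => lintegral_mono_set h)

lemma totVarOn_le_liminf {f : X → ℝ} {W : Set X} {us : ℕ → X → ℝ}
    (h1 : ∀ i, LocallyLipschitzOnSet (us i) W) (h2 : TendstoL1loc μ us f W) :
    totVarOn μ f W ≤ liminf (fun i => ∫⁻ x in W, lipConst (us i) x ∂μ) atTop :=
  iInf_le_of_le us (iInf₂_le_of_le h1 h2 le_rfl)

lemma totVarOn_empty (f : X → ℝ) : totVarOn μ f ∅ = 0 := by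
  refine le_antisymm ((totVarOn_le_liminf (us := fun _ _ => 0)
    (fun i K _ _ h => ⟨0, ?_⟩) fun K _ _ h => ?_).trans ?_) bot_le
  · rw [subset_empty_iff.1 h]; exact fun x hx => hx.elim
  · rw [subset_empty_iff.1 h]; simp
  · simp

lemma exists_approx_of_totVarOn_lt {f : X → ℝ} {W K : Set X} {c ε : ℝ≥0∞}
    (h : totVarOn μ f W < c) (hK : IsClosed K) (hKb : Bornology.IsBounded K) (hKW : K ⊆ W)
    (hε : 0 < ε) : ∃ g : X → ℝ, LocallyLipschitzOnSet g W ∧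
      ∫⁻ x in K, ENNReal.ofReal |g x - f x| ∂μ < ε ∧ ∫⁻ x in W, lipConst g x ∂μ < c := by
  unfold totVarOn at h
  simp only [iInf_lt_iff] at h
  obtain ⟨us, h1, h2, h3⟩ := h
  have h4 := (h2 K hK hKb hKW).eventually_lt_const hε
  obtain ⟨i, hi, hi2⟩ := ((frequently_lt_of_liminf_lt (by isBoundedDefault) h3).and_eventually
    h4).exists
  exact ⟨us i, h1 i, hi2, hi⟩

lemma totVarOn_comp_le {f : X → ℝ} {W : Set X} {φ : ℝ → ℝ}
    (hφ : ∀ s t, |φ s - φ t| ≤ |s - t|) :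
    totVarOn μ (fun x => φ (f x)) W ≤ totVarOn μ f W := by
  refine le_iInf fun us => le_iInf₂ fun h1 h2 => ?_
  refine (totVarOn_le_liminf (us := fun i x => φ (us i x)) (fun i K a b c => ?_)
    (fun K a b c => ?_)).trans ?_
  · obtain ⟨L, hL⟩ := h1 i K a b c
    refine ⟨L, LipschitzOnWith.of_dist_le_mul fun x hx y hy => ?_⟩
    exact (hφ _ _).trans (hL.dist_le_mul x hx y hy)
  · refine tendsto_of_tendsto_of_tendsto_of_le_of_le tendsto_const_nhds (h2 K a b c)
      (fun _ => bot_le) fun i => lintegral_mono fun x => ENNReal.ofReal_le_ofReal (hφ _ _)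
  · refine liminf_le_liminf (Eventually.of_forall fun i => lintegral_mono fun x => ?_)
    exact lipConst_le_of_eventually (Eventually.of_forall fun y => hφ _ _)

lemma totVarOn_one_sub (f : X → ℝ) (W : Set X) :
    totVarOn μ (fun x => 1 - f x) W = totVarOn μ f W := by
  have h : ∀ s t : ℝ, |(1 - s) - (1 - t)| ≤ |s - t| := fun s t => by
    rw [show (1 - s) - (1 - t) = -(s - t) by ring, abs_neg]
  refine le_antisymm (totVarOn_comp_le h) ?_
  have := totVarOn_comp_le (μ := μ) (f := fun x => 1 - f x) (W := W) h
  simpa using this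

lemma totVarSet_mono {f : X → ℝ} {A B : Set X} (h : A ⊆ B) : totVarSet μ f A ≤ totVarSet μ f B :=
  le_iInf fun W => le_iInf₂ fun h1 h2 => iInf_le_of_le W (iInf₂_le h1 (h.trans h2))

/-- Truncation to `[0,1]`. -/
def clamp01 (t : ℝ) : ℝ := max 0 (min t 1)

lemma abs_clamp01_sub_le (s t : ℝ) : |clamp01 s - clamp01 t| ≤ |s - t| := by
  unfold clamp01
  refine (abs_max_sub_max_le_max _ _ _ _).trans ?_
  simp only [sub_self, abs_zero]
  refine max_le (abs_nonneg _) ((abs_min_sub_min_le_max _ _ _ _).trans ?_)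
  simp

lemma clamp01_mem (t : ℝ) : clamp01 t ∈ Icc (0:ℝ) 1 :=
  ⟨le_max_left _ _, max_le zero_le_one (min_le_right _ _)⟩

lemma clamp01_of_mem {t : ℝ} (h : t ∈ Icc (0:ℝ) 1) : clamp01 t = t := by
  unfold clamp01; rw [min_eq_left h.2, max_eq_right h.1]

lemma exists_seq_of_approx [ProperSpace X] {f : X → ℝ} {W : Set X} (hW : IsOpen W) {c : ℝ≥0∞}
    {p : (X → ℝ) → Prop}
    (h : ∀ K, IsCompact K → K ⊆ W → ∀ ε : ℝ≥0∞, 0 < ε → ∃ g : X → ℝ, p g ∧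
      ∫⁻ x in K, ENNReal.ofReal |g x - f x| ∂μ ≤ ε ∧ ∫⁻ x in W, lipConst g x ∂μ ≤ c + ε) :
    ∃ us : ℕ → X → ℝ, (∀ i, p (us i)) ∧ TendstoL1loc μ us f W ∧
      limsup (fun i => ∫⁻ x in W, lipConst (us i) x ∂μ) atTop ≤ c := by
  obtain ⟨P, hPc, hPi, hPW, hPK⟩ := exists_compact_exhaustion hW
  have hpos : ∀ n : ℕ, (0:ℝ≥0∞) < ((n:ℝ≥0∞) + 1)⁻¹ := fun n => by simp
  have ht : Tendsto (fun n : ℕ => ((n:ℝ≥0∞) + 1)⁻¹) atTop (𝓝 0) := by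
    have := (tendsto_add_atTop_iff_nat 1).2 ENNReal.tendsto_inv_nat_nhds_zero
    simpa using this
  choose us hp h1 h2 using fun n : ℕ => h (P n) (hPc n) (hPW n) _ (hpos n)
  refine ⟨us, hp, fun K a b cK => ?_, ?_⟩
  · obtain ⟨n, hn⟩ := hPK K (Metric.isCompact_of_isClosed_isBounded a b) cK
    refine tendsto_of_tendsto_of_tendsto_of_le_of_le' tendsto_const_nhds ht
      (Eventually.of_forall fun _ => bot_le) ?_
    filter_upwards [eventually_ge_atTop n] with i hi
    exact (lintegral_mono_set (hn.trans (exhaustion_mono hPi hi))).trans (h1 i)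
  · refine (limsup_le_limsup (Eventually.of_forall h2)).trans ?_
    have : Tendsto (fun n : ℕ => c + ((n:ℝ≥0∞) + 1)⁻¹) atTop (𝓝 (c + 0)) :=
      tendsto_const_nhds.add ht
    rw [add_zero] at this
    exact this.limsup_eq.le

lemma totVarOn_le_of_approx [ProperSpace X] {f : X → ℝ} {W : Set X} (hW : IsOpen W) {c : ℝ≥0∞}
    (h : ∀ K, IsCompact K → K ⊆ W → ∀ ε : ℝ≥0∞, 0 < ε → ∃ g : X → ℝ,
      LocallyLipschitzOnSet g W ∧
      ∫⁻ x in K, ENNReal.ofReal |g x - f x| ∂μ ≤ ε ∧ ∫⁻ x in W, lipConst g x ∂μ ≤ c + ε) :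
    totVarOn μ f W ≤ c := by
  obtain ⟨us, h1, h2, h3⟩ := exists_seq_of_approx hW h
  exact (totVarOn_le_liminf h1 h2).trans
    ((liminf_le_limsup (by isBoundedDefault) (by isBoundedDefault)).trans h3)

lemma exists_optimal_seq [ProperSpace X] {f : X → ℝ} {W : Set X} (hW : IsOpen W) 
    (h : totVarOn μ f W < ⊤) :
    ∃ us : ℕ → X → ℝ, (∀ i, LocallyLipschitzOnSet (us i) W) ∧ TendstoL1loc μ us f W ∧
      Tendsto (fun i => ∫⁻ x in W, lipConst (us i) x ∂μ) atTop (𝓝 (totVarOn μ f W)) := by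
  obtain ⟨us, h1, h2, h3⟩ := exists_seq_of_approx (f := f) (μ := μ) hW (c := totVarOn μ f W)
    (p := fun g => LocallyLipschitzOnSet g W) fun K hK hKW ε hε => by
      obtain ⟨g, a, b, c⟩ := exists_approx_of_totVarOn_lt (ENNReal.lt_add_right h.ne hε.ne')
        hK.isClosed hK.isBounded hKW hε
      exact ⟨g, a, b.le, c.le⟩
  exact ⟨us, h1, h2, tendsto_of_le_liminf_of_limsup_le (totVarOn_le_liminf h1 h2) h3⟩

lemma exists_optimal_seq_mem [ProperSpace X] {f : X → ℝ} {W : Set X} (hW : IsOpen W) 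
    (h : totVarOn μ f W < ⊤)
    (hf : ∀ x, f x ∈ Icc (0:ℝ) 1) :
    ∃ us : ℕ → X → ℝ, (∀ i, ∀ x ∈ W, LipAt (us i) x) ∧ (∀ i x, us i x ∈ Icc (0:ℝ) 1) ∧
      TendstoL1loc μ us f W ∧
      Tendsto (fun i => ∫⁻ x in W, lipConst (us i) x ∂μ) atTop (𝓝 (totVarOn μ f W)) := by
  obtain ⟨us, h1, h2, h3⟩ := exists_optimal_seq hW h
  have hle : ∀ i, ∀ x ∈ W, LipAt (fun x => clamp01 (us i x)) x := fun i x hx =>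
    ((h1 i).lipAt hW hx).of_le (lipAt_const 0 x) fun y z => by
      simpa using abs_clamp01_sub_le (us i y) (us i z)
  have ht : TendstoL1loc μ (fun i x => clamp01 (us i x)) f W := fun K a b c => by
    refine tendsto_of_tendsto_of_tendsto_of_le_of_le tendsto_const_nhds (h2 K a b c)
      (fun _ => bot_le) fun i => lintegral_mono fun x => ENNReal.ofReal_le_ofReal ?_
    have := abs_clamp01_sub_le (us i x) (f x)
    rwa [clamp01_of_mem (hf x)] at this
  refine ⟨fun i x => clamp01 (us i x), hle, fun i x => clamp01_mem _, ht, ?_⟩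
  refine tendsto_of_le_liminf_of_limsup_le (totVarOn_le_liminf
    (fun i => locallyLipschitzOnSet_of_lipAt (hle i)) ht) ?_
  rw [← h3.limsup_eq]
  refine limsup_le_limsup (Eventually.of_forall fun i => lintegral_mono fun x => ?_)
  exact lipConst_le_of_eventually (Eventually.of_forall fun y => abs_clamp01_sub_le _ _)

variable [BorelSpace X]

lemma totVarOn_congr {f g : X → ℝ} {W : Set X} (h : ∀ x ∈ W, f x = g x) :
    totVarOn μ f W = totVarOn μ g W := by
  have : ∀ us, TendstoL1loc μ us f W ↔ TendstoL1loc μ us g W := fun us => by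
    refine forall_congr' fun K => forall_congr' fun a => forall_congr' fun b =>
      forall_congr' fun c => ?_
    have : ∀ i, ∫⁻ x in K, ENNReal.ofReal |us i x - f x| ∂μ
        = ∫⁻ x in K, ENNReal.ofReal |us i x - g x| ∂μ := fun i =>
      setLIntegral_congr_fun a.measurableSet fun x hx => by rw [h x (c hx)]
    simp only [this]
  unfold totVarOn
  simp only [this]

lemma totVarOn_indicator_compl (E W : Set X) :
    totVarOn μ (Eᶜ.indicator fun _ => (1:ℝ)) W = totVarOn μ (E.indicator fun _ => (1:ℝ)) W := by
  rw [← totVarOn_one_sub]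
  refine totVarOn_congr fun x _ => ?_
  by_cases hx : x ∈ E <;> simp [hx]

lemma aemeasurable_of_lipAt {f : X → ℝ} {W : Set X} (hW : IsOpen W) (h : ∀ x ∈ W, LipAt f x) :
    AEMeasurable f (μ.restrict W) :=
  ContinuousOn.aemeasurable (fun x hx => (h x hx).continuousAt.continuousWithinAt)
    hW.measurableSet

variable [ProperSpace X]

/-- Lower semicontinuity of the total variation. -/
lemma totVarOn_le_of_approx_totVarOn {f : X → ℝ} {W : Set X} (hW : IsOpen W) {c : ℝ≥0∞}
    (h : ∀ K, IsCompact K → K ⊆ W → ∀ ε : ℝ≥0∞, 0 < ε → ∃ w : X → ℝ, AEMeasurable w μ ∧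
      ∫⁻ x in K, ENNReal.ofReal |w x - f x| ∂μ ≤ ε ∧ totVarOn μ w W ≤ c + ε) :
    totVarOn μ f W ≤ c := by
  rcases eq_or_ne c ⊤ with rfl | hc
  · exact le_top
  refine totVarOn_le_of_approx hW fun K hK hKW ε hε => ?_
  rcases eq_or_ne ε ⊤ with rfl | hεt
  · exact ⟨fun _ => 0, locallyLipschitzOnSet_of_lipAt fun x _ => lipAt_const 0 x, le_top, by simp⟩
  have h2 : 0 < ε / 2 := ENNReal.half_pos hε.ne'
  have h2t : ε / 2 ≠ ⊤ := (ENNReal.half_lt_self hε.ne' hεt).ne_top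
  obtain ⟨w, hw, hw1, hw2⟩ := h K hK hKW (ε / 2) h2
  obtain ⟨g, a, b, d⟩ := exists_approx_of_totVarOn_lt (c := c + ε) (ε := ε / 2) (hw2.trans_lt
    (by gcongr; exact ENNReal.half_lt_self hε.ne' hεt)) hK.isClosed hK.isBounded hKW h2
  refine ⟨g, a, ?_, d.le⟩
  refine (lintegral_abs_sub_triangle (g := w) ?_ hw.restrict).trans ?_
  · exact (aemeasurable_of_lipAt hW fun x hx => a.lipAt hW hx).mono_measure
      (Measure.restrict_mono hKW le_rfl)
  · calc _ ≤ ε / 2 + ε / 2 := add_le_add b.le hw1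
      _ = ε := ENNReal.add_halves ε

/-- Superadditivity with bounded overlap. -/
lemma sum_totVarOn_le {ι : Type*} {f : X → ℝ} {W : Set X} (hW : IsOpen W) (F : Finset ι)
    (A : ι → Set X) (hA : ∀ k ∈ F, IsOpen (A k)) (hAW : ∀ k ∈ F, A k ⊆ W) {m : ℕ} (hm : m ≠ 0)
    (hov : ∀ x, ∑ k ∈ F, (A k).indicator (fun _ => (1:ℝ≥0∞)) x ≤ m) :
    ∑ k ∈ F, totVarOn μ f (A k) ≤ m * totVarOn μ f W := by
  by_cases hV : totVarOn μ f W = ⊤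
  · rw [hV, ENNReal.mul_top (by simpa using hm)]; exact le_top
  obtain ⟨us, h1, h2, h3⟩ := exists_optimal_seq hW (lt_top_iff_ne_top.2 hV)
  have hmeas : ∑ k ∈ F, μ.restrict (A k) ≤ (m : ℝ≥0∞) • μ.restrict W := by
    refine Measure.le_iff.2 fun s hs => ?_
    rw [Measure.coe_finsetSum, Finset.sum_apply, Measure.smul_apply, smul_eq_mul]
    have e : ∀ k ∈ F, μ.restrict (A k) s
        = ∫⁻ x in s ∩ W, (A k).indicator (fun _ => (1:ℝ≥0∞)) x ∂μ := fun k hk => by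
      rw [lintegral_indicator (hA k hk).measurableSet, setLIntegral_const, one_mul,
        Measure.restrict_apply hs, Measure.restrict_apply (hA k hk).measurableSet]
      rw [inter_comm s W, ← inter_assoc, inter_eq_self_of_subset_left (hAW k hk), inter_comm]
    rw [Finset.sum_congr rfl e, ← lintegral_finsetSum' _ fun k hk =>
      (measurable_const.indicator (hA k hk).measurableSet).aemeasurable]
    refine (lintegral_mono hov).trans ?_
    rw [setLIntegral_const, Measure.restrict_apply hs]
  have hle : ∀ i, ∑ k ∈ F, ∫⁻ x in A k, lipConst (us i) x ∂μ
      ≤ m * ∫⁻ x in W, lipConst (us i) x ∂μ := fun i => by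
    rw [← lintegral_finsetSum_measure, ← smul_eq_mul, ← lintegral_smul_measure]
    exact lintegral_mono' hmeas le_rfl
  have hlim : ∀ G ⊆ F, ∑ k ∈ G, totVarOn μ f (A k) ≤
      liminf (fun i => ∑ k ∈ G, ∫⁻ x in A k, lipConst (us i) x ∂μ) atTop := by
    classical
    intro G
    induction G using Finset.induction_on with
    | empty => intro _; simp
    | insert a s ha ih =>
      intro hs
      simp_rw [Finset.sum_insert ha]
      have ha' : a ∈ F := hs (Finset.mem_insert_self _ _)
      refine (add_le_add (totVarOn_le_liminf (fun i => (h1 i).mono (hAW a ha'))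
        (fun K x y z => h2 K x y (z.trans (hAW a ha'))))
        (ih ((Finset.subset_insert _ _).trans hs))).trans ?_
      exact add_liminf_le_liminf_add _ _
  refine (hlim F subset_rfl).trans ((liminf_le_liminf (Eventually.of_forall hle)).trans ?_)
  exact (ENNReal.Tendsto.const_mul h3 (Or.inr (by simp))).liminf_eq.le

end TotVar

/-- A Lipschitz function vanishing on a compact `C` and at least `1` off a compact subset of
a given neighbourhood of `C`. -/
lemma exists_bump {X : Type u} [MetricSpace X] [ProperSpace X] {C O : Set X} (hC : IsCompact C)
    (hO : IsOpen O) (hCO : C ⊆ O) :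
    ∃ (β : X → ℝ) (l : ℝ) (K : Set X), 0 ≤ l ∧ (∀ y z, |β y - β z| ≤ l * dist y z) ∧
      (∀ x, 0 ≤ β x) ∧ (∀ x ∈ C, β x = 0) ∧ (∀ x ∉ K, 1 ≤ β x) ∧ IsCompact K ∧ C ⊆ K ∧ K ⊆ O := by
  rcases C.eq_empty_or_nonempty with rfl | hne
  · exact ⟨fun _ => 1, 0, ∅, le_rfl, by simp, by simp, by simp, by simp, isCompact_empty,
      subset_rfl, empty_subset _⟩
  obtain ⟨ρ, hρ, hsub⟩ := hC.exists_cthickening_subset_open hO hCO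
  refine ⟨fun x => infDist x C / ρ, 1 / ρ, cthickening ρ C, by positivity, fun y z => ?_,
    fun x => div_nonneg infDist_nonneg hρ.le, fun x hx => ?_, fun x hx => ?_, ?_,
    self_subset_cthickening C, hsub⟩
  · rw [← sub_div, abs_div, abs_of_pos hρ, div_mul_eq_mul_div, one_mul]
    have := (lipschitz_infDist_pt C).dist_le_mul y z
    rw [NNReal.coe_one, one_mul, Real.dist_eq] at this
    gcongr
  · simp only [infDist_zero_of_mem hx, zero_div]
  · rw [one_le_div hρ]
    rw [mem_cthickening_iff, not_le] at hx
    refine (ENNReal.ofReal_le_iff_le_toReal (infEDist_ne_top hne)).1 hx.le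
  · exact Metric.isCompact_of_isClosed_isBounded isClosed_cthickening hC.isBounded.cthickening

lemma exists_delta_measure_le {X : Type u} [MeasurableSpace X] {μ : Measure X} {K : Set X}
    (hK : μ K ≠ ⊤) (hKm : MeasurableSet K) {ζ : X → ℝ}
    (hζ : Measurable ζ) {ε : ℝ≥0∞} (hε : ε ≠ 0) :
    ∃ δ : ℝ≥0∞, 0 < δ ∧ ∀ g : X → ℝ, AEMeasurable g (μ.restrict K) →
      ∫⁻ x in K, ENNReal.ofReal (g x) ∂μ ≤ δ → μ (K ∩ {x | 0 < ζ x ∧ ζ x ≤ g x}) ≤ ε := by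
  have hm : ∀ n : ℕ, MeasurableSet (K ∩ ζ ⁻¹' Ioo 0 (1 / ((n:ℝ) + 1))) := fun n =>
    hKm.inter (hζ measurableSet_Ioo)
  have ht : Tendsto (fun n : ℕ => μ (K ∩ ζ ⁻¹' Ioo 0 (1 / ((n:ℝ) + 1)))) atTop
      (𝓝 (μ (⋂ n : ℕ, K ∩ ζ ⁻¹' Ioo 0 (1 / ((n:ℝ) + 1))))) := by
    refine tendsto_measure_iInter_atTop (fun n => (hm n).nullMeasurableSet) ?_
      ⟨0, measure_ne_top_of_subset inter_subset_left hK⟩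
    intro a b hab
    refine inter_subset_inter_right _ (preimage_mono (Ioo_subset_Ioo_right ?_))
    gcongr
  have hempty : (⋂ n : ℕ, K ∩ ζ ⁻¹' Ioo 0 (1 / ((n:ℝ) + 1))) = ∅ := by
    refine eq_empty_of_forall_notMem fun x hx => ?_
    rw [mem_iInter] at hx
    obtain ⟨n, hn⟩ := exists_nat_one_div_lt (hx 0).2.1
    exact absurd (hx n).2.2 (not_lt.2 hn.le)
  rw [hempty, measure_empty] at ht
  obtain ⟨n, hn⟩ := (ht.eventually_lt_const (ENNReal.half_pos hε)).exists
  set s : ℝ := 1 / ((n:ℝ) + 1) with hs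
  have hs0 : 0 < s := by positivity
  have hs1 : ENNReal.ofReal s ≠ 0 := by simpa using hs0
  refine ⟨ENNReal.ofReal s * (ε / 2), ENNReal.mul_pos hs1 (ENNReal.half_pos hε).ne', fun g hg hgl =>
    ?_⟩
  have hsub : K ∩ {x | 0 < ζ x ∧ ζ x ≤ g x} ⊆
      (K ∩ ζ ⁻¹' Ioo 0 s) ∪ ({x | ENNReal.ofReal s ≤ ENNReal.ofReal (g x)} ∩ K) := by
    rintro x ⟨hxK, hx1, hx2⟩
    by_cases h : ζ x < s
    · exact Or.inl ⟨hxK, hx1, h⟩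
    · exact Or.inr ⟨ENNReal.ofReal_le_ofReal ((not_lt.1 h).trans hx2), hxK⟩
  have hmk := mul_meas_ge_le_lintegral₀ (μ := μ.restrict K) hg.ennreal_ofReal (ENNReal.ofReal s)
  rw [Measure.restrict_apply' hKm] at hmk
  have h2 := (ENNReal.mul_le_mul_iff_right hs1 ENNReal.ofReal_ne_top).1 (hmk.trans hgl)
  calc _ ≤ _ := (measure_mono hsub).trans (measure_union_le _ _)
    _ ≤ ε / 2 + ε / 2 := add_le_add hn.le h2
    _ = ε := ENNReal.add_halves ε

/-- Truncation of `u` to the strip of half-width `β` around `w`. -/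
def strip (u w β : ℝ) : ℝ := max (w - β) (min u (w + β))

lemma LipAt.strip {X : Type u} [MetricSpace X] {u w β : X → ℝ} {x : X} (hu : LipAt u x)
    (hw : LipAt w x) (hβ : LipAt β x) :
    LipAt (fun y => strip (u y) (w y) (β y)) x :=
  (hw.sub hβ).max (hu.min (hw.add hβ))

lemma tendsto_measure_pos_le {X : Type u} [MeasurableSpace X] {μ : Measure X} {K : Set X}
    (hK : μ K ≠ ⊤) (hKm : MeasurableSet K) {ζ : X → ℝ}
    (hζ : Measurable ζ) {g : ℕ → X → ℝ} (hg : ∀ i, AEMeasurable (g i) (μ.restrict K))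
    (h : Tendsto (fun i => ∫⁻ x in K, ENNReal.ofReal (g i x) ∂μ) atTop (𝓝 0)) :
    Tendsto (fun i => μ (K ∩ {x | 0 < ζ x ∧ ζ x ≤ g i x})) atTop (𝓝 0) := by
  refine ENNReal.tendsto_nhds_zero.2 fun ε hε => ?_
  obtain ⟨δ, hδ, H⟩ := exists_delta_measure_le hK hKm hζ hε.ne'
  filter_upwards [ENNReal.tendsto_nhds_zero.1 h δ hδ] with i hi
  exact H _ (hg i) hi

section Swap

variable {X : Type u} [MetricSpace X] [MeasurableSpace X] {μ : Measure X} [BorelSpace X]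

lemma strip_zero (u w : ℝ) : strip u w 0 = w := by simp [strip]

lemma strip_of_abs_le {u w β : ℝ} (h : |u - w| ≤ β) : strip u w β = u := by
  rw [abs_le] at h
  rw [strip, min_eq_left (by linarith), max_eq_right (by linarith)]

lemma strip_of_le_sub {u w β : ℝ} (hβ : 0 ≤ β) (h : w + β ≤ u) : strip u w β = w + β := by
  rw [strip, min_eq_right h, max_eq_right (by linarith)]

lemma strip_of_add_le {u w β : ℝ} (hβ : 0 ≤ β) (h : u + β ≤ w) : strip u w β = w - β := by
  rw [strip, min_eq_left (by linarith), max_eq_left (by linarith)]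

lemma abs_strip_sub_le {u w β c : ℝ} (hβ : 0 ≤ β) :
    |strip u w β - c| ≤ |u - c| + |w - c| := by
  have h1 : min u w ≤ strip u w β := by
    rcases le_total u w with h | h
    · rw [min_eq_left h]; exact le_max_of_le_right (le_min le_rfl (by linarith))
    · rw [min_eq_right h]; exact le_max_of_le_right (le_min h (by linarith))
  have h2 : strip u w β ≤ max u w :=
    max_le (le_max_of_le_right (by linarith)) ((min_le_left _ _).trans (le_max_left _ _))
  rw [abs_le]
  constructor
  · rcases min_choice u w with h | h <;> rw [h] at h1 <;>
      linarith [neg_abs_le (u - c), neg_abs_le (w - c), abs_nonneg (u - c), abs_nonneg (w - c)]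
  · rcases max_choice u w with h | h <;> rw [h] at h2 <;>
      linarith [le_abs_self (u - c), le_abs_self (w - c), abs_nonneg (u - c), abs_nonneg (w - c)]

variable [ProperSpace X] [IsLocallyFiniteMeasure μ] [IsUnifLocDoublingMeasure μ]

lemma ae_lipConst_strip_le {u w β : X → ℝ} {U : Set X} {l : ℝ} (hU : IsOpen U) (hl : 0 ≤ l)
    (hu : ∀ x ∈ U, LipAt u x) (hw : ∀ x ∈ U, LipAt w x)
    (hβl : ∀ y z, |β y - β z| ≤ l * dist y z) (hβ0 : ∀ x, 0 ≤ β x) :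
    ∀ᵐ x ∂μ, x ∈ U → (β x = 0 → lipConst (fun y => strip (u y) (w y) (β y)) x = lipConst w x) ∧
      (|u x - w x| ≤ β x → lipConst (fun y => strip (u y) (w y) (β y)) x = lipConst u x) ∧
      (β x ≤ |u x - w x| → lipConst (fun y => strip (u y) (w y) (β y)) x ≤
        lipConst w x + ENNReal.ofReal l) := by
  have hβL : ∀ x, LipAt β x := lipAt_of_lipschitz hl hβl
  have hs : ∀ x ∈ U, LipAt (fun y => strip (u y) (w y) (β y)) x := fun x hx =>
    (hu x hx).strip (hw x hx) (hβL x)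
  filter_upwards [ae_lipConst_eq_of_eq (μ := μ) hU hs hu, ae_lipConst_eq_of_eq (μ := μ) hU hs hw,
    ae_lipConst_eq_of_eq (μ := μ) hU hs (fun x hx => (hw x hx).add (hβL x)),
    ae_lipConst_eq_of_eq (μ := μ) hU hs (fun x hx => (hw x hx).sub (hβL x))] with x h1 h2 h3 h4 hx
  refine ⟨fun h => h2 hx (by rw [h, strip_zero]), fun h => h1 hx (strip_of_abs_le h), fun h => ?_⟩
  rcases le_abs'.1 h with h | h
  · rw [h4 hx (strip_of_add_le (hβ0 x) (by linarith))]
    refine lipConst_le_add_mul hl (Eventually.of_forall fun y => ?_)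
    rw [sub_sub_sub_comm]
    exact (abs_sub _ _).trans (by gcongr; exact hβl y x)
  · rw [h3 hx (strip_of_le_sub (hβ0 x) (by linarith))]
    refine lipConst_le_add_mul hl (Eventually.of_forall fun y => ?_)
    rw [add_sub_add_comm]
    exact (abs_add_le _ _).trans (by gcongr; exact hβl y x)

/-- Exchanging the values of two functions on an open set, when they agree near its boundary. -/
lemma totVarOn_swap {f₀ f₁ : X → ℝ} {U K₀ : Set X} (hU : IsOpen U) (hK₀ : IsCompact K₀)
    (hKU : K₀ ⊆ U) (h₀ : ∀ x, f₀ x ∈ Icc (0:ℝ) 1) (h₁ : ∀ x, f₁ x ∈ Icc (0:ℝ) 1)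
    (hm₀ : AEMeasurable f₀ μ) (hm₁ : AEMeasurable f₁ μ) (heq : ∀ x ∉ K₀, f₀ x = f₁ x) :
    totVarOn μ f₁ univ + totVarOn μ f₀ U ≤ totVarOn μ f₀ univ + totVarOn μ f₁ U := by
  by_cases hV₀ : totVarOn μ f₀ univ = ⊤
  · simp [hV₀]
  by_cases hV₁ : totVarOn μ f₁ U = ⊤
  · simp [hV₁]
  obtain ⟨u, hu, hu01, hut, hul⟩ := exists_optimal_seq_mem isOpen_univ (lt_top_iff_ne_top.2 hV₀) h₀
  obtain ⟨w, hw, hw01, hwt, hwl⟩ := exists_optimal_seq_mem hU (lt_top_iff_ne_top.2 hV₁) h₁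
  obtain ⟨β, l, K, hl, hβl, hβ0, hβz, hβ1, hK, hK₀K, hKU⟩ := exists_bump hK₀ hU hKU
  have huU : ∀ i, ∀ x ∈ U, LipAt (u i) x := fun i x _ => hu i x (mem_univ x)
  have hβL : ∀ x, LipAt β x := lipAt_of_lipschitz hl hβl
  have hβm : Measurable β :=
    (continuous_iff_continuousAt.2 fun x => (hβL x).continuousAt).measurable
  have hdist : ∀ i x, |u i x - w i x| ≤ 1 := fun i x => by
    have a := hu01 i x; have b := hw01 i x
    rw [abs_le]; constructor <;> linarith [a.1, a.2, b.1, b.2]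
  set a : ℕ → X → ℝ := fun i y => strip (u i y) (w i y) (β y)
  set b : ℕ → X → ℝ := fun i y => strip (w i y) (u i y) (β y)
  have haoff : ∀ i, ∀ x ∉ K, a i x = u i x := fun i x hx =>
    strip_of_abs_le ((hdist i x).trans (hβ1 x hx))
  have hboff : ∀ i, ∀ x ∉ K, b i x = w i x := fun i x hx =>
    strip_of_abs_le (by rw [abs_sub_comm]; exact (hdist i x).trans (hβ1 x hx))
  have hcomp : ∀ x ∉ K, Kᶜ ∈ 𝓝 x := fun x hx => hK.isClosed.isOpen_compl.mem_nhds hx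
  have haev : ∀ i, ∀ x ∉ K, a i =ᶠ[𝓝 x] u i := fun i x hx => by
    filter_upwards [hcomp x hx] with y hy using haoff i y hy
  have hbev : ∀ i, ∀ x ∉ K, b i =ᶠ[𝓝 x] w i := fun i x hx => by
    filter_upwards [hcomp x hx] with y hy using hboff i y hy
  have haL : ∀ i, ∀ x ∈ univ, LipAt (a i) x := fun i x _ => by
    by_cases hx : x ∈ U
    · exact (huU i x hx).strip (hw i x hx) (hβL x)
    · exact (hu i x (mem_univ x)).congr (haev i x fun h => hx (hKU h)).symm
  have hbL : ∀ i, ∀ x ∈ U, LipAt (b i) x := fun i x hx =>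
    (hw i x hx).strip (huU i x hx) (hβL x)
  have hadist : ∀ i x, |a i x - f₁ x| ≤ |u i x - f₀ x| + |w i x - f₁ x| := fun i x => by
    by_cases hx : x ∈ K₀
    · simp only [a, hβz x hx, strip_zero]; linarith [abs_nonneg (u i x - f₀ x)]
    · rw [heq x hx]; exact abs_strip_sub_le (hβ0 x)
  have hbdist : ∀ i x, |b i x - f₀ x| ≤ |u i x - f₀ x| + |w i x - f₁ x| := fun i x => by
    by_cases hx : x ∈ K₀
    · simp only [b, hβz x hx, strip_zero]; linarith [abs_nonneg (w i x - f₁ x)]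
    · rw [heq x hx, add_comm]; exact abs_strip_sub_le (hβ0 x)
  have hmu : ∀ i, AEMeasurable (u i) μ := fun i => by
    simpa using aemeasurable_of_lipAt (μ := μ) isOpen_univ (hu i)
  have hbt : TendstoL1loc μ b f₀ U := fun K' c1 c2 c3 => by
    have := (hut K' c1 c2 (subset_univ _)).add (hwt K' c1 c2 c3)
    rw [add_zero] at this
    refine tendsto_of_tendsto_of_tendsto_of_le_of_le tendsto_const_nhds this
      (fun _ => bot_le) fun i => ?_
    have hmm : AEMeasurable (fun x => ENNReal.ofReal |u i x - f₀ x|) (μ.restrict K') := by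
      have h1 := (hmu i).restrict (s := K')
      have h2 := hm₀.restrict (s := K')
      fun_prop
    dsimp only
    rw [← lintegral_add_left' hmm]
    refine lintegral_mono fun x => ?_
    rw [← ENNReal.ofReal_add (abs_nonneg _) (abs_nonneg _)]
    exact ENNReal.ofReal_le_ofReal (hbdist i x)
  have hat : TendstoL1loc μ a f₁ univ := fun K' c1 c2 _ => by
    have := (hut K' c1 c2 (subset_univ _)).add (hwt K hK.isClosed hK.isBounded hKU)
    rw [add_zero] at this
    refine tendsto_of_tendsto_of_tendsto_of_le_of_le tendsto_const_nhds this
      (fun _ => bot_le) fun i => ?_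
    have hmm : AEMeasurable (fun x => ENNReal.ofReal |u i x - f₀ x|) (μ.restrict K') := by
      have h1 := (hmu i).restrict (s := K')
      have h2 := hm₀.restrict (s := K')
      fun_prop
    dsimp only
    calc _ ≤ ∫⁻ x in K', (ENNReal.ofReal |u i x - f₀ x| +
          K.indicator (fun x => ENNReal.ofReal |w i x - f₁ x|) x) ∂μ := by
          refine lintegral_mono fun x => ?_
          by_cases hx : x ∈ K
          · rw [indicator_of_mem hx, ← ENNReal.ofReal_add (abs_nonneg _) (abs_nonneg _)]
            exact ENNReal.ofReal_le_ofReal (hadist i x)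
          · rw [indicator_of_notMem hx, add_zero, haoff i x hx, heq x fun h => hx (hK₀K h)]
      _ = _ := lintegral_add_left' hmm _
      _ ≤ _ := by
        refine add_le_add le_rfl ?_
        rw [← lintegral_indicator hK.measurableSet]
        exact lintegral_mono' Measure.restrict_le_self le_rfl
  set S : ℕ → Set X := fun i => K ∩ {x | 0 < β x ∧ β x ≤ |u i x - f₀ x| + |w i x - f₁ x|}
  have hmK : ∀ i, AEMeasurable (fun x => |u i x - f₀ x|) (μ.restrict K) := fun i => by
    have h1 := (hmu i).restrict (s := K)
    have h2 := hm₀.restrict (s := K)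
    fun_prop
  have hmK' : ∀ i, AEMeasurable (fun x => |w i x - f₁ x|) (μ.restrict K) := fun i => by
    have h1 := (aemeasurable_of_lipAt (μ := μ) hU (hw i)).mono_measure
      (Measure.restrict_mono hKU le_rfl)
    have h2 := hm₁.restrict (s := K)
    fun_prop
  have hSt : Tendsto (fun i => μ (S i)) atTop (𝓝 0) := by
    refine tendsto_measure_pos_le hK.measure_lt_top.ne hK.measurableSet hβm
      (fun i => (hmK i).add (hmK' i)) ?_
    have := (hut K hK.isClosed hK.isBounded (subset_univ _)).add
      (hwt K hK.isClosed hK.isBounded hKU)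
    rw [add_zero] at this
    refine this.congr fun i => ?_
    rw [← lintegral_add_left' (hmK i).ennreal_ofReal]
    refine lintegral_congr fun x => ?_
    rw [ENNReal.ofReal_add (abs_nonneg _) (abs_nonneg _)]
  have henergy : ∀ i, ∫⁻ x in univ, lipConst (a i) x ∂μ + ∫⁻ x in U, lipConst (b i) x ∂μ ≤
      ∫⁻ x in univ, lipConst (u i) x ∂μ + ∫⁻ x in U, lipConst (w i) x ∂μ +
        (ENNReal.ofReal l + ENNReal.ofReal l) * μ (S i) := fun i => by
    have hmL : AEMeasurable (lipConst (u i)) (μ.restrict U) := aemeasurable_lipConst hU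
      fun x hx => (huU i x hx).continuousAt.continuousWithinAt
    have hmL' : AEMeasurable (lipConst (w i)) (μ.restrict U) := aemeasurable_lipConst hU
      fun x hx => (hw i x hx).continuousAt.continuousWithinAt
    have key : ∫⁻ x in U, lipConst (a i) x ∂μ + ∫⁻ x in U, lipConst (b i) x ∂μ ≤
        ∫⁻ x in U, lipConst (u i) x ∂μ + ∫⁻ x in U, lipConst (w i) x ∂μ +
        (ENNReal.ofReal l + ENNReal.ofReal l) * μ (S i) := by
      calc _ ≤ ∫⁻ x in U, (lipConst (a i) x + lipConst (b i) x) ∂μ := le_lintegral_add _ _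
        _ ≤ ∫⁻ x in U, ((lipConst (u i) x + lipConst (w i) x) +
            (S i).indicator (fun _ => ENNReal.ofReal l + ENNReal.ofReal l) x) ∂μ := by
          refine lintegral_mono_ae ((ae_restrict_iff' hU.measurableSet).2 ?_)
          filter_upwards [ae_lipConst_strip_le (μ := μ) hU hl (huU i) (hw i) hβl hβ0,
            ae_lipConst_strip_le (μ := μ) hU hl (hw i) (huU i) hβl hβ0] with x hx1 hx2 hxU
          by_cases hxK : x ∈ K
          · by_cases hz : β x = 0
            · rw [(hx1 hxU).1 hz, (hx2 hxU).1 hz, add_comm]; exact le_self_add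
            · rcases le_total |u i x - w i x| (β x) with h | h
              · rw [(hx1 hxU).2.1 h, (hx2 hxU).2.1 (by rwa [abs_sub_comm])]; exact le_self_add
              · have hxS : x ∈ S i := by
                  refine ⟨hxK, lt_of_le_of_ne (hβ0 x) (Ne.symm hz), h.trans ?_⟩
                  have hx0 : x ∉ K₀ := fun h' => hz (hβz x h')
                  rw [heq x hx0, abs_sub_comm (w i x)]
                  exact abs_sub_le _ _ _
                rw [indicator_of_mem hxS]
                refine (add_le_add ((hx1 hxU).2.2 h)
                  ((hx2 hxU).2.2 (by rwa [abs_sub_comm]))).trans (le_of_eq ?_)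
                ring
          · have e1 : lipConst (a i) x = lipConst (u i) x := lipConst_congr (haev i x hxK)
            have e2 : lipConst (b i) x = lipConst (w i) x := lipConst_congr (hbev i x hxK)
            rw [e1, e2]; exact le_self_add
        _ = _ + ∫⁻ x in U, (S i).indicator (fun _ => ENNReal.ofReal l + ENNReal.ofReal l) x ∂μ := by
          have hmm : AEMeasurable (fun x => lipConst (u i) x + lipConst (w i) x) (μ.restrict U) :=
            hmL.add hmL'
          rw [lintegral_add_left' hmm, lintegral_add_left' hmL]
        _ ≤ _ := by
          gcongr
          refine (lintegral_indicator_const_le _ _).trans ?_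
          gcongr
          exact Measure.restrict_le_self
    have hcompl : ∫⁻ x in Uᶜ, lipConst (a i) x ∂μ = ∫⁻ x in Uᶜ, lipConst (u i) x ∂μ :=
      setLIntegral_congr_fun hU.measurableSet.compl fun x hx =>
        lipConst_congr (haev i x fun h => hx (hKU h))
    rw [Measure.restrict_univ, ← lintegral_add_compl (lipConst (a i)) hU.measurableSet,
      ← lintegral_add_compl (lipConst (u i)) hU.measurableSet, hcompl, add_right_comm]
    refine (add_le_add_left key _).trans (le_of_eq ?_)
    ring
  calc _ ≤ liminf (fun i => ∫⁻ x in univ, lipConst (a i) x ∂μ) atTop +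
        liminf (fun i => ∫⁻ x in U, lipConst (b i) x ∂μ) atTop :=
        add_le_add (totVarOn_le_liminf (fun i => locallyLipschitzOnSet_of_lipAt (haL i)) hat)
          (totVarOn_le_liminf (fun i => locallyLipschitzOnSet_of_lipAt (hbL i)) hbt)
    _ ≤ _ := add_liminf_le_liminf_add _ _
    _ ≤ _ := liminf_le_liminf (Eventually.of_forall henergy)
    _ = totVarOn μ f₀ univ + totVarOn μ f₁ U + (ENNReal.ofReal l + ENNReal.ofReal l) * 0 :=
        ((hul.add hwl).add (ENNReal.Tendsto.const_mul hSt (Or.inr (by simp)))).liminf_eq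
    _ = _ := by simp

end Swap

section Glue

variable {X : Type u} [MetricSpace X] [MeasurableSpace X] {μ : Measure X} [BorelSpace X]
  [ProperSpace X] [IsLocallyFiniteMeasure μ] [IsUnifLocDoublingMeasure μ]

/-- Gluing of approximations along a locally finite family of compact sets. -/
lemma totVarOn_le_tsum_of_bumps {J : Type*} [Countable J] {W : Set X} (hW : IsOpen W)
    {O K : J → Set X} {β : J → X → ℝ} {l : J → ℝ} (hO : ∀ j, IsOpen (O j))
    (hK : ∀ j, IsCompact (K j)) (hKO : ∀ j, K j ⊆ O j) (hKW : ∀ j, K j ⊆ W) (hl : ∀ j, 0 ≤ l j)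
    (hβl : ∀ j y z, |β j y - β j z| ≤ l j * dist y z) (hβ0 : ∀ j x, 0 ≤ β j x)
    (hβ1 : ∀ j, ∀ x ∉ K j, 1 ≤ β j x) (hz : ∀ x ∈ W, ∃ j, β j x = 0)
    (hfin : ∀ L, IsCompact L → L ⊆ W → {j | (K j ∩ L).Nonempty}.Finite)
    {f : X → ℝ} (hf : ∀ x, f x ∈ Icc (0:ℝ) 1) (hfm : AEMeasurable f μ) :
    totVarOn μ f W ≤ ∑' j, totVarOn μ f (O j) := by
  classical
  by_cases hV : ∃ j, totVarOn μ f (O j) = ⊤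
  · obtain ⟨j, hj⟩ := hV
    rw [ENNReal.tsum_eq_top_of_eq_top ⟨j, hj⟩]; exact le_top
  push Not at hV
  rcases W.eq_empty_or_nonempty with rfl | ⟨x₀, hx₀⟩
  · rw [totVarOn_empty]; exact bot_le
  have hJ : Nonempty J := ⟨(hz x₀ hx₀).choose⟩
  refine totVarOn_le_of_approx hW fun K' _ hK'W ε hε => ?_
  have hβm : ∀ j, Measurable (β j) := fun j => (continuous_iff_continuousAt.2 fun x =>
    (lipAt_of_lipschitz (hl j) (hβl j) x).continuousAt).measurable
  set F : J → Finset J := fun j => (hfin (K j) (hK j) (hKW j)).toFinset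
  have hF : ∀ i j, i ∈ F j ↔ (K i ∩ K j).Nonempty := fun i j => by simp [F]
  obtain ⟨e, he, hes⟩ := ENNReal.exists_pos_sum_of_countable (ENNReal.half_pos hε.ne').ne' J
  have hη : ∀ j, ∃ η : ℝ≥0∞, η ≠ 0 ∧ ENNReal.ofReal (l j) * η ≤ e j := fun j => by
    refine ⟨e j / (ENNReal.ofReal (l j) + 1), ?_, ?_⟩
    · exact ENNReal.div_ne_zero.2 ⟨by exact_mod_cast (he j).ne', by simp⟩
    · calc _ ≤ (ENNReal.ofReal (l j) + 1) * (e j / (ENNReal.ofReal (l j) + 1)) := by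
            gcongr; exact le_self_add
        _ ≤ e j := ENNReal.mul_div_le
  choose η hη0 hηe using hη
  choose δ hδ0 hδ using fun j => exists_delta_measure_le (μ := μ) (hK j).measure_lt_top.ne
    (hK j).measurableSet (hβm j) (hη0 j)
  have hτ : ∀ i, ∃ τ : ℝ≥0∞, 0 < τ ∧ τ ≤ e i ∧ ∀ j ∈ F i, τ ≤ δ j / ((F j).card + 1) := fun i => by
    have hp : ∀ j, 0 < δ j / ((F j).card + 1) := fun j =>
      ENNReal.div_pos (hδ0 j).ne' (by finiteness)
    rcases (F i).eq_empty_or_nonempty with h | h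
    · exact ⟨e i, by exact_mod_cast he i, le_rfl, by simp [h]⟩
    · refine ⟨min (e i) ((F i).inf' h fun j => δ j / ((F j).card + 1)),
        lt_min (by exact_mod_cast he i) ((Finset.lt_inf'_iff h).2 fun j _ => hp j), min_le_left _ _,
        fun j hj => (min_le_right _ _).trans (Finset.inf'_le _ hj)⟩
  choose τ hτ0 hτe hτδ using hτ
  have hu : ∀ j, ∃ u : X → ℝ, (∀ x ∈ O j, LipAt u x) ∧ (∀ x, u x ∈ Icc (0:ℝ) 1) ∧
      ∫⁻ x in K j, ENNReal.ofReal |u x - f x| ∂μ ≤ τ j ∧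
      ∫⁻ x in O j, lipConst u x ∂μ ≤ totVarOn μ f (O j) + e j := fun j => by
    obtain ⟨us, h1, h2, h3, h4⟩ := exists_optimal_seq_mem (hO j) (lt_top_iff_ne_top.2 (hV j)) hf
    have a := ENNReal.tendsto_nhds_zero.1 (h3 (K j) (hK j).isClosed (hK j).isBounded (hKO j))
      (τ j) (hτ0 j)
    have b := h4.eventually_le_const (ENNReal.lt_add_right (hV j)
      (show (e j : ℝ≥0∞) ≠ 0 by exact_mod_cast (he j).ne'))
    obtain ⟨i, hi1, hi2⟩ := (a.and b).exists
    exact ⟨us i, h1 i, h2 i, hi1, hi2⟩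
  choose u huL hu01 huτ hue using hu
  set v : J → X → ℝ := fun j x => max 0 (u j x - β j x)
  have hv0 : ∀ j, ∀ x ∉ K j, v j x = 0 := fun j x hx =>
    max_eq_left (by linarith [(hu01 j x).2, hβ1 j x hx])
  have hvnn : ∀ j x, 0 ≤ v j x := fun j x => le_max_left _ _
  have hv1 : ∀ j x, v j x ≤ 1 := fun j x =>
    max_le zero_le_one (by linarith [(hu01 j x).2, hβ0 j x])
  have hβL : ∀ j x, LipAt (β j) x := fun j => lipAt_of_lipschitz (hl j) (hβl j)
  have hvL : ∀ j x, LipAt (v j) x := fun j x => by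
    by_cases hx : x ∈ O j
    · exact (lipAt_const 0 x).max ((huL j x hx).sub (hβL j x))
    · refine (lipAt_const 0 x).congr ?_
      filter_upwards [(hK j).isClosed.isOpen_compl.mem_nhds fun h => hx (hKO j h)] with y hy
      exact (hv0 j y hy).symm
  set H : X → ℝ := fun x => ⨆ j, v j x
  have hbdd : ∀ x, BddAbove (range fun j => v j x) := fun x =>
    ⟨1, by rintro _ ⟨j, rfl⟩; exact hv1 j x⟩
  have hvH : ∀ j x, v j x ≤ H x := fun j x => le_ciSup (hbdd x) j
  have hHL : ∀ x ∈ W, LipAt H x := fun x hx => by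
    obtain ⟨L, hL, hxL, hLW⟩ := exists_compact_subset hW hx
    set G := (hfin L hL hLW).toFinset
    have hGe : ∀ᶠ y in 𝓝 x, y ∈ L := mem_interior_iff_mem_nhds.1 hxL
    have key : ∀ y ∈ L, ∀ z, H y ≤ H z + ∑ i ∈ G, |v i y - v i z| := fun y hy z => by
      refine ciSup_le fun j => ?_
      have h0 : 0 ≤ H z := (hvnn hJ.some z).trans (hvH _ z)
      by_cases hj : j ∈ G
      · have := Finset.single_le_sum (f := fun i => |v i y - v i z|)
          (fun i _ => abs_nonneg _) hj
        linarith [le_abs_self (v j y - v j z), hvH j z]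
      · rw [hv0 j y fun h => hj (by simpa [G] using ⟨y, h, hy⟩)]
        positivity
    choose M hM r hr hMr using fun j => hvL j x
    obtain ⟨s, hs, hsL⟩ := Metric.eventually_nhds_iff_ball.1 hGe
    obtain ⟨t, ht, htr⟩ : ∃ t > 0, ∀ i ∈ G, t ≤ r i := by
      rcases G.eq_empty_or_nonempty with h | h
      · exact ⟨1, one_pos, by simp [h]⟩
      · exact ⟨G.inf' h r, (Finset.lt_inf'_iff h).2 fun i _ => hr i,
          fun i hi => Finset.inf'_le _ hi⟩
    refine ⟨∑ i ∈ G, M i, Finset.sum_nonneg fun i _ => hM i, min s t, lt_min hs ht,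
      fun y hy z hz => ?_⟩
    have hy1 := hsL y (ball_subset_ball (min_le_left _ _) hy)
    have hz1 := hsL z (ball_subset_ball (min_le_left _ _) hz)
    have hb : ∑ i ∈ G, |v i y - v i z| ≤ (∑ i ∈ G, M i) * dist y z := by
      rw [Finset.sum_mul]
      exact Finset.sum_le_sum fun i hi => hMr i y
        (ball_subset_ball ((min_le_right _ _).trans (htr i hi)) hy) z
        (ball_subset_ball ((min_le_right _ _).trans (htr i hi)) hz)
    have k1 := key y hy1 z
    have k2 := key z hz1 y
    simp_rw [abs_sub_comm (v _ z)] at k2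
    rw [abs_le]; constructor <;> linarith
  have hsup : ∀ x ∈ W, ∃ j, H x = v j x ∧ x ∈ K j ∧ ∀ i, v i x ≤ v j x := fun x hx => by
    obtain ⟨i, hi⟩ := hz x hx
    have hiK : x ∈ K i := by
      by_contra h
      have := hβ1 i x h; rw [hi] at this; linarith
    set G := (hfin {x} isCompact_singleton (by simpa using hx)).toFinset
    have hG : ∀ j, j ∈ G ↔ x ∈ K j := fun j => by
      simp only [G, Set.Finite.mem_toFinset, inter_singleton_nonempty, mem_ofPred_eq]
    obtain ⟨j, hj, hjm⟩ := G.exists_max_image (fun j => v j x) ⟨i, (hG i).2 hiK⟩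
    have : ∀ i, v i x ≤ v j x := fun i => by
      by_cases h : x ∈ K i
      · exact hjm i ((hG i).2 h)
      · rw [hv0 i x h]; exact hvnn j x
    exact ⟨j, le_antisymm (ciSup_le this) (hvH j x), (hG j).1 hj, this⟩
  set d : J → X → ℝ := fun i => (K i).indicator fun x => |u i x - f x|
  have hd0 : ∀ i x, 0 ≤ d i x := fun i x => indicator_nonneg (fun _ _ => abs_nonneg _) x
  have hdK : ∀ i, ∀ x ∈ K i, d i x = |u i x - f x| := fun i x hx => indicator_of_mem hx _
  have hdm : ∀ i, AEMeasurable (d i) μ := fun i => by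
    refine (aemeasurable_indicator_iff (hK i).measurableSet).2 ?_
    have h1 := (aemeasurable_of_lipAt (μ := μ) (hO i) (huL i)).mono_measure
      (Measure.restrict_mono (hKO i) le_rfl)
    have h2 := hfm.restrict (s := K i)
    fun_prop
  have hdi : ∀ i, ∫⁻ x, ENNReal.ofReal (d i x) ∂μ ≤ τ i := fun i => by
    refine le_trans (le_of_eq ?_) (huτ i)
    rw [← lintegral_indicator (hK i).measurableSet]
    refine lintegral_congr fun x => ?_
    by_cases hx : x ∈ K i
    · rw [indicator_of_mem hx, hdK i x hx]
    · rw [indicator_of_notMem hx, show d i x = 0 from indicator_of_notMem hx _, ENNReal.ofReal_zero]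
  set g : J → X → ℝ := fun j x => ∑ i ∈ F j, d i x
  have hgm : ∀ j, AEMeasurable (g j) μ := fun j => by
    have := Finset.aemeasurable_fun_sum (F j) fun i _ => hdm i
    exact this
  set S : J → Set X := fun j => K j ∩ {x | 0 < β j x ∧ β j x ≤ g j x}
  have hS : ∀ j, μ (S j) ≤ η j := fun j => by
    refine hδ j (g j) (hgm j).restrict ?_
    calc _ ≤ ∫⁻ x, ∑ i ∈ F j, ENNReal.ofReal (d i x) ∂μ := by
          refine lintegral_mono' Measure.restrict_le_self fun x => ?_
          exact (ENNReal.ofReal_sum_of_nonneg fun i _ => hd0 i x).le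
      _ = ∑ i ∈ F j, ∫⁻ x, ENNReal.ofReal (d i x) ∂μ :=
          lintegral_finsetSum' _ fun i _ => (hdm i).ennreal_ofReal
      _ ≤ ∑ i ∈ F j, δ j / ((F j).card + 1) := Finset.sum_le_sum fun i hi =>
          (hdi i).trans (hτδ i j ((hF j i).2 (by rw [inter_comm]; exact (hF i j).1 hi)))
      _ ≤ ((F j).card + 1) * (δ j / ((F j).card + 1)) := by
          rw [Finset.sum_const, nsmul_eq_mul]; gcongr; exact le_self_add
      _ ≤ δ j := ENNReal.mul_div_le
  have hSm : ∀ j, NullMeasurableSet (S j) μ := fun j =>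
    (hK j).measurableSet.nullMeasurableSet.inter
      ((nullMeasurableSet_lt aemeasurable_const (hβm j).aemeasurable).inter
        (nullMeasurableSet_le (hβm j).aemeasurable (hgm j)))
  refine ⟨H, locallyLipschitzOnSet_of_lipAt hHL, ?_, ?_⟩
  · calc _ ≤ ∫⁻ x in K', ∑' i, ENNReal.ofReal (d i x) ∂μ := by
          refine lintegral_mono_ae ((ae_restrict_iff' ?_).2 (Eventually.of_forall fun x hx => ?_))
          · exact IsCompact.measurableSet ‹_›
          · obtain ⟨j, hj, hjK, hjm⟩ := hsup x (hK'W hx)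
            obtain ⟨i, hi⟩ := hz x (hK'W hx)
            have hiK : x ∈ K i := by
              by_contra h
              have := hβ1 i x h; rw [hi] at this; linarith
            have hvi : u i x ≤ H x := by
              refine le_trans (le_max_of_le_right ?_) (hvH i x)
              rw [hi, sub_zero]
            rcases le_total (f x) (H x) with h | h
            · refine le_trans (ENNReal.ofReal_le_ofReal ?_) (ENNReal.le_tsum j)
              rw [hdK j x hjK, abs_of_nonneg (by linarith)]
              have : v j x ≤ u j x := max_le (hu01 j x).1 (by linarith [hβ0 j x])
              linarith [le_abs_self (u j x - f x)]
            · refine le_trans (ENNReal.ofReal_le_ofReal ?_) (ENNReal.le_tsum i)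
              rw [hdK i x hiK, abs_of_nonpos (by linarith)]
              linarith [neg_abs_le (u i x - f x)]
      _ ≤ ∫⁻ x, ∑' i, ENNReal.ofReal (d i x) ∂μ := setLIntegral_le_lintegral _ _
      _ = ∑' i, ∫⁻ x, ENNReal.ofReal (d i x) ∂μ := lintegral_tsum fun i => (hdm i).ennreal_ofReal
      _ ≤ ∑' i, (e i : ℝ≥0∞) := ENNReal.tsum_le_tsum fun i => (hdi i).trans (hτe i)
      _ ≤ ε := hes.le.trans ENNReal.half_le_self
  · set b : J → X → ℝ≥0∞ := fun j x => (K j).indicator (lipConst (u j)) x +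
      (S j).indicator (fun _ => ENNReal.ofReal (l j)) x
    have hlm : ∀ j, AEMeasurable ((K j).indicator (lipConst (u j))) μ := fun j =>
      (aemeasurable_indicator_iff (hK j).measurableSet).2 ((aemeasurable_lipConst (hO j)
        fun x hx => (huL j x hx).continuousAt.continuousWithinAt).mono_measure
        (Measure.restrict_mono (hKO j) le_rfl))
    have hbm : ∀ j, AEMeasurable (b j) μ := fun j =>
      (hlm j).add (aemeasurable_const.indicator₀ (hSm j))
    have hbi : ∀ j, ∫⁻ x, b j x ∂μ ≤ totVarOn μ f (O j) + e j + e j := fun j => by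
      rw [lintegral_add_left' (hlm j), lintegral_indicator (hK j).measurableSet]
      refine add_le_add ((lintegral_mono_set (hKO j)).trans (hue j)) ?_
      exact (lintegral_indicator_const_le _ _).trans
        ((mul_le_mul_right (hS j) _).trans (hηe j))
    have hvu : ∀ j, ∀ᵐ x ∂μ, x ∈ O j → v j x = u j x - β j x →
        lipConst (v j) x = lipConst (fun y => u j y - β j y) x := fun j =>
      ae_lipConst_eq_of_eq (hO j) (fun x _ => hvL j x) fun x hx => (huL j x hx).sub (hβL j x)
    have hvu' : ∀ j, ∀ᵐ x ∂μ, x ∈ O j → v j x = u j x →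
        lipConst (v j) x = lipConst (u j) x := fun j =>
      ae_lipConst_eq_of_eq (hO j) (fun x _ => hvL j x) (huL j)
    have hHv : ∀ j, ∀ᵐ x ∂μ, x ∈ W → H x = v j x → lipConst H x = lipConst (v j) x := fun j =>
      ae_lipConst_eq_of_eq hW hHL fun x _ => hvL j x
    have hH0 : ∀ᵐ x ∂μ, x ∈ W → H x = 0 → lipConst H x = lipConst (fun _ => (0:ℝ)) x :=
      ae_lipConst_eq_of_eq hW hHL fun x _ => lipAt_const 0 x
    calc _ ≤ ∫⁻ x in W, ∑' j, b j x ∂μ := by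
          refine lintegral_mono_ae ((ae_restrict_iff' hW.measurableSet).2 ?_)
          filter_upwards [ae_all_iff.2 hvu, ae_all_iff.2 hvu', ae_all_iff.2 hHv, hH0]
            with x hx1 hx2 hx3 hx4 hxW
          obtain ⟨j, hj, hjK, hjm⟩ := hsup x hxW
          rcases eq_or_lt_of_le (hvnn j x) with h | h
          · rw [hx4 hxW (by rw [hj, h]), lipConst_const]; exact bot_le
          refine le_trans ?_ (ENNReal.le_tsum j)
          have hvx : v j x = u j x - β j x := by
            rcases max_choice 0 (u j x - β j x) with h' | h'
            · exact absurd h' h.ne'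
            · exact h'
          simp only [b]
          rw [indicator_of_mem hjK, hx3 j hxW hj]
          by_cases hb : β j x = 0
          · rw [hx2 j (hKO j hjK) (by rw [hvx, hb, sub_zero])]; exact le_self_add
          have hxS : x ∈ S j := by
            refine ⟨hjK, lt_of_le_of_ne (hβ0 j x) (Ne.symm hb), ?_⟩
            obtain ⟨i, hi⟩ := hz x hxW
            have hiK : x ∈ K i := by
              by_contra h
              have := hβ1 i x h; rw [hi] at this; linarith
            have hij : i ≠ j := fun h => hb (h ▸ hi)
            have hvi : u i x ≤ v j x := by
              refine le_trans (le_max_of_le_right ?_) (hjm i)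
              rw [hi, sub_zero]
            have hsum : d i x + d j x ≤ g j x := by
              rw [← Finset.sum_pair (f := fun i => d i x) hij]
              refine Finset.sum_le_sum_of_subset_of_nonneg ?_ fun k _ _ => hd0 k x
              intro k hk
              rcases Finset.mem_insert.1 hk with rfl | hk
              · exact (hF _ _).2 ⟨x, hiK, hjK⟩
              · rw [Finset.mem_singleton.1 hk]; exact (hF _ _).2 ⟨x, hjK, hjK⟩
            rw [hdK i x hiK, hdK j x hjK] at hsum
            linarith [le_abs_self (u j x - f x), neg_abs_le (u i x - f x)]
          rw [indicator_of_mem hxS, hx1 j (hKO j hjK) hvx]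
          refine lipConst_le_add_mul (hl j) (Eventually.of_forall fun y => ?_)
          rw [sub_sub_sub_comm]
          exact (abs_sub _ _).trans (by gcongr; exact hβl j y x)
      _ ≤ ∫⁻ x, ∑' j, b j x ∂μ := setLIntegral_le_lintegral _ _
      _ = ∑' j, ∫⁻ x, b j x ∂μ := lintegral_tsum hbm
      _ ≤ ∑' j, (totVarOn μ f (O j) + e j + e j) := ENNReal.tsum_le_tsum hbi
      _ = ∑' j, totVarOn μ f (O j) + (∑' j, (e j : ℝ≥0∞) + ∑' j, (e j : ℝ≥0∞)) := by
          rw [ENNReal.tsum_add, ENNReal.tsum_add, add_assoc]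
      _ ≤ ∑' j, totVarOn μ f (O j) + (ε / 2 + ε / 2) := by gcongr
      _ = _ := by rw [ENNReal.add_halves]

end Glue

lemma sum_indicator_le_card {X : Type u} {ι : Type*} (F : Finset ι) (A : ι → Set X) (x : X)
    (G : Finset ι)
    (h : ∀ k ∈ F, x ∈ A k → k ∈ G) :
    ∑ k ∈ F, (A k).indicator (fun _ => (1:ℝ≥0∞)) x ≤ G.card := by
  classical
  calc _ = ∑ k ∈ F with x ∈ A k, (1:ℝ≥0∞) := by
        rw [Finset.sum_filter]
        exact Finset.sum_congr rfl fun k _ => by simp [indicator_apply]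
    _ = ((F.filter fun k => x ∈ A k).card : ℝ≥0∞) := by simp
    _ ≤ _ := by
        gcongr
        intro k hk
        rw [Finset.mem_filter] at hk
        exact h k hk.1 hk.2

section Subadd

variable {X : Type u} [MetricSpace X] [MeasurableSpace X] {μ : Measure X} [BorelSpace X]
  [ProperSpace X] [IsLocallyFiniteMeasure μ] [IsUnifLocDoublingMeasure μ]

/-- Countable quasi-subadditivity of the total variation on open sets. -/
lemma totVarOn_iUnion_le {ι : Type*} [Countable ι] {U : ι → Set X} (hU : ∀ i, IsOpen (U i))
    {f : X → ℝ} (hf : ∀ x, f x ∈ Icc (0:ℝ) 1) (hfm : AEMeasurable f μ) :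
    totVarOn μ f (⋃ i, U i) ≤ 3 * ∑' i, totVarOn μ f (U i) := by
  classical
  have hW : IsOpen (⋃ i, U i) := isOpen_iUnion hU
  obtain ⟨P, hP, hPi, hPW, hPx⟩ := exists_compact_exhaustion hW
  let Q : ℕ → Set X := fun n => if n < 2 then ∅ else P (n - 2)
  have hQ : ∀ n, IsCompact (Q n) := fun n => by
    simp only [Q]; split_ifs
    exacts [isCompact_empty, hP _]
  have hQi : ∀ n, Q n ⊆ interior (Q (n + 1)) := fun n => by
    by_cases h : n < 2
    · simp only [Q, h, if_true]; exact empty_subset _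
    · simp only [Q, h, if_false, show ¬ n + 1 < 2 by omega, show n + 1 - 2 = n - 2 + 1 by omega]
      exact hPi _
  have hQm : Monotone Q := exhaustion_mono hQi
  have hQW : ∀ n, Q n ⊆ ⋃ i, U i := fun n => by
    simp only [Q]; split_ifs
    exacts [empty_subset _, hPW _]
  have hQx : ∀ L, IsCompact L → L ⊆ ⋃ i, U i → ∃ n, L ⊆ Q n := fun L h1 h2 => by
    obtain ⟨n, hn⟩ := hPx L h1 h2
    exact ⟨n + 2, by simpa [Q] using hn⟩
  let A : ℕ → Set X := fun k => interior (Q (k + 3)) \ Q k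
  have hA : ∀ k, IsOpen (A k) := fun k => isOpen_interior.sdiff (hQ k).isClosed
  let c : ℕ → Set X := fun k => Q (k + 2) \ interior (Q (k + 1))
  have hc : ∀ k, IsCompact (c k) := fun k => (hQ _).diff isOpen_interior
  have hcA : ∀ k, c k ⊆ A k := fun k x hx =>
    ⟨hQi _ hx.1, fun h => hx.2 (hQi k h)⟩
  have hcW : ∀ k, c k ⊆ ⋃ i, U i := fun k x hx => hQW _ hx.1
  choose t ht using fun k => (hc k).elim_finite_subcover U hU (hcW k)
  choose C hC hCU hCc using fun k => (hc k).finite_compact_cover (t k) (fun i => A k ∩ U i)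
    (fun i _ => (hA k).inter (hU i)) fun x hx => by
      obtain ⟨i, hi, hxi⟩ := mem_iUnion₂.1 (ht k hx)
      exact mem_iUnion₂.2 ⟨i, hi, hcA k hx, hxi⟩
  let O : ℕ × ι → Set X := fun j => if j.2 ∈ t j.1 then A j.1 ∩ U j.2 else ∅
  have hOA : ∀ j, O j ⊆ A j.1 ∩ U j.2 := fun j => by
    simp only [O]; split_ifs
    exacts [subset_rfl, empty_subset _]
  have hO : ∀ j, IsOpen (O j) := fun j => by
    simp only [O]; split_ifs
    exacts [(hA _).inter (hU _), isOpen_empty]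
  have hb : ∀ j : ℕ × ι, ∃ (β : X → ℝ) (l : ℝ) (K : Set X), 0 ≤ l ∧
      (∀ y z, |β y - β z| ≤ l * dist y z) ∧ (∀ x, 0 ≤ β x) ∧
      (∀ x ∈ C j.1 j.2, j.2 ∈ t j.1 → β x = 0) ∧ (∀ x ∉ K, 1 ≤ β x) ∧ IsCompact K ∧
      K ⊆ O j := fun j => by
    by_cases h : j.2 ∈ t j.1
    · obtain ⟨β, l, K, h1, h2, h3, h4, h5, h6, _, h8⟩ := exists_bump (hC j.1 j.2) (hO j)
        (by simp only [O, h, if_true]; exact hCU j.1 j.2)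
      exact ⟨β, l, K, h1, h2, h3, fun x hx _ => h4 x hx, h5, h6, h8⟩
    · exact ⟨fun _ => 1, 0, ∅, le_rfl, by simp, by simp, fun x _ h' => absurd h' h, by simp,
        isCompact_empty, empty_subset _⟩
  choose β l K hl hβl hβ0 hβz hβ1 hK hKO using hb
  have hAW : ∀ k, A k ⊆ ⋃ i, U i := fun k x hx => hQW _ (interior_subset hx.1)
  have hfirst : ∀ x ∈ ⋃ i, U i, ∃ k, x ∈ c k ∧ ∀ m, x ∈ Q m ↔ k + 2 ≤ m := fun x hx => by
    have hex : ∃ n, x ∈ Q n := by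
      obtain ⟨n, hn⟩ := hQx {x} isCompact_singleton (by simpa using hx)
      exact ⟨n, hn rfl⟩
    have h2 : 2 ≤ Nat.find hex := by
      by_contra h
      have := Nat.find_spec hex
      simp only [Q, not_le.1 h, if_true] at this
      exact this
    obtain ⟨k, hk⟩ := Nat.exists_eq_add_of_le' h2
    have hm : ∀ m, x ∈ Q m ↔ k + 2 ≤ m := fun m => by
      rw [← hk]
      exact ⟨fun h => Nat.find_min' hex h, fun h => hQm h (Nat.find_spec hex)⟩
    refine ⟨k, ⟨(hm _).2 le_rfl, fun h => ?_⟩, hm⟩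
    have := (hm _).1 (interior_subset h)
    omega
  refine (totVarOn_le_tsum_of_bumps hW hO hK hKO
    (fun j => (hKO j).trans ((hOA j).trans (inter_subset_left.trans (hAW _)))) hl hβl hβ0 hβ1
    (fun x hx => ?_) (fun L hL hLW => ?_) hf hfm).trans ?_
  · obtain ⟨k, hk, _⟩ := hfirst x hx
    have h' := hk
    rw [hCc k] at h'
    obtain ⟨i, hi, hxi⟩ := mem_iUnion₂.1 h'
    exact ⟨(k, i), hβz (k, i) x hxi hi⟩
  · obtain ⟨n, hn⟩ := hQx L hL hLW
    refine (((Finset.range n).sigma fun k => t k).finite_toSet.image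
      (fun p : (_ : ℕ) × ι => (p.1, p.2))).subset ?_
    rintro ⟨k, i⟩ ⟨x, hxK, hxL⟩
    have hxO := hKO _ hxK
    have hit : i ∈ t k := by
      by_contra h
      simp only [O, h, if_false] at hxO
      exact hxO
    refine ⟨⟨k, i⟩, ?_, rfl⟩
    simp only [Finset.coe_sigma, Set.mem_sigma_iff, Finset.mem_coe, Finset.mem_range]
    refine ⟨?_, hit⟩
    by_contra h
    exact ((hOA _ hxO).1).2 (hQm (not_lt.1 h) (hn hxL))
  · rw [ENNReal.tsum_prod', ENNReal.tsum_comm, ← ENNReal.tsum_mul_left]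
    refine ENNReal.tsum_le_tsum fun i => ?_
    rw [ENNReal.tsum_eq_iSup_sum]
    refine iSup_le fun F => ?_
    have := sum_totVarOn_le (μ := μ) (f := f) (hU i) F (fun k => O (k, i)) (fun k _ => hO _)
      (fun k _ => (hOA _).trans inter_subset_right) (m := 3) (by norm_num) fun x => ?_
    · exact_mod_cast this
    by_cases hx : x ∈ ⋃ i, U i
    · obtain ⟨k, -, hk⟩ := hfirst x hx
      refine (sum_indicator_le_card F _ x (Finset.Icc (k - 1) (k + 1)) fun m _ hm => ?_).trans ?_
      · have h1 := ((hOA _) hm).1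
        have h2 := (hk _).1 (interior_subset h1.1)
        have h3 := mt (hk m).2 h1.2
        simp only [Finset.mem_Icc]; omega
      · rw [Nat.card_Icc]; norm_cast; omega
    · refine (sum_indicator_le_card F _ x ∅ fun m _ hm => ?_).trans (by simp)
      exact absurd (mem_iUnion.2 ⟨i, ((hOA _) hm).2⟩) hx

/-- A countable union of null sets of the variation is null. -/
lemma totVarSet_iUnion_eq_zero {ι : Type*} [Countable ι] {N : ι → Set X}
    {f : X → ℝ} (hf : ∀ x, f x ∈ Icc (0:ℝ) 1) (hfm : AEMeasurable f μ)
    (hN : ∀ i, totVarSet μ f (N i) = 0) : totVarSet μ f (⋃ i, N i) = 0 := by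
  refine le_antisymm (ENNReal.le_of_forall_pos_le_add fun ε hε _ => ?_) bot_le
  rw [zero_add]
  obtain ⟨e, he, hes⟩ := ENNReal.exists_pos_sum_of_countable
    (ENNReal.div_pos (show (ε:ℝ≥0∞) ≠ 0 by exact_mod_cast hε.ne')
      (by finiteness : (3:ℝ≥0∞) ≠ ⊤)).ne' ι
  have h : ∀ i, ∃ W, IsOpen W ∧ N i ⊆ W ∧ totVarOn μ f W ≤ e i := fun i => by
    have h0 : totVarSet μ f (N i) < e i := by rw [hN i]; exact_mod_cast he i
    simp only [totVarSet, iInf_lt_iff] at h0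
    obtain ⟨W, h1, h2, h3⟩ := h0
    exact ⟨W, h1, h2, h3.le⟩
  choose W hW hNW hWe using h
  calc _ ≤ totVarOn μ f (⋃ i, W i) :=
        iInf_le_of_le _ (iInf₂_le (isOpen_iUnion hW) (iUnion_mono hNW))
    _ ≤ 3 * ∑' i, totVarOn μ f (W i) := totVarOn_iUnion_le hW hf hfm
    _ ≤ 3 * (ε / 3) := by
        gcongr
        exact (ENNReal.tsum_le_tsum hWe).trans hes.le
    _ ≤ ε := ENNReal.mul_div_le

end Subadd

lemma exists_disjoint_balls_covering {X : Type u} [MetricSpace X] [ProperSpace X] {A : Set X}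
    {r : X → ℝ} {R : ℝ}
    (hr0 : ∀ x ∈ A, 0 < r x) (hr : ∀ x ∈ A, r x ≤ R) :
    ∃ t ⊆ A, t.Countable ∧ t.PairwiseDisjoint (fun x => closedBall x (r x)) ∧
      A ⊆ ⋃ b ∈ t, ball b (6 * r b) := by
  obtain ⟨t, htA, htd, htc⟩ := Vitali.exists_disjoint_subfamily_covering_enlargement_closedBall
    A id r R hr 5 (by norm_num)
  refine ⟨t, htA, ?_, htd, fun x hx => ?_⟩
  · refine htd.countable_of_nonempty_interior fun x hx => ⟨x, ?_⟩
    exact ball_subset_interior_closedBall (mem_ball_self (hr0 x (htA hx)))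
  · obtain ⟨b, hb, hsub⟩ := htc x hx
    refine mem_iUnion₂.2 ⟨b, hb, ?_⟩
    have hxb := hsub (mem_closedBall_self (hr0 x hx).le)
    rw [id, id, mem_closedBall] at hxb
    rw [mem_ball]
    linarith [hr0 b (htA hb)]

section Competitors

variable {X : Type u} [MetricSpace X] [MeasurableSpace X] {μ : Measure X} [BorelSpace X]
  [ProperSpace X]

variable [IsLocallyFiniteMeasure μ] [IsUnifLocDoublingMeasure μ]

lemma totVarSet_le_of_covering {f : X → ℝ} (hf : ∀ x, f x ∈ Icc (0:ℝ) 1) (hfm : AEMeasurable f μ)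
    {A t : Set X} {r : X → ℝ} (ht : t.Countable) (hA : A ⊆ ⋃ b ∈ t, ball b (6 * r b)) :
    totVarSet μ f A ≤ 3 * ∑' b : t, totVarOn μ f (ball (b : X) (6 * r b)) := by
  have : Countable t := ht.to_subtype
  rw [biUnion_eq_iUnion] at hA
  calc _ ≤ totVarOn μ f (⋃ b : t, ball (b : X) (6 * r b)) :=
        iInf_le_of_le _ (iInf₂_le (isOpen_iUnion fun _ => isOpen_ball) hA)
    _ ≤ _ := totVarOn_iUnion_le (fun _ => isOpen_ball) hf hfm

/-- Points at which the variation has vanishing density form a null set of the variation. -/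
lemma totVarSet_eq_zero_of_density {f : X → ℝ} (hf : ∀ x, f x ∈ Icc (0:ℝ) 1)
    (hfm : AEMeasurable f μ) {A : Set X} {x₀ : X} {R : ℝ} (hAR : A ⊆ ball x₀ R)
    (h : ∀ x ∈ A, ∀ η : ℝ≥0∞, η ≠ 0 → ∃ r, 0 < r ∧ r < 1 ∧
      totVarOn μ f (ball x (6 * r)) ≤ η * μ (ball x r)) : totVarSet μ f A = 0 := by
  have hB : μ (ball x₀ (R + 1)) ≠ ⊤ := measure_ball_lt_top.ne
  have key : ∀ η : ℝ≥0∞, η ≠ 0 → totVarSet μ f A ≤ 3 * (η * μ (ball x₀ (R + 1))) := by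
    intro η hη
    choose! r hr0 hr1 hr using fun x hx => h x hx η hη
    obtain ⟨t, htA, htc, htd, hcov⟩ := exists_disjoint_balls_covering hr0 fun x hx => (hr1 x hx).le
    have : Countable t := htc.to_subtype
    refine (totVarSet_le_of_covering hf hfm htc hcov).trans ?_
    gcongr
    calc _ ≤ ∑' b : t, η * μ (ball (b : X) (r b)) :=
          ENNReal.tsum_le_tsum fun b => hr b (htA b.2)
      _ = η * μ (⋃ b : t, ball (b : X) (r b)) := by
          rw [ENNReal.tsum_mul_left, measure_iUnion (fun a b hab => ?_) fun b => measurableSet_ball]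
          exact (htd a.2 b.2 fun h => hab (Subtype.ext h)).mono ball_subset_closedBall
            ball_subset_closedBall
      _ ≤ _ := by
          gcongr
          refine iUnion_subset fun b y hy => ?_
          have h1 := hAR (htA b.2)
          rw [mem_ball] at h1 hy ⊢
          linarith [dist_triangle y b x₀, hr1 b (htA b.2)]
  refine le_antisymm (ENNReal.le_of_forall_pos_le_add fun ε hε _ => ?_) bot_le
  rw [zero_add]
  refine (key (ε / (3 * (μ (ball x₀ (R + 1)) + 1))) ?_).trans ?_
  · exact ENNReal.div_ne_zero.2 ⟨by exact_mod_cast hε.ne', by finiteness⟩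
  · calc _ ≤ (3 * (μ (ball x₀ (R + 1)) + 1)) * (ε / (3 * (μ (ball x₀ (R + 1)) + 1))) := by
          rw [← mul_assoc, mul_right_comm]
          gcongr; exact le_self_add
      _ ≤ ε := ENNReal.mul_div_le

/-- If energy can be saved in arbitrarily small balls around the points of `A`, by a fixed
proportion, then `A` is a null set of the variation. -/
lemma totVarSet_eq_zero_of_competitors {f : X → ℝ} (hf : ∀ x, f x ∈ Icc (0:ℝ) 1)
    (hfm : AEMeasurable f μ) (hV : totVarOn μ f univ < ⊤) {A : Set X} {c C : ℝ≥0∞} (hc : c ≠ 0)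
    (hC : C ≠ ⊤)
    (h : ∀ x ∈ A, ∀ δ : ℝ, 0 < δ → ∃ (r : ℝ) (w : X → ℝ) (K : Set X), 0 < r ∧ r < δ ∧
      (∀ y, w y ∈ Icc (0:ℝ) 1) ∧ AEMeasurable w μ ∧ IsCompact K ∧ K ⊆ ball x r ∧
      (∀ y ∉ K, w y = f y) ∧
      totVarOn μ w (ball x r) + c * totVarOn μ f (ball x (6 * r)) ≤ totVarOn μ f (ball x r) ∧
      ∫⁻ y, ENNReal.ofReal |w y - f y| ∂μ ≤
        C * ENNReal.ofReal r * totVarOn μ f (ball x (6 * r))) :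
    totVarSet μ f A = 0 := by
  by_contra hs
  set s := totVarSet μ f A
  have hVW : ∀ W, totVarOn μ f W ≠ ⊤ := fun W =>
    ((totVarOn_mono (subset_univ W)).trans_lt hV).ne
  have hst : s ≠ ⊤ := ((iInf_le_of_le univ (iInf₂_le isOpen_univ (subset_univ A))).trans_lt hV).ne
  have key : ∀ δ : ℝ, 0 < δ → ∃ w : X → ℝ, AEMeasurable w μ ∧
      totVarOn μ w univ + c * (s / 6) ≤ totVarOn μ f univ ∧
      c * ∫⁻ y, ENNReal.ofReal |w y - f y| ∂μ ≤ C * ENNReal.ofReal δ * totVarOn μ f univ := by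
    intro δ hδ
    choose! r w K hr0 hrδ hw01 hwm hK hKr hwf hwV hwI using fun x hx => h x hx δ hδ
    obtain ⟨t, htA, htc, htd, hcov⟩ := exists_disjoint_balls_covering hr0 fun x hx => (hrδ x hx).le
    have hlt : s / 6 < ∑' b : t, totVarOn μ f (ball (b : X) (6 * r b)) := by
      have h1 := totVarSet_le_of_covering hf hfm htc hcov
      by_contra hle
      rw [not_lt] at hle
      have h2 : s ≤ s / 2 := by
        calc s ≤ 3 * (s / 6) := h1.trans (by gcongr)
          _ = s / 2 := by
            rw [← mul_div_assoc, mul_comm, show (6:ℝ≥0∞) = 2 * 3 by norm_num]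
            exact ENNReal.mul_div_mul_right _ _ (by norm_num) (by norm_num)
      exact absurd h2 (not_le.2 (ENNReal.half_lt_self hs hst))
    rw [ENNReal.tsum_eq_iSup_sum] at hlt
    obtain ⟨F, hF⟩ := lt_iSup_iff.1 hlt
    have hdisj : ∀ a b : t, a ≠ b →
        Disjoint (closedBall (a : X) (r a)) (closedBall (b : X) (r b)) :=
      fun a b hab => htd a.2 b.2 fun h => hab (Subtype.ext h)
    have hsum : c * ∑ b ∈ F, totVarOn μ f (ball (b : X) (6 * r b)) ≤ totVarOn μ f univ := by
      rw [Finset.mul_sum]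
      refine (Finset.sum_le_sum fun (b : t) _ => le_add_self.trans (hwV b (htA b.2))).trans ?_
      refine (sum_totVarOn_le isOpen_univ F (fun b : t => ball (b : X) (r b))
        (fun _ _ => isOpen_ball) (fun _ _ => subset_univ _) (m := 1) one_ne_zero fun x => ?_).trans
        (by simp)
      by_cases hx : ∃ b : t, x ∈ ball (b : X) (r b)
      · obtain ⟨b, hb⟩ := hx
        refine (sum_indicator_le_card F _ x {b} fun k _ hk => ?_).trans (by simp)
        rw [Finset.mem_singleton]
        by_contra hkb
        exact (hdisj k b hkb).ne_of_mem (ball_subset_closedBall hk) (ball_subset_closedBall hb) rfl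
      · exact (sum_indicator_le_card F _ x ∅ fun k _ hk => absurd ⟨k, hk⟩ hx).trans (by simp)
    have hind : ∀ G : Finset t, ∃ v : X → ℝ, (∀ y, v y ∈ Icc (0:ℝ) 1) ∧ AEMeasurable v μ ∧
        (∀ y, (∀ b ∈ G, y ∉ K b) → v y = f y) ∧
        totVarOn μ v univ + c * ∑ b ∈ G, totVarOn μ f (ball (b : X) (6 * r b)) ≤
          totVarOn μ f univ ∧
        ∫⁻ y, ENNReal.ofReal |v y - f y| ∂μ ≤
          C * ENNReal.ofReal δ * ∑ b ∈ G, totVarOn μ f (ball (b : X) (6 * r b)) := by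
      classical
      intro G
      induction G using Finset.induction_on with
      | empty => exact ⟨f, hf, hfm, fun _ _ => rfl, by simp, by simp⟩
      | insert b G hbG ih =>
        obtain ⟨v, hv01, hvm, hvf, hvV, hvI⟩ := ih
        have hb := htA b.2
        have hvb : ∀ y ∈ ball (b : X) (r b), v y = f y := fun y hy => hvf y fun a ha hya => by
          refine (hdisj a b fun h => hbG (h ▸ ha)).ne_of_mem ?_ (ball_subset_closedBall hy) rfl
          exact ball_subset_closedBall (hKr a (htA a.2) hya)
        set v' : X → ℝ := fun y => v y + (w b y - f y)
        have hv'1 : ∀ y ∉ K b, v' y = v y := fun y hy => by simp [v', hwf b hb y hy]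
        have hv'2 : ∀ y ∈ ball (b : X) (r b), v' y = w b y := fun y hy => by simp [v', hvb y hy]
        have hv'01 : ∀ y, v' y ∈ Icc (0:ℝ) 1 := fun y => by
          by_cases hy : y ∈ K b
          · rw [hv'2 y (hKr b hb hy)]; exact hw01 b hb y
          · rw [hv'1 y hy]; exact hv01 y
        have hv'm : AEMeasurable v' μ := hvm.add ((hwm b hb).sub hfm)
        refine ⟨v', hv'01, hv'm, fun y hy => ?_, ?_, ?_⟩
        · rw [hv'1 y (hy b (Finset.mem_insert_self _ _)),
            hvf y fun a ha => hy a (Finset.mem_insert_of_mem ha)]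
        · have hsw := totVarOn_swap (μ := μ) isOpen_ball (hK b hb) (hKr b hb) hv01 hv'01 hvm hv'm
            fun y hy => (hv'1 y hy).symm
          rw [totVarOn_congr hvb, totVarOn_congr hv'2] at hsw
          rw [Finset.sum_insert hbG, mul_add]
          refine (ENNReal.add_le_add_iff_right (hVW (ball (b : X) (r b)))).1 ?_
          calc _ = (totVarOn μ v' univ + totVarOn μ f (ball (b : X) (r b))) +
                c * totVarOn μ f (ball (b : X) (6 * r b)) +
                c * ∑ b ∈ G, totVarOn μ f (ball (b : X) (6 * r b)) := by ring
            _ ≤ (totVarOn μ v univ + totVarOn μ (w b) (ball (b : X) (r b))) +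
                c * totVarOn μ f (ball (b : X) (6 * r b)) +
                c * ∑ b ∈ G, totVarOn μ f (ball (b : X) (6 * r b)) := by gcongr
            _ = (totVarOn μ v univ + c * ∑ b ∈ G, totVarOn μ f (ball (b : X) (6 * r b))) +
                (totVarOn μ (w b) (ball (b : X) (r b)) +
                c * totVarOn μ f (ball (b : X) (6 * r b))) := by ring
            _ ≤ _ := add_le_add hvV (hwV b hb)
        · have hmm : AEMeasurable (fun y => ENNReal.ofReal |v y - f y|) μ := by fun_prop
          rw [Finset.sum_insert hbG, mul_add, add_comm]
          calc _ ≤ ∫⁻ y, (ENNReal.ofReal |v y - f y| + ENNReal.ofReal |w b y - f y|) ∂μ := by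
                refine lintegral_mono fun y => ?_
                rw [← ENNReal.ofReal_add (abs_nonneg _) (abs_nonneg _)]
                refine ENNReal.ofReal_le_ofReal ?_
                rw [show v' y - f y = (v y - f y) + (w b y - f y) by simp only [v']; ring]
                exact abs_add_le _ _
            _ = _ := lintegral_add_left' hmm _
            _ ≤ _ := by
              refine add_le_add hvI ((hwI b hb).trans ?_)
              gcongr
              exact (hrδ b hb).le
    obtain ⟨v, -, hvm, -, hvV, hvI⟩ := hind F
    refine ⟨v, hvm, le_trans (by gcongr) hvV, ?_⟩
    calc _ ≤ c * (C * ENNReal.ofReal δ * ∑ b ∈ F, totVarOn μ f (ball (b : X) (6 * r b))) := by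
          gcongr
      _ = C * ENNReal.ofReal δ * (c * ∑ b ∈ F, totVarOn μ f (ball (b : X) (6 * r b))) := by ring
      _ ≤ _ := by gcongr
  set m := min c 1
  have hm0 : m ≠ 0 := by simp [m, hc]
  have hmt : m ≠ ⊤ := ((min_le_right c 1).trans_lt ENNReal.one_lt_top).ne
  have hlsc : totVarOn μ f univ ≤ totVarOn μ f univ - m * (s / 6) := by
    refine totVarOn_le_of_approx_totVarOn isOpen_univ fun K _ _ ε hε => ?_
    have hp : 0 < m * min ε 1 / (C * totVarOn μ f univ + 1) :=
      ENNReal.div_pos (mul_ne_zero hm0 (by simp [hε.ne']))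
        (ENNReal.add_ne_top.2 ⟨ENNReal.mul_ne_top hC hV.ne, ENNReal.one_ne_top⟩)
    have hpt : m * min ε 1 / (C * totVarOn μ f univ + 1) ≠ ⊤ :=
      ENNReal.div_ne_top (ENNReal.mul_ne_top hmt
        ((min_le_right ε 1).trans_lt ENNReal.one_lt_top).ne)
        (by simp)
    obtain ⟨w, hwm, hwV, hwI⟩ := key _ (ENNReal.toReal_pos hp.ne' hpt)
    rw [ENNReal.ofReal_toReal hpt] at hwI
    refine ⟨w, hwm, ?_, ?_⟩
    · refine (setLIntegral_le_lintegral _ _).trans ?_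
      refine (ENNReal.mul_le_mul_iff_right hm0 hmt).1 ?_
      calc _ ≤ c * ∫⁻ y, ENNReal.ofReal |w y - f y| ∂μ := by gcongr; exact min_le_left _ _
        _ ≤ _ := hwI
        _ ≤ (C * totVarOn μ f univ + 1) * (m * min ε 1 / (C * totVarOn μ f univ + 1)) := by
          rw [mul_right_comm]; gcongr; exact le_self_add
        _ ≤ m * min ε 1 := ENNReal.mul_div_le
        _ ≤ m * ε := by gcongr; exact min_le_left _ _
    · refine le_trans (ENNReal.le_sub_of_add_le_right ?_ (le_trans ?_ hwV)) le_self_add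
      · exact ENNReal.mul_ne_top hmt (ENNReal.div_ne_top hst (by norm_num))
      · gcongr; exact min_le_left _ _
  have h6 : m * (s / 6) ≠ 0 := mul_ne_zero hm0 (ENNReal.div_ne_zero.2 ⟨hs, by norm_num⟩)
  by_cases hV0 : totVarOn μ f univ = 0
  · exact hs (le_antisymm ((iInf_le_of_le univ (iInf₂_le isOpen_univ (subset_univ A))).trans hV0.le)
      bot_le)
  · exact absurd hlsc (not_le.2 (ENNReal.sub_lt_self hV.ne hV0 h6))

/-- Cutting `f` down to zero on a ball. -/
lemma exists_cut {f : X → ℝ} (hf : ∀ x, f x ∈ Icc (0:ℝ) 1) (hfm : AEMeasurable f μ) {E : Set X}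
    (hfE : ∀ x ∉ E, f x = 0) (x : X) {ρ : ℝ} (hρ : 0 < ρ)
    (hV : totVarOn μ f (ball x (2 * ρ)) < ⊤) :
    ∃ w : X → ℝ, (∀ y, w y ∈ Icc (0:ℝ) 1) ∧ AEMeasurable w μ ∧
      (∀ y ∉ closedBall x (3 / 2 * ρ), w y = f y) ∧
      totVarOn μ w (ball x (2 * ρ)) + totVarOn μ f (ball x ρ) ≤ totVarOn μ f (ball x (2 * ρ)) +
        ENNReal.ofReal (2 / ρ) * μ (E ∩ ball x (2 * ρ)) ∧
      ∫⁻ y, ENNReal.ofReal |w y - f y| ∂μ ≤ μ (E ∩ ball x (2 * ρ)) := by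
  set ζ : X → ℝ := fun y => 2 / ρ * max 0 (dist y x - ρ)
  have hl : 0 ≤ 2 / ρ := by positivity
  have hζ0 : ∀ y, 0 ≤ ζ y := fun y => by positivity
  have hζl : ∀ y z, |ζ y - ζ z| ≤ 2 / ρ * dist y z := fun y z => by
    simp only [ζ]
    rw [← mul_sub, abs_mul, abs_of_nonneg hl]
    gcongr
    refine (abs_max_sub_max_le_max _ _ _ _).trans (max_le (by simp) ?_)
    rw [sub_sub_sub_cancel_right]
    exact abs_dist_sub_le y z x
  have hζz : ∀ y ∈ ball x ρ, ζ y = 0 := fun y hy => by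
    rw [mem_ball] at hy
    simp only [ζ]; rw [max_eq_left (by linarith), mul_zero]
  have hζ1 : ∀ y ∉ closedBall x (3 / 2 * ρ), 1 ≤ ζ y := fun y hy => by
    rw [mem_closedBall, not_le] at hy
    calc (1:ℝ) = 2 / ρ * (ρ / 2) := by field_simp
      _ ≤ 2 / ρ * max 0 (dist y x - ρ) := by gcongr; exact le_max_of_le_right (by linarith)
  have hζL : ∀ y, LipAt ζ y := lipAt_of_lipschitz hl hζl
  have hζm : Measurable ζ :=
    (continuous_iff_continuousAt.2 fun x => (hζL x).continuousAt).measurable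
  have hKU : closedBall x (3 / 2 * ρ) ⊆ ball x (2 * ρ) := closedBall_subset_ball (by linarith)
  have hUU : ball x ρ ⊆ ball x (2 * ρ) := ball_subset_ball (by linarith)
  have hwf : ∀ y ∉ closedBall x (3 / 2 * ρ), min (f y) (ζ y) = f y := fun y hy =>
    min_eq_left ((hf y).2.trans (hζ1 y hy))
  refine ⟨fun y => min (f y) (ζ y), fun y =>
    ⟨le_min (hf y).1 (hζ0 y), (min_le_left _ _).trans (hf y).2⟩,
    hfm.min hζm.aemeasurable, hwf, ?_, ?_⟩
  · obtain ⟨u, hu, hu01, hut, hul⟩ := exists_optimal_seq_mem isOpen_ball hV hf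
    set S : ℕ → Set X := fun i => closedBall x (3 / 2 * ρ) ∩ {y | 0 < ζ y ∧ ζ y ≤ |u i y - f y|}
    have hK : IsCompact (closedBall x (3 / 2 * ρ)) := isCompact_closedBall _ _
    have hS : Tendsto (fun i => μ (S i)) atTop (𝓝 0) := by
      refine tendsto_measure_pos_le hK.measure_lt_top.ne hK.measurableSet hζm (fun i => ?_)
        (hut _ hK.isClosed hK.isBounded hKU)
      have h1 := (aemeasurable_of_lipAt (μ := μ) isOpen_ball (hu i)).mono_measure
        (Measure.restrict_mono hKU le_rfl)
      have h2 := hfm.restrict (s := closedBall x (3 / 2 * ρ))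
      fun_prop
    have hgL : ∀ i, ∀ y ∈ ball x (2 * ρ), LipAt (fun y => min (u i y) (ζ y)) y := fun i y hy =>
      (hu i y hy).min (hζL y)
    have hgt : TendstoL1loc μ (fun i y => min (u i y) (ζ y)) (fun y => min (f y) (ζ y))
        (ball x (2 * ρ)) := fun K a b c => by
      refine tendsto_of_tendsto_of_tendsto_of_le_of_le tendsto_const_nhds (hut K a b c)
        (fun _ => bot_le) fun i => lintegral_mono fun y => ENNReal.ofReal_le_ofReal ?_
      exact (abs_min_sub_min_le_max _ _ _ _).trans (by simp)
    have hen : ∀ i, ∫⁻ y in ball x (2 * ρ), lipConst (fun y => min (u i y) (ζ y)) y ∂μ +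
        ∫⁻ y in ball x ρ, lipConst (u i) y ∂μ ≤ ∫⁻ y in ball x (2 * ρ), lipConst (u i) y ∂μ +
          ENNReal.ofReal (2 / ρ) * (μ (E ∩ ball x (2 * ρ)) + μ (S i)) := fun i => by
      have hmL : AEMeasurable (lipConst (u i)) (μ.restrict (ball x (2 * ρ))) :=
        aemeasurable_lipConst isOpen_ball fun x hx => (hu i x hx).continuousAt.continuousWithinAt
      have e1 : ∫⁻ y in ball x ρ, lipConst (u i) y ∂μ =
          ∫⁻ y in ball x (2 * ρ), (ball x ρ).indicator (lipConst (u i)) y ∂μ := by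
        rw [lintegral_indicator measurableSet_ball, Measure.restrict_restrict measurableSet_ball,
          inter_eq_left.2 hUU]
      rw [e1]
      calc _ ≤ ∫⁻ y in ball x (2 * ρ), (lipConst (fun y => min (u i y) (ζ y)) y +
            (ball x ρ).indicator (lipConst (u i)) y) ∂μ := le_lintegral_add _ _
        _ ≤ ∫⁻ y in ball x (2 * ρ), (lipConst (u i) y +
            ((E ∩ ball x (2 * ρ)) ∪ S i).indicator (fun _ => ENNReal.ofReal (2 / ρ)) y) ∂μ := by
          refine lintegral_mono_ae ((ae_restrict_iff' measurableSet_ball).2 ?_)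
          filter_upwards [ae_lipConst_eq_of_eq (μ := μ) isOpen_ball (hgL i) (hu i),
            ae_lipConst_eq_of_eq (μ := μ) isOpen_ball (hgL i) (fun y _ => hζL y),
            ae_lipConst_eq_of_eq (μ := μ) isOpen_ball (hgL i) (fun y _ => lipAt_const 0 y)]
            with y h1 h2 h3 hy
          by_cases hyz : ζ y = 0
          · rw [h3 hy (by rw [hyz]; exact min_eq_right (hu01 i y).1), lipConst_const, zero_add]
            exact (indicator_le_self _ _ _).trans le_self_add
          rw [indicator_of_notMem (s := ball x ρ) (fun h => hyz (hζz y h)), add_zero]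
          rcases le_or_gt (u i y) (ζ y) with h | h
          · rw [h1 hy (min_eq_left h)]; exact le_self_add
          rw [h2 hy (min_eq_right h.le), indicator_of_mem]
          · exact (lipConst_le_of_lip hl (Eventually.of_forall fun z => hζl z y)).trans le_add_self
          · by_cases hyE : y ∈ E
            · exact Or.inl ⟨hyE, hy⟩
            · refine Or.inr ⟨?_, lt_of_le_of_ne (hζ0 y) (Ne.symm hyz), ?_⟩
              · by_contra hn
                linarith [hζ1 y hn, (hu01 i y).2]
              · rw [hfE y hyE, sub_zero]; exact h.le.trans (le_abs_self _)
        _ = _ + ∫⁻ y in ball x (2 * ρ), ((E ∩ ball x (2 * ρ)) ∪ S i).indicator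
              (fun _ => ENNReal.ofReal (2 / ρ)) y ∂μ := lintegral_add_left' hmL _
        _ ≤ _ := by
          refine add_le_add le_rfl ((lintegral_indicator_const_le _ _).trans ?_)
          gcongr
          exact (Measure.restrict_le_self _).trans (measure_union_le _ _)
    calc _ ≤ _ := add_le_add
          (totVarOn_le_liminf (fun i => locallyLipschitzOnSet_of_lipAt (hgL i)) hgt)
          (totVarOn_le_liminf (us := u)
            (fun i => locallyLipschitzOnSet_of_lipAt fun y hy => hu i y (hUU hy))
            fun K a b c => hut K a b (c.trans hUU))
      _ ≤ _ := add_liminf_le_liminf_add _ _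
      _ ≤ _ := liminf_le_liminf (Eventually.of_forall hen)
      _ = totVarOn μ f (ball x (2 * ρ)) +
          ENNReal.ofReal (2 / ρ) * (μ (E ∩ ball x (2 * ρ)) + 0) :=
          (hul.add (ENNReal.Tendsto.const_mul (tendsto_const_nhds.add hS)
            (Or.inr ENNReal.ofReal_ne_top))).liminf_eq
      _ = _ := by rw [add_zero]
  · calc _ ≤ ∫⁻ y, (E ∩ ball x (2 * ρ)).indicator (fun _ => 1) y ∂μ := by
          refine lintegral_mono fun y => ?_
          by_cases hy : y ∈ E ∩ ball x (2 * ρ)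
          · rw [indicator_of_mem hy, ← ENNReal.ofReal_one]
            refine ENNReal.ofReal_le_ofReal ?_
            have h1 := hf y
            have h2 := le_min h1.1 (hζ0 y)
            have h3 := min_le_left (f y) (ζ y)
            rw [abs_le]; constructor <;> linarith [h1.1, h1.2]
          · rw [indicator_of_notMem hy]
            have : min (f y) (ζ y) = f y := by
              by_cases hE : y ∈ E
              · exact hwf y fun h => hy ⟨hE, hKU h⟩
              · rw [hfE y hE]; exact min_eq_left (hζ0 y)
            simp [this]
      _ ≤ _ := (lintegral_indicator_const_le _ _).trans (by simp)

end Competitors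

section UpperGradient

variable {X : Type u} [PseudoMetricSpace X]

lemma ofReal_abs_deriv_le_lipConst {v : X → ℝ} {γ : ℝ → X} {L t h' : ℝ}
    (hγ : LipschitzOnWith 1 γ (Icc 0 L)) (ht : t ∈ Ioo 0 L)
    (hd : HasDerivAt (fun s => v (γ s)) h' t) : ENNReal.ofReal |h'| ≤ lipConst v (γ t) := by
  have hk : HasDerivAt (fun r : ℝ => v (γ (t + (r - r ^ 2)))) h' 0 := by
    have h1 : HasDerivAt (fun r : ℝ => t + (r - r ^ 2)) 1 0 := by
      have := ((hasDerivAt_id (0:ℝ)).sub ((hasDerivAt_id (0:ℝ)).pow 2)).const_add t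
      simpa using this
    have h2 : HasDerivAt (fun s => v (γ s)) h' (t + (0 - 0 ^ 2)) := by simpa using hd
    rw [← mul_one h']
    exact h2.comp (0:ℝ) h1
  have hs := hk.tendsto_slope_zero_right
  simp only [zero_add, sub_self, ne_eq, OfNat.ofNat_ne_zero, not_false_eq_true, zero_pow,
    add_zero, smul_eq_mul] at hs
  have hlim := (ENNReal.continuous_ofReal.tendsto _).comp hs.abs
  rw [← hlim.liminf_eq]
  refine liminf_le_liminf ?_
  filter_upwards [Ioo_mem_nhdsGT (show (0:ℝ) < min 1 (L - t) from
    lt_min one_pos (by linarith [ht.2]))] with r hr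
  have hr1 : r < 1 := hr.2.trans_le (min_le_left _ _)
  have hr2 : r < L - t := hr.2.trans_le (min_le_right _ _)
  have hr0 : 0 < r := hr.1
  have hs0 : 0 ≤ r - r ^ 2 := by nlinarith
  have hsr : r - r ^ 2 < r := by nlinarith
  refine le_iSup₂_of_le (γ (t + (r - r ^ 2))) ?_ ?_
  · have := hγ.dist_le_mul (t + (r - r ^ 2)) ⟨by linarith [ht.1], by linarith⟩ t
      ⟨ht.1.le, ht.2.le⟩
    rw [mem_ball]
    refine this.trans_lt ?_
    rw [Real.dist_eq, add_sub_cancel_left, abs_of_nonneg hs0]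
    simpa using hsr
  · simp only [Function.comp]
    rw [abs_mul, abs_inv, abs_of_pos hr0, div_eq_inv_mul]

variable [MeasurableSpace X] [BorelSpace X]

lemma isUpperGradientOf_lipConst {v : X → ℝ} (hv : LocallyLipschitzOnSet v univ) :
    IsUpperGradientOf (fun x => (lipConst v x).toReal) v := by
  intro L hL γ hγ
  obtain ⟨M, hM⟩ := hv (closedBall (γ 0) (L + 1)) isClosed_closedBall isBounded_closedBall
    (subset_univ _)
  have hmem : ∀ t ∈ Icc 0 L, dist (γ t) (γ 0) ≤ L := fun t ht => by
    have := hγ.dist_le_mul t ht 0 ⟨le_rfl, hL⟩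
    rw [Real.dist_eq, sub_zero, abs_of_nonneg ht.1] at this
    simpa using this.trans (by simpa using ht.2)
  have hbd : ∀ t ∈ Icc 0 L, lipConst v (γ t) ≤ ENNReal.ofReal M := fun t ht => by
    refine lipConst_le_of_lip M.2 ?_
    filter_upwards [ball_mem_nhds (γ t) one_pos] with y hy
    refine hM.dist_le_mul y ?_ (γ t) ?_
    · rw [mem_closedBall]
      linarith [dist_triangle y (γ t) (γ 0), hmem t ht, mem_ball.1 hy]
    · rw [mem_closedBall]; linarith [hmem t ht]
  have hc : Continuous v := continuous_iff_continuousAt.2 fun x =>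
    (hv.lipAt isOpen_univ (mem_univ x)).continuousAt
  have hcomp : LipschitzOnWith (M * 1) (fun t => v (γ t)) (Icc 0 L) :=
    hM.comp hγ fun t ht => by
      rw [mem_closedBall]; linarith [hmem t ht]
  rw [← uIcc_of_le hL] at hcomp
  have hac := hcomp.absolutelyContinuousOnInterval
  have hint := hac.integral_deriv_eq_sub
  rw [abs_sub_comm, ← hint, ← Real.norm_eq_abs]
  refine intervalIntegral.norm_integral_le_of_norm_le hL ?_ ?_
  · filter_upwards [hac.ae_differentiableAt, (measure_singleton L : volume {L} = 0) |>
      measure_eq_zero_iff_ae_notMem.1] with t ht htL htI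
    have htI' : t ∈ Ioo 0 L := ⟨htI.1, lt_of_le_of_ne htI.2 htL⟩
    have hd := ht (by rw [uIcc_of_le hL]; exact ⟨htI'.1.le, htI'.2.le⟩)
    have h1 := ofReal_abs_deriv_le_lipConst hγ htI' hd.hasDerivAt
    have h2 := hbd t ⟨htI'.1.le, htI'.2.le⟩
    rw [Real.norm_eq_abs]
    exact (ENNReal.ofReal_le_iff_le_toReal (h2.trans_lt ENNReal.ofReal_lt_top).ne).1 h1
  · rw [intervalIntegrable_iff_integrableOn_Ioc_of_le hL, ← integrableOn_Icc_iff_integrableOn_Ioc]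
    have hγm : AEMeasurable γ (volume.restrict (Icc 0 L)) :=
      hγ.continuousOn.aemeasurable measurableSet_Icc
    refine IntegrableOn.of_bound (by simp) ?_ (M:ℝ) ?_
    · exact ((measurable_lipConst hc).ennreal_toReal.comp_aemeasurable hγm).aestronglyMeasurable
    · refine (ae_restrict_iff' measurableSet_Icc).2 (Eventually.of_forall fun t ht => ?_)
      rw [Real.norm_eq_abs, abs_of_nonneg ENNReal.toReal_nonneg]
      exact ENNReal.toReal_le_of_le_ofReal M.2 (hbd t ht)

end UpperGradient

lemma min_measure_le_lintegral {X : Type u} [MeasurableSpace X] {μ : Measure X} {E B : Set X}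
    (hE : NullMeasurableSet E μ)
    {m : ℝ} (hm : m ∈ Icc (0:ℝ) 1) : min (μ (E ∩ B)) (μ (B \ E)) ≤
      ∫⁻ y in B, ENNReal.ofReal |E.indicator (fun _ => (1:ℝ)) y - m| ∂μ := by
  rw [← Measure.restrict_inter_add_sdiff₀ B hE, lintegral_add_measure]
  have h1 : ENNReal.ofReal (1 - m) * μ (E ∩ B) ≤
      ∫⁻ y in B ∩ E, ENNReal.ofReal |E.indicator (fun _ => (1:ℝ)) y - m| ∂μ := by
    rw [inter_comm, ← setLIntegral_const]
    refine lintegral_mono_ae ?_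
    have := ae_restrict_mem₀ (μ := μ.restrict B) (s := E)
      (hE.mono_ac Measure.restrict_le_self.absolutelyContinuous)
    rw [Measure.restrict_restrict₀ (hE.mono_ac Measure.restrict_le_self.absolutelyContinuous),
      inter_comm] at this
    filter_upwards [this] with y hy
    rw [indicator_of_mem hy]
    exact ENNReal.ofReal_le_ofReal (le_abs_self _)
  have h2 : ENNReal.ofReal m * μ (B \ E) ≤
      ∫⁻ y in B \ E, ENNReal.ofReal |E.indicator (fun _ => (1:ℝ)) y - m| ∂μ := by
    rw [← setLIntegral_const]
    refine lintegral_mono_ae ?_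
    have hc : NullMeasurableSet Eᶜ (μ.restrict B) :=
      (hE.mono_ac Measure.restrict_le_self.absolutelyContinuous).compl
    have := ae_restrict_mem₀ (μ := μ.restrict B) hc
    rw [Measure.restrict_restrict₀ hc, inter_comm, ← Set.sdiff_eq] at this
    filter_upwards [this] with y hy
    rw [indicator_of_notMem hy, zero_sub, abs_neg]
    exact ENNReal.ofReal_le_ofReal (le_abs_self _)
  refine le_trans ?_ (add_le_add h1 h2)
  calc min (μ (E ∩ B)) (μ (B \ E))
      = ENNReal.ofReal (1 - m) * min (μ (E ∩ B)) (μ (B \ E)) +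
        ENNReal.ofReal m * min (μ (E ∩ B)) (μ (B \ E)) := by
        rw [← add_mul, ← ENNReal.ofReal_add (by linarith [hm.2]) hm.1]; simp
    _ ≤ _ := by gcongr <;> simp

section Isoperimetric

variable {X : Type u} [MetricSpace X] [MeasurableSpace X] {μ : Measure X} [BorelSpace X]
  [ProperSpace X] [IsLocallyFiniteMeasure μ]

lemma SupportsPoincare.exists_lintegral_le {CP : ℝ} (hP : SupportsPoincare μ CP) (hCP : 0 ≤ CP)
    {v : X → ℝ} (hv : LocallyLipschitzOnSet v univ) (hv01 : ∀ x, v x ∈ Icc (0:ℝ) 1) (x : X)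
    {r : ℝ} (hr : 0 < r) (hB : μ (ball x r) ≠ 0) :
    ∃ m ∈ Icc (0:ℝ) 1, ∫⁻ y in ball x r, ENNReal.ofReal |v y - m| ∂μ ≤
      ENNReal.ofReal (CP * r) * ∫⁻ y in ball x r, lipConst v y ∂μ := by
  have hlip : ∀ y, LipAt v y := fun y => hv.lipAt isOpen_univ (mem_univ y)
  have hc : Continuous v := continuous_iff_continuousAt.2 fun y => (hlip y).continuousAt
  have hBt : μ (ball x r) ≠ ⊤ := measure_ball_lt_top.ne
  have hvi : IntegrableOn v (ball x r) μ :=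
    IntegrableOn.of_bound hBt.lt_top hc.aestronglyMeasurable 1 (Eventually.of_forall fun y => by
      rw [Real.norm_eq_abs, abs_of_nonneg (hv01 y).1]; exact (hv01 y).2)
  set m := ⨍ z in ball x r, v z ∂μ with hm
  refine ⟨m, (convex_Icc (0:ℝ) 1).set_average_mem isClosed_Icc hB hBt
    (Eventually.of_forall hv01) hvi, ?_⟩
  have hgm := measurable_lipConst hc
  have h := hP v hv (fun y => (lipConst v y).toReal) (fun y => ENNReal.toReal_nonneg)
    hgm.ennreal_toReal (isUpperGradientOf_lipConst hv) x r hr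
  have hpos : 0 < μ.real (ball x r) := ENNReal.toReal_pos hB hBt
  rw [← hm, setAverage_eq, setAverage_eq, smul_eq_mul, smul_eq_mul, mul_left_comm] at h
  have h' := le_of_mul_le_mul_left h (inv_pos.2 hpos)
  have hvim : IntegrableOn (fun y => |v y - m|) (ball x r) μ :=
    (hvi.sub (integrableOn_const hBt)).abs
  rw [← ofReal_integral_eq_lintegral_ofReal hvim (Eventually.of_forall fun y => abs_nonneg _)]
  refine (ENNReal.ofReal_le_ofReal h').trans ?_
  rw [ENNReal.ofReal_mul (by positivity), integral_toReal hgm.aemeasurable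
    (Eventually.of_forall fun y => (hlip y).lipConst_lt_top)]
  gcongr
  exact ENNReal.ofReal_toReal_le

lemma min_measure_le_totVarOn {CP : ℝ} (hP : SupportsPoincare μ CP) (hCP : 0 ≤ CP) {E : Set X}
    (hE : NullMeasurableSet E μ) (x : X) {r : ℝ} (hr : 0 < r) (hB : μ (ball x r) ≠ 0)
    (hV : totVarOn μ (E.indicator fun _ => (1:ℝ)) (ball x (2 * r)) < ⊤) :
    min (μ (E ∩ ball x r)) (μ (ball x r \ E)) ≤
      ENNReal.ofReal (CP * r) * totVarOn μ (E.indicator fun _ => (1:ℝ)) (ball x (2 * r)) := by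
  set f : X → ℝ := E.indicator fun _ => (1:ℝ) with hf
  have hf01 : ∀ y, f y ∈ Icc (0:ℝ) 1 := fun y => by
    by_cases hy : y ∈ E <;> simp [hf, hy]
  have hfm : AEMeasurable f μ := aemeasurable_const.indicator₀ hE
  obtain ⟨us, h1, h2, h3, h4⟩ := exists_optimal_seq_mem isOpen_ball hV hf01
  have hcb : closedBall x r ⊆ ball x (2 * r) := closedBall_subset_ball (by linarith)
  obtain ⟨β, l, K, hl, hβl, hβ0, hβC, hβK, hK, hCK, hKO⟩ :=
    exists_bump (isCompact_closedBall x r) (isOpen_ball (x := x) (ε := 2 * r)) hcb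
  have hlim := (h3 (closedBall x r) isClosed_closedBall isBounded_closedBall hcb).add
    (ENNReal.Tendsto.const_mul (a := ENNReal.ofReal (CP * r)) h4 (Or.inr ENNReal.ofReal_ne_top))
  rw [zero_add] at hlim
  refine ge_of_tendsto' hlim fun i => ?_
  set v : X → ℝ := fun y => max 0 (us i y - β y) with hv
  have hvB : ∀ y ∈ ball x r, v y = us i y := fun y hy => by
    simp only [hv]
    rw [hβC y (ball_subset_closedBall hy), sub_zero, max_eq_right (h2 i y).1]
  have hvlip : ∀ y, LipAt v y := fun y => by
    by_cases hy : y ∈ ball x (2 * r)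
    · exact (lipAt_const 0 y).max ((h1 i y hy).sub (lipAt_of_lipschitz hl hβl y))
    · refine (lipAt_const 0 y).congr ?_
      filter_upwards [hK.isClosed.isOpen_compl.mem_nhds fun h => hy (hKO h)] with z hz
      have := (h2 i z).2
      have := hβK z hz
      exact (max_eq_left (by linarith)).symm
  have hv01 : ∀ y, v y ∈ Icc (0:ℝ) 1 := fun y =>
    ⟨le_max_left _ _, max_le zero_le_one (by linarith [(h2 i y).2, hβ0 y])⟩
  obtain ⟨m, hm, hmle⟩ := hP.exists_lintegral_le hCP
    (locallyLipschitzOnSet_of_lipAt fun y _ => hvlip y) hv01 x hr hB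
  have hvm : AEMeasurable v (μ.restrict (ball x r)) :=
    (continuous_iff_continuousAt.2 fun y => (hvlip y).continuousAt).aemeasurable
  calc _ ≤ ∫⁻ y in ball x r, ENNReal.ofReal |f y - m| ∂μ := min_measure_le_lintegral hE hm
    _ ≤ ∫⁻ y in ball x r, ENNReal.ofReal |f y - v y| ∂μ +
        ∫⁻ y in ball x r, ENNReal.ofReal |v y - m| ∂μ :=
        lintegral_abs_sub_triangle hfm.restrict hvm
    _ ≤ _ := by
        refine add_le_add ?_ (hmle.trans ?_)
        · refine le_trans (le_of_eq ?_) (lintegral_mono_set ball_subset_closedBall)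
          refine setLIntegral_congr_fun measurableSet_ball fun y hy => ?_
          rw [hvB y hy, abs_sub_comm]
        · gcongr ENNReal.ofReal (CP * r) * ?_
          refine le_trans (le_of_eq ?_) (lintegral_mono_set
            (ball_subset_closedBall.trans hcb))
          refine setLIntegral_congr_fun measurableSet_ball fun y hy => ?_
          refine lipConst_congr ?_
          filter_upwards [isOpen_ball.mem_nhds hy] with z hz using hvB z hz

end Isoperimetric

section Doubling

variable {X : Type u} [PseudoMetricSpace X] [MeasurableSpace X] {μ : Measure X} {Cd : ℝ≥0}

lemma IsDoublingWith.ball_pos (h : IsDoublingWith μ Cd) (x : X) {r : ℝ} (hr : 0 < r) :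
    0 < μ (ball x r) := by
  have := (h x (r / 2) (by positivity)).1
  rwa [mul_div_cancel₀ r two_ne_zero] at this

lemma IsDoublingWith.ball_lt_top (h : IsDoublingWith μ Cd) (x : X) {r : ℝ} (hr : 0 < r) :
    μ (ball x r) < ⊤ := by
  obtain ⟨-, h2, h3⟩ := h x (r / 2) (by positivity)
  rw [mul_div_cancel₀ r two_ne_zero] at h2
  exact h2.trans_lt h3

lemma IsDoublingWith.ball_pow_le (h : IsDoublingWith μ Cd) (x : X) {r : ℝ} (hr : 0 < r) (n : ℕ) :
    μ (ball x (2 ^ n * r)) ≤ (Cd : ℝ≥0∞) ^ n * μ (ball x r) := by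
  induction n with
  | zero => simp
  | succ n ih =>
    rw [pow_succ', pow_succ', mul_assoc, mul_assoc]
    exact (h x (2 ^ n * r) (by positivity)).2.1.trans (by gcongr)

end Doubling

section RelativeIsoperimetric

variable {X : Type u} [MetricSpace X] [MeasurableSpace X] {μ : Measure X} [BorelSpace X]
  [ProperSpace X] [IsLocallyFiniteMeasure μ] {Cd : ℝ≥0} {CP : ℝ}

lemma exists_measure_ball_le_totVarOn (hμ : IsDoublingWith μ Cd) (hCd : 1 ≤ Cd)
    (hP : SupportsPoincare μ CP) (hCP : 0 ≤ CP) {E : Set X} (hE : NullMeasurableSet E μ)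
    (hV : totVarOn μ (E.indicator fun _ => (1:ℝ)) univ < ⊤) {y : X} {t₀ : ℝ} (ht₀ : 0 < t₀)
    (hy : Tendsto (fun n : ℕ => μ (E ∩ closedBall y (t₀ / 2 ^ n)) /
      μ (closedBall y (t₀ / 2 ^ n))) atTop (𝓝 1))
    (h0 : 4 * (Cd : ℝ≥0∞) * μ (E ∩ closedBall y t₀) ≤ μ (closedBall y t₀)) :
    ∃ s, 0 < s ∧ s ≤ t₀ ∧ μ (ball y s) ≤ 4 * (Cd : ℝ≥0∞) ^ 2 * (ENNReal.ofReal (CP * s) *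
      totVarOn μ (E.indicator fun _ => (1:ℝ)) (ball y (2 * s))) := by
  classical
  set D : ℝ≥0∞ := (Cd : ℝ≥0∞) with hD
  have hD1 : 1 ≤ D := ENNReal.one_le_coe_iff.2 hCd
  have hD0 : D ≠ 0 := (one_pos.trans_le hD1).ne'
  have hDt : D ≠ ⊤ := ENNReal.coe_ne_top
  have hex : ∃ n : ℕ, μ (closedBall y (t₀ / 2 ^ n)) <
      4 * D * μ (E ∩ closedBall y (t₀ / 2 ^ n)) := by
    have hlt : (4 * D)⁻¹ < 1 := by
      rw [ENNReal.inv_lt_one]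
      calc (1 : ℝ≥0∞) < 4 * 1 := by norm_num
        _ ≤ 4 * D := by gcongr
    obtain ⟨n, hn⟩ := (hy.eventually (lt_mem_nhds hlt)).exists
    refine ⟨n, ?_⟩
    have hpos : 0 < μ (closedBall y (t₀ / 2 ^ n)) :=
      (hμ.ball_pos y (by positivity)).trans_le (measure_mono ball_subset_closedBall)
    have hfin : μ (closedBall y (t₀ / 2 ^ n)) < ⊤ := measure_closedBall_lt_top
    rw [ENNReal.lt_div_iff_mul_lt (Or.inl hpos.ne') (Or.inl hfin.ne), mul_comm,
      ← div_eq_mul_inv, ENNReal.div_lt_iff (Or.inl (by simp [hD0]))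
        (Or.inl (ENNReal.mul_ne_top (by simp) hDt)), mul_comm] at hn
    exact hn
  obtain ⟨k, hk⟩ : ∃ k, Nat.find hex = k + 1 := by
    refine Nat.exists_eq_succ_of_ne_zero fun h => ?_
    have := Nat.find_spec hex
    rw [h, pow_zero, div_one] at this
    exact this.not_ge h0
  have hk1 := Nat.find_spec hex
  have hk2 := not_lt.1 (Nat.find_min hex (m := k) (by omega))
  rw [hk] at hk1
  set s := t₀ / 2 ^ k with hs
  have hs0 : 0 < s := by positivity
  have hs2 : t₀ / 2 ^ (k + 1) = s / 2 := by rw [hs, pow_succ, div_div]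
  rw [hs2] at hk1
  refine ⟨s, hs0, div_le_self ht₀.le (one_le_pow₀ one_le_two), ?_⟩
  have hiso := min_measure_le_totVarOn hP hCP hE y hs0 (hμ.ball_pos y hs0).ne'
    ((totVarOn_mono (subset_univ _)).trans_lt hV)
  refine le_trans ?_ (mul_le_mul_right hiso _)
  have hbt : μ (ball y s) ≠ ⊤ := measure_ball_lt_top.ne
  have hp : μ (ball y s) ≤ 4 * D ^ 2 * μ (E ∩ ball y s) := by
    calc μ (ball y s) ≤ D * μ (ball y (s / 2)) := by
          have := hμ.ball_pow_le y (r := s / 2) (by positivity) 1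
          rwa [pow_one, pow_one, mul_div_cancel₀ s two_ne_zero] at this
      _ ≤ D * (4 * D * μ (E ∩ closedBall y (s / 2))) := by
          gcongr
          exact (measure_mono ball_subset_closedBall).trans hk1.le
      _ = 4 * D ^ 2 * μ (E ∩ closedBall y (s / 2)) := by ring
      _ ≤ _ := by
          gcongr
          exact closedBall_subset_ball (by linarith)
  have hq : μ (ball y s) ≤ 4 * D ^ 2 * μ (ball y s \ E) := by
    have h1 : 4 * μ (E ∩ ball y s) ≤ μ (ball y s) := by
      refine (ENNReal.mul_le_mul_iff_right hD0 hDt).1 ?_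
      calc D * (4 * μ (E ∩ ball y s)) ≤ 4 * D * μ (E ∩ closedBall y s) := by
            rw [← mul_assoc, mul_comm D]
            gcongr
            exact ball_subset_closedBall
        _ ≤ μ (closedBall y s) := hk2
        _ ≤ μ (ball y (2 * s)) := measure_mono (closedBall_subset_ball (by linarith))
        _ ≤ _ := (hμ y s hs0).2.1
    have h2 : μ (ball y s) + 3 * μ (ball y s) ≤ μ (ball y s) + 4 * μ (ball y s \ E) := by
      calc _ = 4 * μ (ball y s) := by ring
        _ ≤ 4 * (μ (ball y s ∩ E) + μ (ball y s \ E)) := by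
            gcongr; exact measure_le_inter_add_sdiff _ _ _
        _ = 4 * μ (E ∩ ball y s) + 4 * μ (ball y s \ E) := by rw [mul_add, inter_comm]
        _ ≤ _ := by gcongr
    have h3 := (ENNReal.add_le_add_iff_left hbt).1 h2
    calc μ (ball y s) = 1 * μ (ball y s) := (one_mul _).symm
      _ ≤ 3 * μ (ball y s) := by gcongr; norm_num
      _ ≤ 4 * μ (ball y s \ E) := h3
      _ = 4 * 1 * μ (ball y s \ E) := by ring
      _ ≤ _ := by gcongr; exact one_le_pow₀ hD1
  rcases le_total (μ (E ∩ ball y s)) (μ (ball y s \ E)) with h | h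
  · rwa [min_eq_left h]
  · rwa [min_eq_right h]

variable [IsUnifLocDoublingMeasure μ]

lemma measure_inter_ball_le_of_small (hμ : IsDoublingWith μ Cd) (hCd : 1 ≤ Cd)
    (hP : SupportsPoincare μ CP) (hCP : 0 ≤ CP) {E : Set X} (hE : NullMeasurableSet E μ)
    (hV : totVarOn μ (E.indicator fun _ => (1:ℝ)) univ < ⊤) (x : X) {ρ : ℝ} (hρ : 0 < ρ) (m : ℕ)
    (hm : 4 * (Cd : ℝ≥0∞) ^ (m + 4) * μ (E ∩ ball x (4 * ρ)) ≤ μ (ball x (4 * ρ))) :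
    μ (E ∩ ball x (2 * ρ)) ≤ 4 * (Cd : ℝ≥0∞) ^ 6 * ENNReal.ofReal (CP * (ρ / 2 ^ m)) *
      totVarOn μ (E.indicator fun _ => (1:ℝ)) (ball x (16 * ρ)) := by
  set D : ℝ≥0∞ := (Cd : ℝ≥0∞) with hD
  have hD1 : 1 ≤ D := ENNReal.one_le_coe_iff.2 hCd
  have hD0 : D ≠ 0 := (one_pos.trans_le hD1).ne'
  have hDt : D ≠ ⊤ := ENNReal.coe_ne_top
  set t₀ := ρ / 2 ^ m with ht₀
  have ht0 : 0 < t₀ := by positivity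
  have htρ : t₀ ≤ ρ := div_le_self hρ.le (one_le_pow₀ one_le_two)
  have hdens := ae_restrict_iff'₀ (μ := μ) hE |>.1
    (IsUnifLocDoublingMeasure.ae_tendsto_measure_inter_div μ E 1)
  set A : Set X := {y ∈ E ∩ ball x (2 * ρ) | Tendsto (fun n : ℕ =>
    μ (E ∩ closedBall y (t₀ / 2 ^ n)) / μ (closedBall y (t₀ / 2 ^ n))) atTop (𝓝 1)} with hA
  have hAE : μ (E ∩ ball x (2 * ρ)) ≤ μ A := by
    refine measure_mono_ae ?_
    filter_upwards [hdens] with y hy hyE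
    refine ⟨hyE, hy hyE.1 (fun _ => y) _ ?_ (Eventually.of_forall fun n => ?_)⟩
    · refine tendsto_nhdsWithin_iff.2 ⟨?_, Eventually.of_forall fun n => ?_⟩
      · exact tendsto_const_nhds.div_atTop (tendsto_pow_atTop_atTop_of_one_lt one_lt_two)
      · simp only [mem_Ioi]; positivity
    · exact mem_closedBall_self (by positivity)
  refine hAE.trans ?_
  have hsc : ∀ y ∈ A, ∃ s, 0 < s ∧ s ≤ t₀ ∧ μ (ball y s) ≤ 4 * D ^ 2 *
      (ENNReal.ofReal (CP * s) * totVarOn μ (E.indicator fun _ => (1:ℝ)) (ball y (2 * s))) := by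
    intro y hy
    refine exists_measure_ball_le_totVarOn hμ hCd hP hCP hE hV ht0 hy.2 ?_
    have hyx : dist y x < 2 * ρ := hy.1.2
    refine (ENNReal.mul_le_mul_iff_right (pow_ne_zero (m + 3) hD0) (ENNReal.pow_ne_top hDt)).1 ?_
    calc D ^ (m + 3) * (4 * D * μ (E ∩ closedBall y t₀))
        = 4 * D ^ (m + 4) * μ (E ∩ closedBall y t₀) := by ring
      _ ≤ 4 * D ^ (m + 4) * μ (E ∩ ball x (4 * ρ)) := by
          gcongr
          exact closedBall_subset_ball' (by linarith)
      _ ≤ μ (ball x (4 * ρ)) := hm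
      _ ≤ μ (ball y (2 ^ (m + 3) * t₀)) := by
          refine measure_mono (ball_subset_ball' ?_)
          have : 2 ^ (m + 3) * t₀ = 8 * ρ := by
            rw [ht₀, pow_add]; field_simp; norm_num
          rw [this, dist_comm]; linarith
      _ ≤ D ^ (m + 3) * μ (ball y t₀) := hμ.ball_pow_le y ht0 _
      _ ≤ _ := by gcongr; exact ball_subset_closedBall
  choose! s hs0 hst hsμ using hsc
  obtain ⟨t, htA, htc, htd, htcov⟩ := exists_disjoint_balls_covering (A := A)
    (r := fun y => 2 * s y) (R := 2 * t₀) (fun y hy => by linarith [hs0 y hy])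
    (fun y hy => by linarith [hst y hy])
  have hsub : ∀ y ∈ t, ball y (2 * s y) ⊆ ball x (16 * ρ) := fun y hy => by
    refine ball_subset_ball' ?_
    have : dist y x < 2 * ρ := (htA hy).1.2
    linarith [hst y (htA hy)]
  have hν : ∑' y : t, totVarOn μ (E.indicator fun _ => (1:ℝ)) (ball (y:X) (2 * s y)) ≤
      totVarOn μ (E.indicator fun _ => (1:ℝ)) (ball x (16 * ρ)) := by
    rw [ENNReal.tsum_eq_iSup_sum]
    refine iSup_le fun F => ?_
    have := sum_totVarOn_le (μ := μ) (f := E.indicator fun _ => (1:ℝ)) isOpen_ball F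
      (fun y : t => ball (y:X) (2 * s y)) (fun _ _ => isOpen_ball)
      (fun y _ => hsub y y.2) one_ne_zero fun z => by
        classical
        by_cases hz : ∃ y ∈ F, z ∈ ball (y:X) (2 * s y)
        · obtain ⟨y, hyF, hy⟩ := hz
          refine (sum_indicator_le_card F _ z {y} fun k hk hzk => ?_).trans (by simp)
          rw [Finset.mem_singleton]
          by_contra hne
          exact disjoint_left.1 (htd k.2 y.2 (fun h => hne (Subtype.ext h)))
            (ball_subset_closedBall hzk) (ball_subset_closedBall hy)
        · push Not at hz
          exact (sum_indicator_le_card F _ z ∅ fun k hk hzk => (hz k hk hzk).elim).trans (by simp)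
    simpa using this
  have : Countable t := htc.to_subtype
  calc μ A ≤ μ (⋃ y ∈ t, ball y (6 * (2 * s y))) := measure_mono htcov
    _ ≤ ∑' y : t, μ (ball (y:X) (6 * (2 * s y))) := measure_biUnion_le _ htc _
    _ ≤ ∑' y : t, 4 * D ^ 6 * ENNReal.ofReal (CP * t₀) *
        totVarOn μ (E.indicator fun _ => (1:ℝ)) (ball (y:X) (2 * s y)) := by
        refine ENNReal.tsum_le_tsum fun y => ?_
        have hy := htA y.2
        have hsy := hs0 y hy
        calc μ (ball (y:X) (6 * (2 * s y))) ≤ μ (ball (y:X) (2 ^ 4 * s y)) :=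
              measure_mono (ball_subset_ball (by linarith))
          _ ≤ D ^ 4 * μ (ball (y:X) (s y)) := hμ.ball_pow_le _ hsy 4
          _ ≤ D ^ 4 * (4 * D ^ 2 * (ENNReal.ofReal (CP * s y) *
              totVarOn μ (E.indicator fun _ => (1:ℝ)) (ball (y:X) (2 * s y)))) := by
              gcongr; exact hsμ y hy
          _ = 4 * D ^ 6 * ENNReal.ofReal (CP * s y) *
              totVarOn μ (E.indicator fun _ => (1:ℝ)) (ball (y:X) (2 * s y)) := by ring
          _ ≤ _ := by gcongr; exact hst y hy
    _ = 4 * D ^ 6 * ENNReal.ofReal (CP * t₀) * ∑' y : t,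
        totVarOn μ (E.indicator fun _ => (1:ℝ)) (ball (y:X) (2 * s y)) := ENNReal.tsum_mul_left
    _ ≤ _ := by gcongr

lemma exists_measure_ball_le_of_totVarOn_small (hμ : IsDoublingWith μ Cd) (hCd : 1 ≤ Cd)
    (hP : SupportsPoincare μ CP) (hCP : 0 ≤ CP) {E : Set X} (hE : NullMeasurableSet E μ)
    (hV : totVarOn μ (E.indicator fun _ => (1:ℝ)) univ < ⊤) {ε : ℝ≥0∞} (hε : ε ≠ 0) :
    ∃ c₀ : ℝ≥0∞, c₀ ≠ 0 ∧ c₀ ≠ ⊤ ∧ ∀ (x : X) (ρ : ℝ), 0 < ρ →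
      ENNReal.ofReal (16 * ρ) * totVarOn μ (E.indicator fun _ => (1:ℝ)) (ball x (16 * ρ)) ≤
        c₀ * μ (ball x (16 * ρ)) →
      μ (E ∩ ball x (2 * ρ)) ≤ ε * (ENNReal.ofReal ρ *
        totVarOn μ (E.indicator fun _ => (1:ℝ)) (ball x (16 * ρ))) ∨
      μ (Eᶜ ∩ ball x (2 * ρ)) ≤ ε * (ENNReal.ofReal ρ *
        totVarOn μ (E.indicator fun _ => (1:ℝ)) (ball x (16 * ρ))) := by
  set D : ℝ≥0∞ := (Cd : ℝ≥0∞) with hD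
  have hDt : D ≠ ⊤ := ENNReal.coe_ne_top
  obtain ⟨m, hm⟩ : ∃ m : ℕ, 4 * D ^ 6 * ENNReal.ofReal (CP / 2 ^ m) ≤ ε := by
    have h1 : Tendsto (fun m : ℕ => CP / 2 ^ m) atTop (𝓝 0) :=
      tendsto_const_nhds.div_atTop (tendsto_pow_atTop_atTop_of_one_lt one_lt_two)
    have h2 := ENNReal.Tendsto.const_mul (a := 4 * D ^ 6)
      ((ENNReal.continuous_ofReal.tendsto 0).comp h1)
      (Or.inr (ENNReal.mul_ne_top (by simp) (ENNReal.pow_ne_top hDt)))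
    rw [ENNReal.ofReal_zero, mul_zero] at h2
    obtain ⟨m, hm⟩ := (h2.eventually (ge_mem_nhds hε.bot_lt)).exists
    exact ⟨m, hm⟩
  set M : ℝ≥0∞ := 4 * D ^ (m + 6) * ENNReal.ofReal (CP / 4) with hM
  have hMt : M ≠ ⊤ := ENNReal.mul_ne_top (ENNReal.mul_ne_top (by simp) (ENNReal.pow_ne_top hDt))
    ENNReal.ofReal_ne_top
  refine ⟨min M⁻¹ 1, (lt_min (ENNReal.inv_pos.2 hMt) one_pos).ne',
    ((min_le_right _ _).trans_lt ENNReal.one_lt_top).ne, fun x ρ hρ h => ?_⟩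
  replace h := h.trans (mul_le_mul_left (min_le_left M⁻¹ 1) _)
  set N := totVarOn μ (E.indicator fun _ => (1:ℝ)) (ball x (16 * ρ)) with hN
  have hiso := min_measure_le_totVarOn hP hCP hE x (r := 4 * ρ) (by positivity)
    (hμ.ball_pos x (by positivity)).ne' ((totVarOn_mono (subset_univ _)).trans_lt hV)
  have hsm : 4 * D ^ (m + 4) * min (μ (E ∩ ball x (4 * ρ))) (μ (ball x (4 * ρ) \ E)) ≤
      μ (ball x (4 * ρ)) := by
    calc _ ≤ 4 * D ^ (m + 4) * (ENNReal.ofReal (CP * (4 * ρ)) * N) := by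
          gcongr
          refine hiso.trans ?_
          gcongr
          exact totVarOn_mono (ball_subset_ball (by linarith))
      _ = 4 * D ^ (m + 4) * ENNReal.ofReal (CP / 4) * (ENNReal.ofReal (16 * ρ) * N) := by
          rw [show CP * (4 * ρ) = CP / 4 * (16 * ρ) by ring, ENNReal.ofReal_mul (by positivity)]
          ring
      _ ≤ 4 * D ^ (m + 4) * ENNReal.ofReal (CP / 4) * (M⁻¹ * (D ^ 2 * μ (ball x (4 * ρ)))) := by
          refine mul_le_mul_right (h.trans (mul_le_mul_right ?_ _)) _
          have := hμ.ball_pow_le x (r := 4 * ρ) (by positivity) 2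
          rwa [show (2:ℝ) ^ 2 * (4 * ρ) = 16 * ρ by ring] at this
      _ = M * M⁻¹ * μ (ball x (4 * ρ)) := by rw [hM]; ring
      _ ≤ 1 * μ (ball x (4 * ρ)) := by gcongr; exact ENNReal.mul_inv_le_one M
      _ = _ := one_mul _
  have hfin : 4 * D ^ 6 * ENNReal.ofReal (CP * (ρ / 2 ^ m)) * N ≤ ε * (ENNReal.ofReal ρ * N) := by
    rw [show CP * (ρ / 2 ^ m) = CP / 2 ^ m * ρ by ring, ENNReal.ofReal_mul (by positivity)]
    calc _ = 4 * D ^ 6 * ENNReal.ofReal (CP / 2 ^ m) * (ENNReal.ofReal ρ * N) := by ring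
      _ ≤ _ := by gcongr
  rcases le_total (μ (E ∩ ball x (4 * ρ))) (μ (ball x (4 * ρ) \ E)) with hle | hle
  · rw [min_eq_left hle] at hsm
    exact Or.inl ((measure_inter_ball_le_of_small hμ hCd hP hCP hE hV x hρ m hsm).trans hfin)
  · rw [min_eq_right hle, Set.sdiff_eq, inter_comm] at hsm
    have := measure_inter_ball_le_of_small hμ hCd hP hCP hE.compl
      (by rwa [totVarOn_indicator_compl]) x hρ m hsm
    rw [totVarOn_indicator_compl] at this
    exact Or.inr (this.trans hfin)

end RelativeIsoperimetric

section Scales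

variable {ν m : ℝ → ℝ≥0∞} {D : ℝ≥0∞}

lemma exists_scale_up (hm : ∀ r, 0 < r → m (16 * r) ≤ D * m r) (hm0 : ∀ r, 0 < r → m r ≠ 0)
    (hmm : Monotone m) {V M : ℝ≥0∞} (hV : V ≠ ⊤) (hν : ∀ r, ν r ≤ V) (hM : M ≠ 0)
    (h : ∀ δ : ℝ, 0 < δ → ∃ r, 0 < r ∧ r < δ ∧ M * m r ≤ ENNReal.ofReal r * ν r)
    {δ : ℝ} (hδ : 0 < δ) :
    ∃ r, 0 < r ∧ r < δ ∧ M * m r ≤ ENNReal.ofReal r * ν r ∧ ν (16 * r) ≤ 2 * D * ν r := by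
  by_contra! hcon
  have hlow : M * m (δ / 32) ≠ 0 := mul_ne_zero hM (hm0 _ (by positivity))
  obtain ⟨k₀, hk₀⟩ : ∃ k₀ : ℕ, ENNReal.ofReal δ * V < M * m (δ / 32) * 32 ^ k₀ := by
    have h1 : Tendsto (fun k : ℕ => (32:ℝ≥0∞) ^ k) atTop (𝓝 ⊤) :=
      ENNReal.tendsto_pow_atTop_nhds_top_iff.2 (by norm_num)
    have h2 := ENNReal.Tendsto.const_mul (a := M * m (δ / 32)) h1 (Or.inl ENNReal.top_ne_zero)
    rw [ENNReal.mul_top hlow] at h2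
    exact (h2.eventually (lt_mem_nhds (ENNReal.mul_lt_top ENNReal.ofReal_lt_top hV.lt_top))).exists
  obtain ⟨r, hr0, hrδ, hr⟩ := h (δ / 2 / 16 ^ (k₀ + 1)) (by positivity)
  obtain ⟨n, hn1, hn2⟩ := exists_nat_pow_near (x := δ / 2 / r) (y := 16)
    (by
      rw [one_le_div hr0]
      exact hrδ.le.trans (div_le_self (by positivity) (one_le_pow₀ (by norm_num)))) (by norm_num)
  rw [le_div_iff₀ hr0] at hn1
  rw [div_lt_iff₀ hr0] at hn2
  have hkn : k₀ ≤ n := by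
    by_contra hlt
    rw [lt_div_iff₀ (by positivity)] at hrδ
    have : (16:ℝ) ^ (n + 1) ≤ 16 ^ (k₀ + 1) := pow_le_pow_right₀ (by norm_num) (by omega)
    nlinarith
  have claim : ∀ k ≤ n, M * 32 ^ k * m (16 ^ k * r) ≤
      ENNReal.ofReal (16 ^ k * r) * ν (16 ^ k * r) := by
    intro k
    induction k with
    | zero => intro _; simpa using hr
    | succ k ih =>
      intro hk
      have ih' := ih (by omega)
      set s := 16 ^ k * r with hs
      have hs0 : 0 < s := by positivity
      have hsδ : s < δ := by
        have : (16:ℝ) ^ k ≤ 16 ^ n := pow_le_pow_right₀ (by norm_num) (by omega)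
        nlinarith
      have hbad := hcon s hs0 hsδ (le_trans (by
        gcongr
        exact le_mul_of_one_le_right' (one_le_pow₀ (by norm_num))) ih')
      have hs1 : 16 ^ (k + 1) * r = 16 * s := by rw [hs]; ring
      rw [hs1]
      calc M * 32 ^ (k + 1) * m (16 * s) ≤ M * 32 ^ (k + 1) * (D * m s) := by
            gcongr; exact hm s hs0
        _ = 32 * D * (M * 32 ^ k * m s) := by ring
        _ ≤ 32 * D * (ENNReal.ofReal s * ν s) := by gcongr
        _ = 16 * ENNReal.ofReal s * (2 * D * ν s) := by ring
        _ ≤ 16 * ENNReal.ofReal s * ν (16 * s) := by gcongr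
        _ = _ := by rw [ENNReal.ofReal_mul (p := 16) (q := s) (by norm_num)]; simp
  have hfin := claim n le_rfl
  refine hk₀.not_ge ?_
  calc M * m (δ / 32) * 32 ^ k₀ ≤ M * m (16 ^ n * r) * 32 ^ n := by
        gcongr
        · exact hmm (by rw [pow_succ] at hn2; linarith)
        · norm_num
    _ = M * 32 ^ n * m (16 ^ n * r) := by ring
    _ ≤ _ := hfin
    _ ≤ _ := by
        gcongr
        · linarith
        · exact hν _

lemma exists_scale_down (hm : ∀ r, 0 < r → m (16 * r) ≤ D * m r) (hD0 : D ≠ 0) (hD : D ≠ ⊤)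
    (hν : Monotone ν) {c₀ : ℝ≥0∞} (hc₀ : c₀ ≠ ⊤) {r₀ : ℝ} (hr₀ : 0 < r₀) (hr₁ : r₀ < 1)
    (h : ENNReal.ofReal r₀ * ν r₀ ≤ c₀ * m r₀)
    (hZ : ¬ ∀ η : ℝ≥0∞, η ≠ 0 → ∃ r, 0 < r ∧ r < 1 ∧ ν (6 * r) ≤ η * m r) :
    ∃ ρ, 0 < ρ ∧ 16 * ρ ≤ r₀ ∧ ENNReal.ofReal (16 * ρ) * ν (16 * ρ) ≤ c₀ * m (16 * ρ) ∧
      ν (16 * ρ) ≤ 2 * D * ν ρ := by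
  by_contra! hcon
  refine hZ fun η hη => ?_
  have claim : ∀ k : ℕ, 32 ^ k * (ENNReal.ofReal (r₀ / 16 ^ k) * ν (r₀ / 16 ^ k)) ≤
      c₀ * m (r₀ / 16 ^ k) := by
    intro k
    induction k with
    | zero => simpa using h
    | succ k ih =>
      set s := r₀ / 16 ^ (k + 1) with hs
      have hs0 : 0 < s := by positivity
      have hs1 : r₀ / 16 ^ k = 16 * s := by rw [hs, pow_succ]; field_simp
      rw [hs1] at ih
      have hbad := hcon s hs0 (by rw [← hs1]; exact div_le_self hr₀.le (one_le_pow₀ (by norm_num)))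
        ((le_mul_of_one_le_left' (one_le_pow₀ (by norm_num))).trans ih)
      refine (ENNReal.mul_le_mul_iff_right hD0 hD).1 ?_
      calc D * (32 ^ (k + 1) * (ENNReal.ofReal s * ν s))
          = 32 ^ k * (16 * ENNReal.ofReal s * (2 * D * ν s)) := by ring
        _ ≤ 32 ^ k * (16 * ENNReal.ofReal s * ν (16 * s)) := by gcongr
        _ = 32 ^ k * (ENNReal.ofReal (16 * s) * ν (16 * s)) := by
            rw [ENNReal.ofReal_mul (by norm_num)]; simp
        _ ≤ c₀ * m (16 * s) := ih
        _ ≤ c₀ * (D * m s) := by gcongr; exact hm s hs0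
        _ = _ := by ring
  obtain ⟨k, hk⟩ : ∃ k : ℕ, c₀ * D < η * ENNReal.ofReal (2 ^ k * r₀) := by
    have h1 : Tendsto (fun k : ℕ => (2:ℝ) ^ k * r₀) atTop atTop :=
      (tendsto_pow_atTop_atTop_of_one_lt one_lt_two).atTop_mul_const hr₀
    have h2 := ENNReal.Tendsto.const_mul (a := η) (ENNReal.tendsto_ofReal_atTop.comp h1)
      (Or.inl ENNReal.top_ne_zero)
    rw [ENNReal.mul_top hη] at h2
    exact (h2.eventually (lt_mem_nhds (ENNReal.mul_lt_top hc₀.lt_top hD.lt_top))).exists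
  set s := r₀ / 16 ^ (k + 1) with hs
  have hs0 : 0 < s := by positivity
  have hs1 : r₀ / 16 ^ k = 16 * s := by rw [hs, pow_succ]; field_simp
  have hc := claim k
  rw [hs1] at hc
  refine ⟨s, hs0, (div_le_self hr₀.le (one_le_pow₀ (by norm_num))).trans_lt hr₁, ?_⟩
  refine (ENNReal.mul_le_mul_iff_right (a := ENNReal.ofReal (2 ^ k * r₀))
    (ENNReal.ofReal_pos.2 (by positivity)).ne' ENNReal.ofReal_ne_top).1 ?_
  calc ENNReal.ofReal (2 ^ k * r₀) * ν (6 * s) ≤ ENNReal.ofReal (2 ^ k * r₀) * ν (16 * s) := by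
        gcongr; exact hν (by linarith)
    _ = 32 ^ k * (ENNReal.ofReal (16 * s) * ν (16 * s)) := by
        rw [← mul_assoc]
        congr 1
        rw [← hs1, show (2:ℝ) ^ k * r₀ = 32 ^ k * (r₀ / 16 ^ k) by
          rw [show (32:ℝ) = 2 * 16 by norm_num, mul_pow]; field_simp,
          ENNReal.ofReal_mul (by positivity), ENNReal.ofReal_pow (by norm_num)]
        simp
    _ ≤ c₀ * m (16 * s) := hc
    _ ≤ c₀ * (D * m s) := by gcongr; exact hm s hs0
    _ = c₀ * D * m s := by ring
    _ ≤ η * ENNReal.ofReal (2 ^ k * r₀) * m s := by gcongr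
    _ = _ := by ring

end Scales

section Doubling

variable {X : Type u} [MetricSpace X] [MeasurableSpace X] {μ : Measure X} {Cd : ℝ≥0}

lemma IsDoublingWith.isLocallyFiniteMeasure (h : IsDoublingWith μ Cd) :
    IsLocallyFiniteMeasure μ :=
  ⟨fun x => ⟨ball x 1, ball_mem_nhds x one_pos, h.ball_lt_top x one_pos⟩⟩

lemma IsDoublingWith.isUnifLocDoublingMeasure (h : IsDoublingWith μ Cd) :
    IsUnifLocDoublingMeasure μ := by
  refine ⟨Cd ^ 2, ?_⟩
  filter_upwards [self_mem_nhdsWithin] with r hr x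
  rw [mem_Ioi] at hr
  calc μ (closedBall x (2 * r)) ≤ μ (ball x (2 ^ 2 * r)) :=
        measure_mono (closedBall_subset_ball (by linarith))
    _ ≤ (Cd : ℝ≥0∞) ^ 2 * μ (ball x r) := h.ball_pow_le x hr 2
    _ ≤ _ := by push_cast; gcongr; exact ball_subset_closedBall

lemma IsDoublingWith.properSpace [BorelSpace X] [CompleteSpace X] (h : IsDoublingWith μ Cd) :
    ProperSpace X := by
  refine ⟨fun x R => (TotallyBounded.isCompact_of_isClosed ?_ isClosed_closedBall)⟩
  refine Metric.totallyBounded_iff.2 fun ε hε => ?_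
  rcases le_or_gt R 0 with hR | hR
  · exact ⟨{x}, finite_singleton x, fun y hy => by
      simpa using (mem_closedBall.1 hy).trans_lt (hR.trans_lt hε)⟩
  obtain ⟨t, htA, htd, htc⟩ := Vitali.exists_disjoint_subfamily_covering_enlargement_closedBall
    (closedBall x R) id (fun _ => ε / 6) (ε / 6) (fun _ _ => le_rfl) 5 (by norm_num)
  obtain ⟨k, hk⟩ : ∃ k : ℕ, 2 * R ≤ 2 ^ k * (ε / 6) := by
    obtain ⟨k, hk⟩ := pow_unbounded_of_one_lt (2 * R / (ε / 6)) one_lt_two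
    exact ⟨k, ((div_lt_iff₀ (by positivity)).1 hk).le⟩
  set c : ℝ≥0∞ := μ (ball x R) / (Cd : ℝ≥0∞) ^ k with hc
  have hc0 : 0 < c := ENNReal.div_pos (h.ball_pos x hR).ne' (ENNReal.pow_ne_top ENNReal.coe_ne_top)
  have hct : ∀ y ∈ t, c ≤ μ (closedBall y (ε / 6)) := fun y hy => by
    refine ENNReal.div_le_of_le_mul' ?_
    have hyx : dist y x ≤ R := htA hy
    calc μ (ball x R) ≤ μ (ball y (2 ^ k * (ε / 6))) :=
          measure_mono (ball_subset_ball' (by rw [dist_comm]; linarith))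
      _ ≤ (Cd : ℝ≥0∞) ^ k * μ (ball y (ε / 6)) := h.ball_pow_le y (by positivity) k
      _ ≤ _ := by gcongr; exact ball_subset_closedBall
  have hfin : t.Finite := by
    have := Measure.finite_const_le_meas_of_disjoint_iUnion μ hc0
      (As := fun y : t => closedBall (y:X) (ε / 6)) (fun _ => measurableSet_closedBall)
      (fun y z hyz => htd y.2 z.2 fun h => hyz (Subtype.ext h))
      (ne_top_of_le_ne_top (h.ball_lt_top x (r := R + ε) (by positivity)).ne
        (measure_mono (iUnion_subset fun y => closedBall_subset_ball' (by
          have hyx : dist (y:X) x ≤ R := htA y.2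
          linarith))))
    have huniv : {y : t | c ≤ μ (closedBall (y:X) (ε / 6))} = univ :=
      eq_univ_of_forall fun y => hct y y.2
    rw [huniv] at this
    exact finite_coe_iff.1 (finite_univ_iff.1 this)
  refine ⟨t, hfin, fun y hy => ?_⟩
  obtain ⟨b, hb, hyb⟩ := htc y hy
  have hyb' : y ∈ closedBall b (5 * (ε / 6)) := hyb (mem_closedBall_self (by positivity))
  exact mem_iUnion₂.2 ⟨b, hb, mem_ball.2 ((mem_closedBall.1 hyb').trans_lt (by linarith))⟩

end Doubling

lemma indicator_one_mem_Icc {X : Type u} (E : Set X) (x : X)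
    : E.indicator (fun _ => (1:ℝ)) x ∈ Icc (0:ℝ) 1 := by
  by_cases hx : x ∈ E <;> simp [hx]

section Exceptional

variable {X : Type u} [MetricSpace X] [MeasurableSpace X] {μ : Measure X} [BorelSpace X]
  [ProperSpace X] [IsLocallyFiniteMeasure μ] [IsUnifLocDoublingMeasure μ]

lemma totVarSet_union_eq_zero {f : X → ℝ} (hf : ∀ x, f x ∈ Icc (0:ℝ) 1) (hfm : AEMeasurable f μ)
    {A B : Set X} (hA : totVarSet μ f A = 0) (hB : totVarSet μ f B = 0) :
    totVarSet μ f (A ∪ B) = 0 := by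
  rw [union_eq_iUnion]
  exact totVarSet_iUnion_eq_zero hf hfm fun b => by cases b <;> assumption

lemma totVarSet_density_zero {f : X → ℝ} (hf : ∀ x, f x ∈ Icc (0:ℝ) 1) (hfm : AEMeasurable f μ) :
    totVarSet μ f {x | ∀ η : ℝ≥0∞, η ≠ 0 → ∃ r, 0 < r ∧ r < 1 ∧
      totVarOn μ f (ball x (6 * r)) ≤ η * μ (ball x r)} = 0 := by
  set Z := {x | ∀ η : ℝ≥0∞, η ≠ 0 → ∃ r, 0 < r ∧ r < 1 ∧
      totVarOn μ f (ball x (6 * r)) ≤ η * μ (ball x r)} with hZ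
  rcases isEmpty_or_nonempty X with hX | ⟨⟨x₀⟩⟩
  · rw [eq_empty_of_isEmpty Z, ← iUnion_empty (ι := Empty)]
    exact totVarSet_iUnion_eq_zero hf hfm (fun i => i.elim)
  rw [← inter_univ Z, ← iUnion_ball_nat x₀, inter_iUnion]
  exact totVarSet_iUnion_eq_zero hf hfm fun n =>
    totVarSet_eq_zero_of_density hf hfm inter_subset_right fun x hx => hx.1

lemma exists_competitor_of_cut {E : Set X} (hE : NullMeasurableSet E μ)
    (hV : totVarOn μ (E.indicator fun _ => (1:ℝ)) univ < ⊤) {c : ℝ≥0∞} {x : X} {ρ : ℝ}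
    (hρ : 0 < ρ) (h : ENNReal.ofReal (2 / ρ) * μ (E ∩ ball x (2 * ρ)) +
      c * totVarOn μ (E.indicator fun _ => (1:ℝ)) (ball x (6 * (2 * ρ))) ≤
      totVarOn μ (E.indicator fun _ => (1:ℝ)) (ball x ρ)) :
    ∃ (w : X → ℝ), (∀ y, w y ∈ Icc (0:ℝ) 1) ∧ AEMeasurable w μ ∧
      (∀ y ∉ closedBall x (3 / 2 * ρ), w y = E.indicator (fun _ => (1:ℝ)) y) ∧
      totVarOn μ w (ball x (2 * ρ)) +
        c * totVarOn μ (E.indicator fun _ => (1:ℝ)) (ball x (6 * (2 * ρ))) ≤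
        totVarOn μ (E.indicator fun _ => (1:ℝ)) (ball x (2 * ρ)) ∧
      ∫⁻ y, ENNReal.ofReal |w y - E.indicator (fun _ => (1:ℝ)) y| ∂μ ≤
        1 * ENNReal.ofReal (2 * ρ) *
          totVarOn μ (E.indicator fun _ => (1:ℝ)) (ball x (6 * (2 * ρ))) := by
  set f : X → ℝ := E.indicator fun _ => (1:ℝ) with hf
  obtain ⟨w, hw1, hw2, hw3, hw4, hw5⟩ := exists_cut (indicator_one_mem_Icc E)
    (aemeasurable_const.indicator₀ hE) (E := E) (fun y hy => indicator_of_notMem hy _) x hρ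
    ((totVarOn_mono (subset_univ _)).trans_lt hV)
  refine ⟨w, hw1, hw2, hw3, ?_, hw5.trans ?_⟩
  · have hfin : ENNReal.ofReal (2 / ρ) * μ (E ∩ ball x (2 * ρ)) ≠ ⊤ :=
      ENNReal.mul_ne_top ENNReal.ofReal_ne_top
        ((measure_mono inter_subset_right).trans_lt measure_ball_lt_top).ne
    refine (ENNReal.add_le_add_iff_right hfin).1 (le_trans ?_ hw4)
    rw [add_assoc, add_comm (c * _)]
    gcongr
  · have h1 : ENNReal.ofReal (2 / ρ) * μ (E ∩ ball x (2 * ρ)) ≤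
        totVarOn μ f (ball x (6 * (2 * ρ))) :=
      (le_self_add.trans h).trans (totVarOn_mono (ball_subset_ball (by linarith)))
    calc μ (E ∩ ball x (2 * ρ))
        ≤ 4 * μ (E ∩ ball x (2 * ρ)) := le_mul_of_one_le_left' (by norm_num)
      _ = ENNReal.ofReal (2 * ρ) * (ENNReal.ofReal (2 / ρ) * μ (E ∩ ball x (2 * ρ))) := by
          rw [← mul_assoc, ← ENNReal.ofReal_mul (by positivity),
            show 2 * ρ * (2 / ρ) = 4 by field_simp; norm_num]
          simp
      _ ≤ 1 * ENNReal.ofReal (2 * ρ) * totVarOn μ f (ball x (6 * (2 * ρ))) := by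
          rw [one_mul]; gcongr

lemma totVarSet_eq_zero_of_cut {E : Set X} (hE : NullMeasurableSet E μ)
    (hV : totVarOn μ (E.indicator fun _ => (1:ℝ)) univ < ⊤) {c : ℝ≥0∞} (hc : c ≠ 0) {A : Set X}
    (h : ∀ x ∈ A, ∀ δ : ℝ, 0 < δ → ∃ ρ, 0 < ρ ∧ ρ < δ ∧
      (ENNReal.ofReal (2 / ρ) * μ (E ∩ ball x (2 * ρ)) +
        c * totVarOn μ (E.indicator fun _ => (1:ℝ)) (ball x (6 * (2 * ρ))) ≤
        totVarOn μ (E.indicator fun _ => (1:ℝ)) (ball x ρ) ∨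
      ENNReal.ofReal (2 / ρ) * μ (Eᶜ ∩ ball x (2 * ρ)) +
        c * totVarOn μ (E.indicator fun _ => (1:ℝ)) (ball x (6 * (2 * ρ))) ≤
        totVarOn μ (E.indicator fun _ => (1:ℝ)) (ball x ρ))) :
    totVarSet μ (E.indicator fun _ => (1:ℝ)) A = 0 := by
  refine totVarSet_eq_zero_of_competitors (indicator_one_mem_Icc E)
    (aemeasurable_const.indicator₀ hE) hV hc ENNReal.one_ne_top fun x hx δ hδ => ?_
  obtain ⟨ρ, hρ0, hρδ, hcut⟩ := h x hx (δ / 2) (by positivity)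
  have hK : closedBall x (3 / 2 * ρ) ⊆ ball x (2 * ρ) := closedBall_subset_ball (by linarith)
  rcases hcut with hcut | hcut
  · obtain ⟨w, h1, h2, h3, h4, h5⟩ := exists_competitor_of_cut hE hV hρ0 hcut
    exact ⟨2 * ρ, w, closedBall x (3 / 2 * ρ), by positivity, by linarith, h1, h2,
      isCompact_closedBall _ _, hK, h3, h4, h5⟩
  · simp only [← totVarOn_indicator_compl E] at hcut
    obtain ⟨w, h1, h2, h3, h4, h5⟩ := exists_competitor_of_cut hE.compl
      (by rwa [totVarOn_indicator_compl]) hρ0 hcut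
    simp only [totVarOn_indicator_compl] at h4 h5
    have hcompl : ∀ y, Eᶜ.indicator (fun _ => (1:ℝ)) y = 1 - E.indicator (fun _ => (1:ℝ)) y :=
      fun y => by by_cases hy : y ∈ E <;> simp [hy]
    refine ⟨2 * ρ, fun y => 1 - w y, closedBall x (3 / 2 * ρ), by positivity, by linarith,
      fun y => ⟨by linarith [(h1 y).2], by linarith [(h1 y).1]⟩, aemeasurable_const.sub h2,
      isCompact_closedBall _ _, hK, fun y hy => ?_, ?_, ?_⟩
    · change 1 - w y = _
      rw [h3 y hy, hcompl, sub_sub_cancel]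
    · rwa [totVarOn_one_sub]
    · refine le_trans (le_of_eq (lintegral_congr fun y => ?_)) h5
      rw [hcompl, ← abs_neg]
      congr 2
      ring

end Exceptional

section Stopping

variable {X : Type u} [MetricSpace X] [MeasurableSpace X] {μ : Measure X} [BorelSpace X]
  [ProperSpace X] [IsLocallyFiniteMeasure μ] [IsUnifLocDoublingMeasure μ] {Cd : ℝ≥0}

lemma half_mul_le_half {D a b : ℝ≥0∞} (h : a ≤ 2 * D * b) : (4 * D)⁻¹ * a ≤ b / 2 := by
  calc (4 * D)⁻¹ * a ≤ (4 * D)⁻¹ * (2 * D * b) := by gcongr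
    _ = (2 * (2 * D))⁻¹ * (2 * D) * b := by ring_nf
    _ ≤ 2⁻¹ * b := by
        gcongr
        rw [ENNReal.mul_inv (by simp) (by simp), mul_assoc]
        exact mul_le_of_le_one_right' (ENNReal.inv_mul_le_one _)
    _ = _ := by rw [div_eq_mul_inv, mul_comm]

lemma totVarSet_large_density (hμ : IsDoublingWith μ Cd) (hCd : 1 ≤ Cd) {E : Set X}
    (hE : NullMeasurableSet E μ) (hV : totVarOn μ (E.indicator fun _ => (1:ℝ)) univ < ⊤) :
    totVarSet μ (E.indicator fun _ => (1:ℝ)) {x | ∀ δ : ℝ, 0 < δ → ∃ r, 0 < r ∧ r < δ ∧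
      4 * (Cd : ℝ≥0∞) * μ (ball x r) ≤
        ENNReal.ofReal r * totVarOn μ (E.indicator fun _ => (1:ℝ)) (ball x r)} = 0 := by
  set f : X → ℝ := E.indicator fun _ => (1:ℝ) with hf
  have hD0 : (Cd : ℝ≥0∞) ≠ 0 := (one_pos.trans_le (ENNReal.one_le_coe_iff.2 hCd)).ne'
  refine totVarSet_eq_zero_of_cut hE hV (c := (4 * (Cd : ℝ≥0∞) ^ 4)⁻¹)
    (ENNReal.inv_ne_zero.2 (ENNReal.mul_ne_top (by simp) (ENNReal.pow_ne_top ENNReal.coe_ne_top)))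
    fun x hx δ hδ => ?_
  obtain ⟨ρ, hρ0, hρδ, h1, h2⟩ := exists_scale_up (ν := fun r => totVarOn μ f (ball x r))
    (m := fun r => μ (ball x r)) (D := (Cd : ℝ≥0∞) ^ 4)
    (fun r hr => by simpa [show (2:ℝ) ^ 4 = 16 by norm_num] using hμ.ball_pow_le x hr 4)
    (fun r hr => (hμ.ball_pos x hr).ne') (fun r s hrs => measure_mono (ball_subset_ball hrs))
    hV.ne (fun r => totVarOn_mono (subset_univ _))
    (mul_ne_zero (by simp) hD0) hx hδ
  refine ⟨ρ, hρ0, hρδ, Or.inl ?_⟩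
  rw [← ENNReal.add_halves (totVarOn μ f (ball x ρ))]
  refine add_le_add ?_ ?_
  · rw [ENNReal.le_div_iff_mul_le (by simp) (by simp)]
    calc ENNReal.ofReal (2 / ρ) * μ (E ∩ ball x (2 * ρ)) * 2
        ≤ ENNReal.ofReal (2 / ρ) * (Cd * μ (ball x ρ)) * 2 := by
          gcongr
          exact (measure_mono inter_subset_right).trans (hμ x ρ hρ0).2.1
      _ = ENNReal.ofReal ρ⁻¹ * (4 * Cd * μ (ball x ρ)) := by
          rw [div_eq_mul_inv, ENNReal.ofReal_mul (by norm_num), ENNReal.ofReal_ofNat]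
          ring
      _ ≤ ENNReal.ofReal ρ⁻¹ * (ENNReal.ofReal ρ * totVarOn μ f (ball x ρ)) := by gcongr
      _ = totVarOn μ f (ball x ρ) := by
          rw [← mul_assoc, ← ENNReal.ofReal_mul (by positivity), inv_mul_cancel₀ hρ0.ne']
          simp
  · refine half_mul_le_half (le_trans ?_ h2)
    exact totVarOn_mono (ball_subset_ball (by linarith))

lemma totVarSet_small_density (hμ : IsDoublingWith μ Cd) (hCd : 1 ≤ Cd) {CP : ℝ}
    (hP : SupportsPoincare μ CP) (hCP : 0 ≤ CP) {E : Set X}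
    (hE : NullMeasurableSet E μ) (hV : totVarOn μ (E.indicator fun _ => (1:ℝ)) univ < ⊤) :
    ∃ c₀ : ℝ≥0∞, c₀ ≠ 0 ∧ c₀ ≠ ⊤ ∧ totVarSet μ (E.indicator fun _ => (1:ℝ))
      {x | ∀ δ : ℝ, 0 < δ → ∃ r, 0 < r ∧ r < δ ∧
        ENNReal.ofReal r * totVarOn μ (E.indicator fun _ => (1:ℝ)) (ball x r) ≤
          c₀ * μ (ball x r)} = 0 := by
  set f : X → ℝ := E.indicator fun _ => (1:ℝ) with hf
  have hD0 : (Cd : ℝ≥0∞) ≠ 0 := (one_pos.trans_le (ENNReal.one_le_coe_iff.2 hCd)).ne'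
  have hD4t : (Cd : ℝ≥0∞) ^ 4 ≠ ⊤ := ENNReal.pow_ne_top ENNReal.coe_ne_top
  have hc : (4 * (Cd : ℝ≥0∞) ^ 4)⁻¹ ≠ 0 :=
    ENNReal.inv_ne_zero.2 (ENNReal.mul_ne_top (by simp) hD4t)
  obtain ⟨c₀, hc0, hct, hiso⟩ := exists_measure_ball_le_of_totVarOn_small hμ hCd hP hCP hE hV
    (ε := (8 * (Cd : ℝ≥0∞) ^ 4)⁻¹)
    (ENNReal.inv_ne_zero.2 (ENNReal.mul_ne_top (by simp) hD4t))
  refine ⟨c₀, hc0, hct, ?_⟩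
  set Z := {x | ∀ η : ℝ≥0∞, η ≠ 0 → ∃ r, 0 < r ∧ r < 1 ∧
    totVarOn μ f (ball x (6 * r)) ≤ η * μ (ball x r)} with hZ
  set T := {x | ∀ δ : ℝ, 0 < δ → ∃ r, 0 < r ∧ r < δ ∧
    ENNReal.ofReal r * totVarOn μ f (ball x r) ≤ c₀ * μ (ball x r)} with hT
  have hfm : AEMeasurable f μ := aemeasurable_const.indicator₀ hE
  refine le_antisymm ((totVarSet_mono (B := Z ∪ (T \ Z)) (by simp)).trans
    (totVarSet_union_eq_zero (indicator_one_mem_Icc E) hfm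
      (totVarSet_density_zero (indicator_one_mem_Icc E) hfm) ?_).le) bot_le
  refine totVarSet_eq_zero_of_cut hE hV hc fun x hx δ hδ => ?_
  obtain ⟨r, hr0, hrδ, hr⟩ := hx.1 (min δ 1) (by positivity)
  obtain ⟨ρ, hρ0, hρr, h1, h2⟩ := exists_scale_down (ν := fun r => totVarOn μ f (ball x r))
    (m := fun r => μ (ball x r)) (D := (Cd : ℝ≥0∞) ^ 4)
    (fun r hr => by simpa [show (2:ℝ) ^ 4 = 16 by norm_num] using hμ.ball_pow_le x hr 4)
    (pow_ne_zero 4 hD0) hD4t (fun r s hrs => totVarOn_mono (ball_subset_ball hrs)) hct hr0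
    (hrδ.trans_le (min_le_right _ _)) hr hx.2
  have hδ' : r < δ := hrδ.trans_le (min_le_left _ _)
  have key : ∀ G : Set X, μ (G ∩ ball x (2 * ρ)) ≤ (8 * (Cd : ℝ≥0∞) ^ 4)⁻¹ *
      (ENNReal.ofReal ρ * totVarOn μ f (ball x (16 * ρ))) →
      ENNReal.ofReal (2 / ρ) * μ (G ∩ ball x (2 * ρ)) +
        (4 * (Cd : ℝ≥0∞) ^ 4)⁻¹ * totVarOn μ f (ball x (6 * (2 * ρ))) ≤
        totVarOn μ f (ball x ρ) := fun G hG => by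
    rw [← ENNReal.add_halves (totVarOn μ f (ball x ρ))]
    refine add_le_add ?_ ?_
    · calc ENNReal.ofReal (2 / ρ) * μ (G ∩ ball x (2 * ρ))
          ≤ ENNReal.ofReal (2 / ρ) * ((8 * (Cd : ℝ≥0∞) ^ 4)⁻¹ *
            (ENNReal.ofReal ρ * totVarOn μ f (ball x (16 * ρ)))) := by gcongr
        _ = ENNReal.ofReal (2 / ρ) * ENNReal.ofReal ρ * ((2 * (4 * (Cd : ℝ≥0∞) ^ 4))⁻¹ *
            totVarOn μ f (ball x (16 * ρ))) := by
            rw [← mul_assoc 2 4]; norm_num; ring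
        _ = (2 * 2⁻¹) * ((4 * (Cd : ℝ≥0∞) ^ 4)⁻¹ * totVarOn μ f (ball x (16 * ρ))) := by
            rw [← ENNReal.ofReal_mul (by positivity), div_mul_cancel₀ _ hρ0.ne',
              ENNReal.mul_inv (by simp) (by simp), ENNReal.ofReal_ofNat]
            ring
        _ ≤ _ := by
            rw [ENNReal.mul_inv_cancel (by simp) (by simp), one_mul]
            exact half_mul_le_half h2
    · refine half_mul_le_half (le_trans ?_ h2)
      exact totVarOn_mono (ball_subset_ball (by linarith))
  exact ⟨ρ, hρ0, by linarith, (hiso x ρ hρ0 h1).imp (key E) (key Eᶜ)⟩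

lemma totVarSet_competitor_moderate (hμ : IsDoublingWith μ Cd) {E : Set X}
    (hE : NullMeasurableSet E μ) (hV : totVarOn μ (E.indicator fun _ => (1:ℝ)) univ < ⊤)
    {M c₀ θ : ℝ≥0∞} (hM : M ≠ ⊤) (hc₀ : c₀ ≠ 0) (hct : c₀ ≠ ⊤) (hθ : θ < 1) {A : Set X}
    (hhi : ∀ x ∈ A, ∃ δ : ℝ, 0 < δ ∧ ∀ r, 0 < r → r < δ →
      ENNReal.ofReal r * totVarOn μ (E.indicator fun _ => (1:ℝ)) (ball x r) ≤ M * μ (ball x r))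
    (hlo : ∀ x ∈ A, ∃ δ : ℝ, 0 < δ ∧ ∀ r, 0 < r → r < δ → c₀ * μ (ball x r) ≤
      ENNReal.ofReal r * totVarOn μ (E.indicator fun _ => (1:ℝ)) (ball x r))
    (hcomp : ∀ x ∈ A, ∀ δ : ℝ, 0 < δ → ∃ r, 0 < r ∧ r < δ ∧ ∃ φ, MemBVc μ φ (ball x r) ∧
      totVarOn μ (fun y => E.indicator (fun _ => (1:ℝ)) y + φ y) (ball x r) ≤
        θ * totVarOn μ (E.indicator fun _ => (1:ℝ)) (ball x r)) :
    totVarSet μ (E.indicator fun _ => (1:ℝ)) A = 0 := by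
  set f : X → ℝ := E.indicator fun _ => (1:ℝ) with hf
  have hf01 : ∀ y, f y ∈ Icc (0:ℝ) 1 := indicator_one_mem_Icc E
  have hfm : AEMeasurable f μ := aemeasurable_const.indicator₀ hE
  set C₁ : ℝ≥0∞ := M * (Cd : ℝ≥0∞) ^ 3 * c₀⁻¹ with hC₁
  have hC₁t : C₁ ≠ ⊤ := ENNReal.mul_ne_top (ENNReal.mul_ne_top hM
    (ENNReal.pow_ne_top ENNReal.coe_ne_top)) (ENNReal.inv_ne_top.2 hc₀)
  refine totVarSet_eq_zero_of_competitors hf01 hfm hV (c := (1 - θ) * C₁⁻¹) (C := c₀⁻¹)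
    (mul_ne_zero (tsub_pos_of_lt hθ).ne' (ENNReal.inv_ne_zero.2 hC₁t))
    (ENNReal.inv_ne_top.2 hc₀) fun x hx δ hδ => ?_
  obtain ⟨δ₁, hδ₁, h1⟩ := hhi x hx
  obtain ⟨δ₂, hδ₂, h2⟩ := hlo x hx
  obtain ⟨r, hr0, hrδ, φ, ⟨⟨hφi, -⟩, hφc, hφs⟩, hφ⟩ := hcomp x hx (min δ (min (δ₁ / 8) δ₂))
    (by positivity)
  have hr1 : 8 * r < δ₁ := by
    linarith [hrδ.trans_le ((min_le_right _ _).trans (min_le_left _ _))]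
  have hr2 : r < δ₂ := hrδ.trans_le ((min_le_right _ _).trans (min_le_right _ _))
  have hlow := h2 r hr0 hr2
  have hup : totVarOn μ f (ball x (6 * r)) ≤ C₁ * totVarOn μ f (ball x r) := by
    refine (ENNReal.mul_le_mul_iff_right (a := ENNReal.ofReal r)
      (ENNReal.ofReal_pos.2 hr0).ne' ENNReal.ofReal_ne_top).1 ?_
    calc ENNReal.ofReal r * totVarOn μ f (ball x (6 * r))
        ≤ ENNReal.ofReal (8 * r) * totVarOn μ f (ball x (8 * r)) := by
          gcongr ENNReal.ofReal ?_ * ?_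
          · linarith
          · exact totVarOn_mono (ball_subset_ball (by linarith))
      _ ≤ M * μ (ball x (8 * r)) := h1 _ (by positivity) hr1
      _ ≤ M * ((Cd : ℝ≥0∞) ^ 3 * μ (ball x r)) := by
          have := hμ.ball_pow_le x hr0 3
          rw [show (2:ℝ) ^ 3 = 8 by norm_num] at this
          gcongr
      _ = M * (Cd : ℝ≥0∞) ^ 3 * (c₀⁻¹ * (c₀ * μ (ball x r))) := by
          rw [← mul_assoc c₀⁻¹, ENNReal.inv_mul_cancel hc₀ hct, one_mul, mul_assoc]
      _ ≤ M * (Cd : ℝ≥0∞) ^ 3 * (c₀⁻¹ * (ENNReal.ofReal r * totVarOn μ f (ball x r))) := by gcongr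
      _ = _ := by rw [hC₁]; ring
  set w : X → ℝ := fun y => clamp01 (f y + φ y) with hw
  have hwf : ∀ y ∉ tsupport φ, w y = f y := fun y hy => by
    simp only [hw]
    rw [image_eq_zero_of_notMem_tsupport hy, add_zero, clamp01_of_mem (hf01 y)]
  have hclamp : Continuous clamp01 := by unfold clamp01; fun_prop
  refine ⟨r, w, tsupport φ, hr0, hrδ.trans_le (min_le_left _ _), fun y => clamp01_mem _,
    hclamp.measurable.comp_aemeasurable (hfm.add hφi.aestronglyMeasurable.aemeasurable),
    hφc, hφs, hwf, ?_, ?_⟩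
  · calc totVarOn μ w (ball x r) + (1 - θ) * C₁⁻¹ * totVarOn μ f (ball x (6 * r))
        ≤ θ * totVarOn μ f (ball x r) + (1 - θ) * C₁⁻¹ * (C₁ * totVarOn μ f (ball x r)) := by
          gcongr
          exact (totVarOn_comp_le abs_clamp01_sub_le).trans hφ
      _ = θ * totVarOn μ f (ball x r) + (1 - θ) * (C₁⁻¹ * C₁) * totVarOn μ f (ball x r) := by ring
      _ ≤ θ * totVarOn μ f (ball x r) + (1 - θ) * 1 * totVarOn μ f (ball x r) := by
          gcongr; exact ENNReal.inv_mul_le_one _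
      _ = totVarOn μ f (ball x r) := by
          rw [mul_one, ← add_mul, add_tsub_cancel_of_le hθ.le, one_mul]
  · calc ∫⁻ y, ENNReal.ofReal |w y - f y| ∂μ
        ≤ ∫⁻ y, (ball x r).indicator (fun _ => 1) y ∂μ := by
          refine lintegral_mono fun y => ?_
          by_cases hy : y ∈ ball x r
          · rw [indicator_of_mem hy, ENNReal.ofReal_le_one, abs_le]
            have h3 := clamp01_mem (f y + φ y)
            have h4 := hf01 y
            exact ⟨by linarith [h3.1, h4.2], by linarith [h3.2, h4.1]⟩
          · rw [hwf y fun h => hy (hφs h)]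
            simp
      _ = μ (ball x r) := by rw [lintegral_indicator_const measurableSet_ball, one_mul]
      _ = c₀⁻¹ * (c₀ * μ (ball x r)) := by
          rw [← mul_assoc, ENNReal.inv_mul_cancel hc₀ hct, one_mul]
      _ ≤ c₀⁻¹ * (ENNReal.ofReal r * totVarOn μ f (ball x r)) := by gcongr
      _ ≤ _ := by
          rw [mul_assoc]
          gcongr
          exact totVarOn_mono (ball_subset_ball (by linarith))

end Stopping

theorem statement12 {X : Type u} [MetricSpace X] [MeasurableSpace X] [BorelSpace X]
    (μ : Measure X) (Cd : ℝ≥0) (CP : ℝ) (hCd : 1 ≤ Cd) (hCP : 0 < CP)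
    (hX : GoodSpace X μ Cd CP)
    (E : Set X) (hE : NullMeasurableSet E μ)
    (hper : totVarOn μ (E.indicator fun _ => (1:ℝ)) Set.univ < ⊤) :
    totVarSet μ (E.indicator fun _ => (1:ℝ))
      {x : X | ∃ θ : ℝ, 0 < θ ∧ θ < 1 ∧ ∃ rs : ℕ → ℝ, (∀ i, 0 < rs i) ∧
        Tendsto rs atTop (𝓝 0) ∧
        ∀ i,
          (⨅ (φ : X → ℝ) (_ : MemBVc μ φ (ball x (rs i))),
            totVarOn μ (fun y => E.indicator (fun _ => (1:ℝ)) y + φ y)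
              (ball x (rs i))) <
            ENNReal.ofReal θ *
              totVarOn μ (E.indicator fun _ => (1:ℝ)) (ball x (rs i))} = 0 := by
  obtain ⟨-, hcomplete, -, hμ, hP⟩ := hX
  have := hμ.isLocallyFiniteMeasure
  have := hμ.isUnifLocDoublingMeasure
  have := hμ.properSpace
  set f : X → ℝ := E.indicator fun _ => (1:ℝ) with hf
  have hf01 : ∀ y, f y ∈ Icc (0:ℝ) 1 := indicator_one_mem_Icc E
  have hfm : AEMeasurable f μ := aemeasurable_const.indicator₀ hE
  obtain ⟨c₀, hc0, hct, hsmall⟩ := totVarSet_small_density hμ hCd hP hCP.le hE hper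
  have hlarge := totVarSet_large_density hμ hCd hE hper
  set L := {x | ∀ δ : ℝ, 0 < δ → ∃ r, 0 < r ∧ r < δ ∧
    4 * (Cd : ℝ≥0∞) * μ (ball x r) ≤ ENNReal.ofReal r * totVarOn μ f (ball x r)} with hL
  set S := {x | ∀ δ : ℝ, 0 < δ → ∃ r, 0 < r ∧ r < δ ∧
    ENNReal.ofReal r * totVarOn μ f (ball x r) ≤ c₀ * μ (ball x r)} with hS
  set A : ℕ → Set X := fun n => {x | x ∉ L ∧ x ∉ S ∧ ∀ δ : ℝ, 0 < δ → ∃ r, 0 < r ∧ r < δ ∧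
    ∃ φ, MemBVc μ φ (ball x r) ∧ totVarOn μ (fun y => f y + φ y) (ball x r) ≤
      ENNReal.ofReal (1 - 1 / ((n:ℝ) + 1)) * totVarOn μ f (ball x r)} with hA
  have hAn : ∀ n, totVarSet μ f (A n) = 0 := fun n => by
    refine totVarSet_competitor_moderate hμ hE hper (M := 4 * (Cd : ℝ≥0∞)) (c₀ := c₀)
      (θ := ENNReal.ofReal (1 - 1 / ((n:ℝ) + 1)))
      (ENNReal.mul_ne_top (by simp) ENNReal.coe_ne_top) hc0 hct ?_ (fun x hx => ?_)
      (fun x hx => ?_) fun x hx => hx.2.2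
    · rw [ENNReal.ofReal_lt_one]
      have : 0 < 1 / ((n:ℝ) + 1) := by positivity
      linarith
    · have := hx.1
      simp only [hL, mem_ofPred_eq] at this
      push Not at this
      obtain ⟨δ, hδ, h⟩ := this
      exact ⟨δ, hδ, fun r h0 h1 => (h r h0 h1).le⟩
    · have := hx.2.1
      simp only [hS, mem_ofPred_eq] at this
      push Not at this
      obtain ⟨δ, hδ, h⟩ := this
      exact ⟨δ, hδ, fun r h0 h1 => (h r h0 h1).le⟩
  refine le_antisymm ((totVarSet_mono (B := L ∪ (S ∪ ⋃ n, A n)) ?_).trans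
    (totVarSet_union_eq_zero hf01 hfm hlarge (totVarSet_union_eq_zero hf01 hfm hsmall
      (totVarSet_iUnion_eq_zero hf01 hfm hAn))).le) bot_le
  rintro x ⟨θ, -, hθ1, rs, hrs0, hrs, hlt⟩
  by_cases hxL : x ∈ L
  · exact Or.inl hxL
  by_cases hxS : x ∈ S
  · exact Or.inr (Or.inl hxS)
  obtain ⟨n, hn⟩ := exists_nat_one_div_lt (sub_pos.2 hθ1)
  refine Or.inr (Or.inr (mem_iUnion.2 ⟨n, hxL, hxS, fun δ hδ => ?_⟩))
  obtain ⟨i, hi⟩ := (hrs.eventually (gt_mem_nhds hδ)).exists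
  have := hlt i
  simp only [iInf_lt_iff] at this
  obtain ⟨φ, hφ, hφlt⟩ := this
  refine ⟨rs i, hrs0 i, hi, φ, hφ, hφlt.le.trans ?_⟩
  gcongr
  linarith

end
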